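/- arXiv:1806.04361 — 5 statements merged into one kernel-verified Lean document; each statement's English description precedes it below -/
import Mathlib

section
/- The map φ from unordered forests over the unary signature to ℚ[x] is injective; moreover it satisfies φ(∅) = 1, φ(h + h') = φ(h)·φ(h'), and φ(root(h)) = 2 + x·φ(h), so φ is a simulation of the algebra of unordered forests (with operations + and root) in the algebra (ℚ[x], +, ×), where forest sum is encoded by the polynomial function (p,q) ↦ p·q and the root operation by p ↦ 2 + x·p. -/
/-!
The only substantial point is injectivity. The polynomial `φ(h)` has integer coefficients, is
monic, and reduces to a power of `x` modulo `2`, by induction on `h`. Hence `φ(root(h)) = 2 + x·φ(h)`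
is monic, all its non-leading coefficients are even, and its constant coefficient is exactly `2`:
it is irreducible in `ℤ[x]` by Eisenstein's criterion at `2` (`PF.irreducible_treePoly`).

So `φ(h) = ∏_{t ∈ h} φ(t)` is a factorization into irreducibles in the unique factorization domain
`ℤ[x]`, and as the factors are monic it determines the multiset of the polynomials `φ(t)`
(`PF.exists_peq_node` extracts one factor at a time). Finally `φ(root(c)) = 2 + x·φ(c)` determines
`φ(c)`, and the structural induction closes.
-/

/-- Raw unordered forests over the unary signature: a forest is a finite list of
trees, where `PF.node c r` denotes the forest `{root(c)} + r` (the tree whose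
multiset of children is `c`, added to the forest `r`), and `PF.empty` is the
empty forest.  Unordered forests are obtained by quotienting by `PF.Peq`. -/
inductive PF : Type
  | empty : PF
  | node : PF → PF → PF

namespace PF

/-- Multiset union of forests. -/
def union : PF → PF → PF
  | empty, g => g
  | node c r, g => node c (union r g)

/-- The singleton forest `root(h)`, whose unique tree has the forest `h` as its
multiset of children. -/
def root (h : PF) : PF := node h empty

/-- Equality of raw forests as unordered forests: the smallest congruence
(with respect to the tree/forest structure) that allows swapping adjacent
trees of a forest.  Two raw forests are `Peq`-related exactly when they denote
the same unordered forest (the same multiset of unordered trees). -/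
inductive Peq : PF → PF → Prop
  | refl (h : PF) : Peq h h
  | symm {h h' : PF} : Peq h h' → Peq h' h
  | trans {h₁ h₂ h₃ : PF} : Peq h₁ h₂ → Peq h₂ h₃ → Peq h₁ h₃
  | congr {c c' r r' : PF} : Peq c c' → Peq r r' → Peq (node c r) (node c' r')
  | swap (c c' r : PF) : Peq (node c (node c' r)) (node c' (node c r))

/-- The encoding `φ` of unordered forests into `ℚ[x]` : `φ(∅) = 1`,
`φ(h + h') = φ(h)·φ(h')` and `φ(root(h)) = 2 + x·φ(h)`. -/
noncomputable def phi : PF → Polynomial ℚ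
  | empty => 1
  | node c r => (2 + Polynomial.X * phi c) * phi r

end PF

namespace PF

open Polynomial

/-- The polynomial `φ` with its coefficients taken in `ℤ`. -/
noncomputable def phiInt : PF → ℤ[X]
  | empty => 1
  | node c r => (2 + X * phiInt c) * phiInt r

/-- The integer polynomial of the single tree whose forest of children is `c`. -/
noncomputable def treePoly (c : PF) : ℤ[X] := 2 + X * phiInt c

lemma phiInt_node (c r : PF) : phiInt (node c r) = treePoly c * phiInt r := rfl

lemma map_phiInt (h : PF) : (phiInt h).map (Int.castRingHom ℚ) = phi h := by
  induction h with
  | empty => simp [phiInt, phi]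
  | node c r hc hr => simp [phiInt, phi, hc, hr]

lemma phi_eq_iff (h h' : PF) : phi h = phi h' ↔ phiInt h = phiInt h' := by
  rw [← map_phiInt, ← map_phiInt]
  exact (map_injective _ (Int.castRingHom ℚ).injective_int).eq_iff

lemma monic_two_add_X_mul {p : ℤ[X]} (hp : p.Monic) : (2 + X * p).Monic := by
  refine (monic_X.mul hp).add_of_right ?_
  have h2 : (2 : ℤ[X]).degree = 0 := degree_C (two_ne_zero : (2 : ℤ) ≠ 0)
  rw [h2, degree_mul, degree_X, degree_eq_natDegree hp.ne_zero]
  norm_cast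
  omega

lemma monic_phiInt (h : PF) : (phiInt h).Monic := by
  induction h with
  | empty => exact monic_one
  | node c r hc hr => exact (monic_two_add_X_mul hc).mul hr

lemma monic_treePoly (c : PF) : (treePoly c).Monic := monic_two_add_X_mul (monic_phiInt c)

lemma map_treePoly_zmod (c : PF) : (treePoly c).map (Int.castRingHom (ZMod 2)) =
    X * (phiInt c).map (Int.castRingHom (ZMod 2)) := by
  have h2 : (2 : (ZMod 2)[X]) = 0 := CharTwo.two_eq_zero
  simp [treePoly, h2]

lemma exists_map_phiInt_zmod (h : PF) :
    ∃ k : ℕ, (phiInt h).map (Int.castRingHom (ZMod 2)) = X ^ k := by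
  induction h with
  | empty => exact ⟨0, by simp [phiInt]⟩
  | node c r hc hr =>
    obtain ⟨k, hk⟩ := hc
    obtain ⟨l, hl⟩ := hr
    exact ⟨k + 1 + l, by rw [phiInt_node, Polynomial.map_mul, map_treePoly_zmod, hk, hl]; ring⟩

/-- Eisenstein's criterion at the prime `2` applies to the polynomial of a tree. -/
lemma irreducible_treePoly (c : PF) : Irreducible (treePoly c) := by
  obtain ⟨k, hk⟩ := exists_map_phiInt_zmod c
  have hmap : (treePoly c).map (Int.castRingHom (ZMod 2)) = X ^ (k + 1) := by
    rw [map_treePoly_zmod, hk]; ring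
  have hdeg : (treePoly c).natDegree = k + 1 := by
    rw [← (monic_treePoly c).natDegree_map (Int.castRingHom (ZMod 2)), hmap, natDegree_X_pow]
  have hprime : (Ideal.span {(2 : ℤ)}).IsPrime :=
    (Ideal.span_singleton_prime two_ne_zero).2 Int.prime_two
  refine IsEisensteinAt.irreducible (𝓟 := Ideal.span {(2 : ℤ)}) ⟨?_, ?_, ?_⟩ hprime
    (monic_treePoly c).isPrimitive (by omega)
  · rw [(monic_treePoly c).leadingCoeff, Ideal.mem_span_singleton]
    norm_num
  · intro n hn
    rw [Ideal.mem_span_singleton]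
    have hcoeff := congrArg (fun p => p.coeff n) hmap
    simp only [coeff_map, coeff_X_pow, if_neg (show n ≠ k + 1 by omega)] at hcoeff
    exact (ZMod.intCast_zmod_eq_zero_iff_dvd _ 2).1 hcoeff
  · have h0 : (treePoly c).coeff 0 = 2 := by simp [treePoly]
    rw [h0, Ideal.span_singleton_pow, Ideal.mem_span_singleton]
    norm_num

lemma treePoly_inj {c c' : PF} (h : treePoly c = treePoly c') : phiInt c = phiInt c' :=
  mul_left_cancel₀ X_ne_zero (add_left_cancel h)

/-- If the polynomial of a tree divides that of a forest `h`, then `h` contains a tree with the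
same polynomial; up to `Peq`, that tree can be placed first. -/
lemma exists_peq_node (c h : PF) (hd : treePoly c ∣ phiInt h) :
    ∃ c' r', Peq h (node c' r') ∧ treePoly c = treePoly c' := by
  induction h with
  | empty => exact absurd (isUnit_of_dvd_one hd) (irreducible_treePoly c).not_isUnit
  | node d s _ hs =>
    rcases (irreducible_treePoly c).prime.dvd_or_dvd hd with hd | hd
    · exact ⟨d, s, .refl _, eq_of_monic_of_associated (monic_treePoly c) (monic_treePoly d)
        ((irreducible_treePoly c).associated_of_dvd (irreducible_treePoly d) hd)⟩
    · obtain ⟨c', r', hp, he⟩ := hs hd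
      exact ⟨c', node d r', (Peq.congr (.refl d) hp).trans (.swap d c' r'), he⟩

lemma phiInt_eq_of_peq {h h' : PF} (hp : Peq h h') : phiInt h = phiInt h' := by
  induction hp with
  | refl => rfl
  | symm _ ih => exact ih.symm
  | trans _ _ ih₁ ih₂ => exact ih₁.trans ih₂
  | congr _ _ ih₁ ih₂ => simp only [phiInt, ih₁, ih₂]
  | swap c c' r => simp only [phiInt]; ring

theorem peq_of_phiInt_eq (h h' : PF) (he : phiInt h = phiInt h') : Peq h h' := by
  induction h generalizing h' with
  | empty =>
    cases h' with
    | empty => exact .refl _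
    | node d s =>
      exact absurd (IsUnit.of_mul_eq_one (phiInt s) he.symm) (irreducible_treePoly d).not_isUnit
  | node c r hc hr =>
    obtain ⟨c', r', hp, ht⟩ := exists_peq_node c h' (he ▸ dvd_mul_right _ _)
    have hmul : treePoly c * phiInt r = treePoly c * phiInt r' := by
      rw [← phiInt_node, he, phiInt_eq_of_peq hp, phiInt_node, ht]
    exact (Peq.congr (hc c' (treePoly_inj ht))
      (hr r' (mul_left_cancel₀ (monic_treePoly c).ne_zero hmul))).trans hp.symm

lemma phi_union (h h' : PF) : phi (union h h') = phi h * phi h' := by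
  induction h with
  | empty => simp [union, phi]
  | node c r _ hr => simp only [union, phi, hr, mul_assoc]

end PF

/-- The map `φ` from unordered forests over the unary
signature to `ℚ[x]` is injective (as a map on unordered forests, i.e. up to
the identification `Peq` of raw representations, which it respects); moreover
`φ(∅) = 1`, `φ(h + h') = φ(h)·φ(h')` and `φ(root(h)) = 2 + x·φ(h)`, so `φ` is
a simulation of the algebra of unordered forests (with operations `+` and
`root`) in the algebra `(ℚ[x], +, ×)`, where forest sum is encoded by the
polynomial function `(p, q) ↦ p·q` and the root operation by
`p ↦ 2 + x·p`. -/
theorem phi_is_injective_simulation :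
    (∀ h h' : PF, PF.Peq h h' → PF.phi h = PF.phi h') ∧
    (∀ h h' : PF, PF.phi h = PF.phi h' → PF.Peq h h') ∧
    PF.phi PF.empty = 1 ∧
    (∀ h h' : PF, PF.phi (PF.union h h') = PF.phi h * PF.phi h') ∧
    (∀ h : PF, PF.phi (PF.root h) = 2 + Polynomial.X * PF.phi h) := by
  exact ⟨fun h h' hp => (PF.phi_eq_iff h h').2 (PF.phiInt_eq_of_peq hp),
    fun h h' he => PF.peq_of_phiInt_eq h h' ((PF.phi_eq_iff h h').1 he),
    rfl, PF.phi_union, fun h => mul_one _⟩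
end

section
/- For every unordered forest h over the unary signature, the polynomial φ(h) ∈ ℚ[x] is a monic polynomial with integer coefficients, and every non-leading coefficient of φ(h) is divisible by 2. -/
/-- The exponent `n` is left unspecified, since monicity of `P` forces it to be `P.natDegree`. -/
theorem PF.exists_int_lift (h : PF) :
    ∃ P : Polynomial ℤ, P.Monic ∧ P.map (Int.castRingHom ℚ) = PF.phi h ∧
      ∃ n : ℕ, P.map (Int.castRingHom (ZMod 2)) = Polynomial.X ^ n := by
  induction h with
  | empty => exact ⟨1, Polynomial.monic_one, by simp [PF.phi], 0, by simp⟩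
  | node c r ihc ihr =>
    obtain ⟨P, hP, hPc, n, hn⟩ := ihc
    obtain ⟨Q, hQ, hQr, m, hm⟩ := ihr
    have hXP : (Polynomial.X * P).Monic := Polynomial.monic_X.mul hP
    have hdeg : (2 : Polynomial ℤ).degree < (Polynomial.X * P).degree := by
      rw [mul_comm, Polynomial.degree_mul_X, Polynomial.degree_eq_natDegree hP.ne_zero]
      refine lt_of_le_of_lt (Polynomial.degree_C_le (a := (2 : ℤ))) ?_
      exact_mod_cast Nat.succ_pos _
    have h2 : (2 : Polynomial (ZMod 2)) = 0 := CharTwo.two_eq_zero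
    refine ⟨(2 + Polynomial.X * P) * Q, (hXP.add_of_right hdeg).mul hQ, ?_, n + 1 + m, ?_⟩
    · simp [PF.phi, hPc, hQr]
    · simp only [Polynomial.map_mul, Polynomial.map_add, Polynomial.map_ofNat, Polynomial.map_X,
        hn, hm, h2]
      ring

/-- For every unordered forest `h` over the unary signature,
the polynomial `φ(h) ∈ ℚ[x]` is monic, has integer coefficients, and every
non-leading coefficient of `φ(h)` is divisible by `2`. -/
theorem phi_monic_int_coeffs_even :
    ∀ h : PF,
      (PF.phi h).Monic ∧
      (∀ i : ℕ, ∃ z : ℤ, (PF.phi h).coeff i = (z : ℚ)) ∧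
      (∀ i : ℕ, i < (PF.phi h).natDegree →
        ∃ z : ℤ, (PF.phi h).coeff i = ((2 * z : ℤ) : ℚ)) := by
  intro h
  obtain ⟨P, hP, hmap, n, hn⟩ := PF.exists_int_lift h
  rw [← hmap]
  refine ⟨hP.map _, fun i => ⟨P.coeff i, by simp⟩, fun i hi => ?_⟩
  have hPn : P.natDegree = n := by
    rw [← hP.natDegree_map (Int.castRingHom (ZMod 2)), hn, Polynomial.natDegree_X_pow]
  rw [hP.natDegree_map, hPn] at hi
  have hc : ((P.coeff i : ℤ) : ZMod 2) = 0 := by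
    have := congrArg (fun p => Polynomial.coeff p i) hn
    simpa [Polynomial.coeff_X_pow, hi.ne] using this
  obtain ⟨z, hz⟩ := (ZMod.intCast_zmod_eq_zero_iff_dvd (P.coeff i) 2).1 hc
  exact ⟨z, by rw [Polynomial.coeff_map, hz]; simp⟩
end

section
/- Let Σ = {a₁, …, a_n} be a finite signature. The map e from unordered forests over Σ to unordered forests over the unary signature defined by e(∅) = ∅, e(h + h') = e(h) + e(h'), and e(root_{a_i}(h)) = root^i(root(∅) + root(e(h))) (where root^i denotes i-fold application of root) is injective. -/
/-- Raw unordered forests over a finite signature with `n` letters: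
`PFL.node a c r` denotes the forest `{root_a(c)} + r`. -/
inductive PFL (n : ℕ) : Type
  | empty : PFL n
  | node : Fin n → PFL n → PFL n → PFL n

namespace PFL

/-- Equality of raw labelled forests as unordered forests. -/
inductive PeqL {n : ℕ} : PFL n → PFL n → Prop
  | refl (h : PFL n) : PeqL h h
  | symm {h h' : PFL n} : PeqL h h' → PeqL h' h
  | trans {h₁ h₂ h₃ : PFL n} : PeqL h₁ h₂ → PeqL h₂ h₃ → PeqL h₁ h₃
  | congr {a : Fin n} {c c' r r' : PFL n} :
      PeqL c c' → PeqL r r' → PeqL (node a c r) (node a c' r')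
  | swap (a b : Fin n) (c c' r : PFL n) :
      PeqL (node a c (node b c' r)) (node b c' (node a c r))

end PFL

/-- `i`-fold application of the `root` operation of unary unordered forests. -/
def rootPow : ℕ → PF → PF
  | 0, h => h
  | k + 1, h => PF.root (rootPow k h)

/-- The encoding `e` of unordered forests over the signature `{a₁, …, a_n}`
into unordered forests over the unary signature: `e(∅) = ∅`,
`e(h + h') = e(h) + e(h')`, and for the letter `aᵢ` (`1 ≤ i ≤ n`, here the
`Fin n`-index `a` corresponds to `i = a + 1`),
`e(root_{aᵢ}(h)) = root^i(root(∅) + root(e(h)))`. -/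
def encL {n : ℕ} : PFL n → PF
  | .empty => PF.empty
  | .node a c r =>
      PF.union (rootPow (a.val + 1) (PF.union (PF.root PF.empty) (PF.root (encL c)))) (encL r)

/-- Unary forests up to `PF.Peq`, i.e. genuine unordered forests. -/
instance PF.setoid : Setoid PF :=
  ⟨PF.Peq, PF.Peq.refl, PF.Peq.symm, PF.Peq.trans⟩

/-- The multiset of the trees of a unary forest, a tree being represented by the unordered
forest of its children. -/
def PF.kids : PF → Multiset (Quotient PF.setoid)
  | .empty => 0
  | .node c r => Quotient.mk _ c ::ₘ PF.kids r

theorem PF.kids_eq {h h' : PF} (H : PF.Peq h h') : h.kids = h'.kids := by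
  induction H with
  | refl => rfl
  | symm _ ih => exact ih.symm
  | trans _ _ ih₁ ih₂ => exact ih₁.trans ih₂
  | congr hc _ _ ihr =>
    simp only [PF.kids, ihr]
    rw [Quotient.sound hc]
  | swap c c' r => exact Multiset.cons_swap _ _ _

/-- The forest below the root of the unary tree `root^(k+1) (root ∅ + root x)`, the shape of
the code of a labelled tree. -/
def code (k : ℕ) (x : PF) : PF := rootPow k (.node .empty (.node x .empty))

theorem encL_node {n : ℕ} (a : Fin n) (c r : PFL n) :
    encL (.node a c r) = .node (code a (encL c)) (encL r) := rfl

theorem code_congr (k : ℕ) {x y : PF} (H : PF.Peq x y) : PF.Peq (code k x) (code k y) := by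
  induction k with
  | zero => exact .congr (.refl _) (.congr H (.refl _))
  | succ k ih => exact .congr ih (.refl _)

theorem code_inj {k l : ℕ} {x y : PF} (H : PF.Peq (code k x) (code l y)) :
    k = l ∧ PF.Peq x y := by
  induction k generalizing l with
  | zero =>
    have h := PF.kids_eq H
    cases l with
    | zero =>
      simp only [code, rootPow, PF.kids, Multiset.cons_inj_right, Multiset.cons_inj_left] at h
      exact ⟨rfl, Quotient.exact h⟩
    | succ l =>
      -- a branching forest has two trees, a `root` only one
      have := congrArg Multiset.card h
      simp [code, rootPow, PF.root, PF.kids] at this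
  | succ k ih =>
    have h := PF.kids_eq H
    cases l with
    | zero =>
      have := congrArg Multiset.card h
      simp [code, rootPow, PF.root, PF.kids] at this
    | succ l =>
      simp only [code, rootPow, PF.root, PF.kids, Multiset.cons_inj_left] at h
      obtain ⟨rfl, hxy⟩ := ih (Quotient.exact h)
      exact ⟨rfl, hxy⟩

theorem encL_congr {n : ℕ} {h h' : PFL n} (H : PFL.PeqL h h') :
    PF.Peq (encL h) (encL h') := by
  induction H with
  | refl => exact .refl _
  | symm _ ih => exact ih.symm
  | trans _ _ ih₁ ih₂ => exact ih₁.trans ih₂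
  | congr _ _ ihc ihr =>
    rw [encL_node, encL_node]
    exact .congr (code_congr _ ihc) ihr
  | swap a b c c' r => exact .swap _ _ _

/-- Every tree of `encL h` is the code of a tree of `h`, which can be moved to the front. -/
theorem exists_of_mem_kids {n : ℕ} {q : Quotient PF.setoid} (h : PFL n)
    (hq : q ∈ (encL h).kids) :
    ∃ (a : Fin n) (c r : PFL n), q = Quotient.mk _ (code a (encL c)) ∧ PFL.PeqL h (.node a c r) := by
  induction h with
  | empty => simp [encL, PF.kids] at hq
  | node b d s _ ih =>
    rw [encL_node, PF.kids, Multiset.mem_cons] at hq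
    rcases hq with hq | hq
    · exact ⟨b, d, s, hq, .refl _⟩
    · obtain ⟨a, c, r, e, H⟩ := ih hq
      exact ⟨a, c, .node b d r, e, (PFL.PeqL.congr (.refl _) H).trans (.swap _ _ _ _ _)⟩

theorem peqL_of_kids_eq {n : ℕ} (h h' : PFL n) (H : (encL h).kids = (encL h').kids) :
    PFL.PeqL h h' := by
  induction h generalizing h' with
  | empty =>
    cases h' with
    | empty => exact .refl _
    | node a c r => exact absurd H.symm Multiset.cons_ne_zero
  | node a c r ihc ihr =>
    have hm : Quotient.mk _ (code a (encL c)) ∈ (encL h').kids := by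
      rw [← H]
      exact Multiset.mem_cons_self _ _
    obtain ⟨a', c', r', e, H'⟩ := exists_of_mem_kids h' hm
    obtain ⟨ha, hc⟩ := code_inj (Quotient.exact e)
    obtain rfl := Fin.ext ha
    rw [PF.kids_eq (encL_congr H'), encL_node, encL_node, PF.kids, PF.kids, e,
      Multiset.cons_inj_right] at H
    exact (PFL.PeqL.congr (ihc _ (PF.kids_eq hc)) (ihr _ H)).trans H'.symm

/-- The map `e` is a well-defined and injective map from
unordered forests over the signature `{a₁, …, a_n}` to unordered forests over
the unary signature (both taken up to the identifications `PeqL`, `Peq` of raw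
representations). -/
theorem encL_injective :
    ∀ (n : ℕ) (h h' : PFL n), PFL.PeqL h h' ↔ PF.Peq (encL h) (encL h') := by
  exact fun _ h h' => ⟨encL_congr, fun H => peqL_of_kids_eq h h' (PF.kids_eq H)⟩
end

section
/- The unordered context-and-forest algebra UCF is simulated by (ℚ[x], +, ×): there exist injective maps sending every unordered forest h to the pair (φ(h), 0) and every one-hole context C to a pair (p_C, q_C) ∈ ℚ[x] × ℚ[x] with q_C ≠ 0, such that each operation of UCF is implemented by an explicit polynomial map on the pairs; in particular, forest sum corresponds to (p,q)·(p',0) ↦ (p·p', q·p') when one argument is a forest, root corresponds to (p,q) ↦ (2 + x·p, x·q), plugging a forest into a context corresponds to C[∘ := h] ↦ (p_C + q_C·φ(h), 0), and context composition corresponds to C[∘ := C'] ↦ (p_C + q_C·p_{C'}, q_C·q_{C'}). -/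
/-- Raw one-hole contexts over unordered forests, following the grammar
`C ::= h + ∘ | h + root(C)` : `PC.hole h` denotes the context `h + ∘`, and
`PC.cons h C` denotes the context `h + root(C)`. -/
inductive PC : Type
  | hole : PF → PC
  | cons : PF → PC → PC

/-- Adding a forest to a one-hole context (forest sum of mixed sorts). -/
def addC : PF → PC → PC
  | h, .hole g => .hole (PF.union h g)
  | h, .cons g C => .cons (PF.union h g) C

/-- Plugging a forest into the hole of a context: `C[∘ := h]`. -/
def plugF : PC → PF → PF
  | .hole h, g => PF.union h g
  | .cons h C, g => PF.union h (PF.root (plugF C g))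

/-- Plugging a context into the hole of a context: `C[∘ := C']`. -/
def plugC : PC → PC → PC
  | .hole h, D => addC h D
  | .cons h C, D => .cons h (plugC C D)

/-- Equality of raw one-hole contexts as unordered contexts. -/
inductive Ceq : PC → PC → Prop
  | hole {h h' : PF} : PF.Peq h h' → Ceq (.hole h) (.hole h')
  | cons {h h' : PF} {C C' : PC} :
      PF.Peq h h' → Ceq C C' → Ceq (.cons h C) (.cons h' C')

/-- The encoding of one-hole contexts as pairs `(p_C, q_C) ∈ ℚ[x] × ℚ[x]`:
the context `C` (with its hole regarded as a variable `y`) is encoded by the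
degree-`≤ 1` polynomial `p_C + y·q_C ∈ ℚ[x][y]`, extending `φ`. -/
noncomputable def psi : PC → Polynomial ℚ × Polynomial ℚ
  | .hole h => (0, PF.phi h)
  | .cons h C =>
      (PF.phi h * (2 + Polynomial.X * (psi C).1), PF.phi h * (Polynomial.X * (psi C).2))

/-! ### Integral lifts of the encodings -/

/-- The lift of `PF.phi` to `ℤ[x]`. -/
noncomputable def phiZ : PF → Polynomial ℤ
  | .empty => 1
  | .node c r => (2 + Polynomial.X * phiZ c) * phiZ r

/-- The polynomial `u_C ∈ ℤ[x]` with `2 + x·p_C = 2·u_C`; see `two_add_X_mul_psi_fst`. -/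
noncomputable def ctxU : PC → Polynomial ℤ
  | .hole _ => 1
  | .cons h C => 1 + Polynomial.X * (phiZ h * ctxU C)

theorem map_phiZ (h : PF) : (phiZ h).map (Int.castRingHom ℚ) = PF.phi h := by
  induction h with
  | empty => simp [phiZ, PF.phi]
  | node c r ihc ihr => simp [phiZ, PF.phi, ihc, ihr]

theorem map_int_rat_injective :
    Function.Injective (Polynomial.map (Int.castRingHom ℚ)) :=
  Polynomial.map_injective _ (RingHom.injective_int _)

theorem two_add_X_mul_psi_fst (C : PC) :
    2 + Polynomial.X * (psi C).1 = 2 * (ctxU C).map (Int.castRingHom ℚ) := by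
  induction C with
  | hole h => simp [psi, ctxU]
  | cons h C ih =>
    simp only [psi, ctxU, ih, Polynomial.map_add, Polynomial.map_mul, Polynomial.map_X,
      Polynomial.map_one, map_phiZ]
    ring

theorem eval_zero_ctxU (C : PC) : (ctxU C).eval 0 = 1 := by
  cases C <;> simp [ctxU]

/-! ### Tree polynomials are prime in `ℤ[x]` -/

theorem monic_tree_of_monic {p : Polynomial ℤ} (hp : p.Monic) :
    (2 + Polynomial.X * p).Monic := by
  refine (Polynomial.monic_X.mul hp).add_of_right ?_
  refine lt_of_le_of_lt (b := 0) ?_ ?_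
  · exact Polynomial.degree_C_le (a := (2 : ℤ))
  · rw [Polynomial.degree_mul, Polynomial.degree_X, Polynomial.degree_eq_natDegree hp.ne_zero]
    norm_cast
    omega

theorem monic_phiZ (h : PF) : (phiZ h).Monic := by
  induction h with
  | empty => simp [phiZ]
  | node c r ihc ihr => exact (monic_tree_of_monic ihc).mul ihr

/-- Modulo `2` every tree polynomial `2 + x·φ(c)` becomes `x·φ(c)`, so `φ(h)` becomes a power
of `x`. -/
theorem map_phiZ_mod_two (h : PF) :
    ∃ n : ℕ, (phiZ h).map (Int.castRingHom (ZMod 2)) = Polynomial.X ^ n := by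
  induction h with
  | empty => exact ⟨0, by simp [phiZ]⟩
  | node c r ihc ihr =>
    obtain ⟨m, hm⟩ := ihc
    obtain ⟨n, hn⟩ := ihr
    have h2 : (2 : Polynomial (ZMod 2)) = 0 := CharTwo.two_eq_zero
    refine ⟨1 + m + n, ?_⟩
    simp only [phiZ, Polynomial.map_mul, Polynomial.map_add, Polynomial.map_X, hm, hn,
      Polynomial.map_ofNat, h2]
    ring

/-- Tree polynomials are irreducible by Eisenstein's criterion at `2`. -/
theorem irreducible_tree (c : PF) : Irreducible (2 + Polynomial.X * phiZ c) := by
  have hmon := monic_tree_of_monic (monic_phiZ c)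
  have hdeg : (2 + Polynomial.X * phiZ c).natDegree = (phiZ c).natDegree + 1 := by
    rw [show (2 : Polynomial ℤ) = Polynomial.C 2 from rfl, Polynomial.natDegree_C_add,
      Polynomial.natDegree_X_mul (monic_phiZ c).ne_zero]
  have hcoeff : ∀ n < (2 + Polynomial.X * phiZ c).natDegree,
      (2 + Polynomial.X * phiZ c).coeff n ∈ Ideal.span {(2 : ℤ)} := by
    intro n hn
    rw [Ideal.mem_span_singleton]
    cases n with
    | zero => simp
    | succ n =>
      rw [hdeg] at hn
      rw [show (2 : Polynomial ℤ) = Polynomial.C 2 from rfl, Polynomial.coeff_add,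
        Polynomial.coeff_X_mul, Polynomial.coeff_C_succ, zero_add]
      obtain ⟨m, hm⟩ := map_phiZ_mod_two c
      have hmdeg : (phiZ c).natDegree = m := by
        rw [← (monic_phiZ c).natDegree_map (Int.castRingHom (ZMod 2)), hm,
          Polynomial.natDegree_X_pow]
      have h0 := congrArg (fun p => Polynomial.coeff p n) hm
      simp only [Polynomial.coeff_map, Polynomial.coeff_X_pow] at h0
      rw [if_neg (by omega)] at h0
      exact (ZMod.intCast_zmod_eq_zero_iff_dvd _ 2).1 h0
  have hE : (2 + Polynomial.X * phiZ c).IsEisensteinAt (Ideal.span {(2 : ℤ)}) := by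
    refine ⟨?_, fun {n} hn => hcoeff n hn, ?_⟩
    · rw [hmon.leadingCoeff, Ideal.mem_span_singleton]
      norm_num
    · rw [Ideal.span_singleton_pow, Ideal.mem_span_singleton]
      simp
  refine hE.irreducible ?_ hmon.isPrimitive (by omega)
  rw [Ideal.span_singleton_prime two_ne_zero]
  exact Int.prime_two

theorem prime_tree (c : PF) : Prime (2 + Polynomial.X * phiZ c) :=
  (irreducible_tree c).prime

/-- The constant term of a tree polynomial is `2`, which does not divide `1`. -/
theorem not_tree_dvd (c : PF) {u : Polynomial ℤ} (hu : u.eval 0 = 1) :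
    ¬ (2 + Polynomial.X * phiZ c) ∣ u := by
  rintro ⟨v, rfl⟩
  simp at hu
  omega

/-! ### Injectivity on forests -/

/-- A tree polynomial dividing `φ(h)` is the polynomial of some tree of `h`, which can be moved
to the front. -/
theorem exists_peq_node_of_tree_dvd (c h : PF) (hd : (2 + Polynomial.X * phiZ c) ∣ phiZ h) :
    ∃ c' r', PF.Peq h (.node c' r') ∧ phiZ c = phiZ c' := by
  induction h with
  | empty => exact absurd hd (not_tree_dvd c (by simp [phiZ]))
  | node d r _ ihr =>
    rcases (prime_tree c).dvd_or_dvd hd with hd | hd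
    · have heq : 2 + Polynomial.X * phiZ c = 2 + Polynomial.X * phiZ d :=
        Polynomial.eq_of_monic_of_associated (monic_tree_of_monic (monic_phiZ c))
          (monic_tree_of_monic (monic_phiZ d))
          ((irreducible_tree c).associated_of_dvd (irreducible_tree d) hd)
      exact ⟨d, r, .refl _, mul_left_cancel₀ Polynomial.X_ne_zero (add_left_cancel heq)⟩
    · obtain ⟨c', r', hp, he⟩ := ihr hd
      exact ⟨c', .node d r', (PF.Peq.congr (.refl d) hp).trans (.swap _ _ _), he⟩

theorem phi_eq_of_peq {h h' : PF} (hp : PF.Peq h h') : PF.phi h = PF.phi h' := by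
  induction hp with
  | refl => rfl
  | symm _ ih => exact ih.symm
  | trans _ _ ih₁ ih₂ => exact ih₁.trans ih₂
  | congr _ _ ih₁ ih₂ => simp only [PF.phi, ih₁, ih₂]
  | swap => simp only [PF.phi]; ring

theorem phiZ_eq_of_peq {h h' : PF} (hp : PF.Peq h h') : phiZ h = phiZ h' :=
  map_int_rat_injective (by simpa only [map_phiZ] using phi_eq_of_peq hp)

/-- A forest is determined by its polynomial, even up to factors with constant term `1`. -/
theorem peq_of_phiZ_mul_eq (h : PF) : ∀ (h' : PF) (u u' : Polynomial ℤ),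
    u.eval 0 = 1 → u'.eval 0 = 1 → phiZ h * u = phiZ h' * u' → PF.Peq h h' := by
  induction h with
  | empty =>
    intro h' u u' hu hu' he
    cases h' with
    | empty => exact .refl _
    | node c r =>
      refine absurd ?_ (not_tree_dvd c hu)
      rw [phiZ, one_mul, phiZ, mul_assoc] at he
      exact ⟨_, he⟩
  | node c r ihc ihr =>
    intro h' u u' hu hu' he
    have hd : (2 + Polynomial.X * phiZ c) ∣ phiZ h' * u' := by
      rw [← he, phiZ, mul_assoc]
      exact dvd_mul_right _ _
    obtain ⟨c', r', hp, hc⟩ := exists_peq_node_of_tree_dvd c h'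
      (((prime_tree c).dvd_or_dvd hd).resolve_right (not_tree_dvd c hu'))
    rw [phiZ_eq_of_peq hp, phiZ, phiZ, ← hc, mul_assoc, mul_assoc] at he
    have hr := ihr r' u u' hu hu' (mul_left_cancel₀ (prime_tree c).ne_zero he)
    have hcc := ihc c' 1 1 (by simp) (by simp) (by rw [hc])
    exact (PF.Peq.congr hcc hr).trans hp.symm

theorem peq_iff_phi_eq (h h' : PF) : PF.Peq h h' ↔ PF.phi h = PF.phi h' := by
  refine ⟨phi_eq_of_peq, fun he => ?_⟩
  rw [← map_phiZ, ← map_phiZ] at he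
  exact peq_of_phiZ_mul_eq h h' 1 1 (by simp) (by simp) (by rw [map_int_rat_injective he])

/-! ### Injectivity on contexts -/

theorem phi_ne_zero (h : PF) : PF.phi h ≠ 0 := by
  rw [← map_phiZ]
  exact ((monic_phiZ h).map _).ne_zero

theorem psi_snd_ne_zero (C : PC) : (psi C).2 ≠ 0 := by
  induction C with
  | hole h => exact phi_ne_zero h
  | cons h C ih => exact mul_ne_zero (phi_ne_zero h) (mul_ne_zero Polynomial.X_ne_zero ih)

/-- Separates the contexts `h + root(C)` from the contexts `h + ∘`, whose first component is
`0`: the factor `2 + x·p_C` has constant term `2`. -/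
theorem psi_cons_fst_ne_zero (h : PF) (C : PC) : (psi (.cons h C)).1 ≠ 0 := by
  refine mul_ne_zero (phi_ne_zero h) fun h0 => ?_
  simpa using congrArg (Polynomial.eval 0) h0

theorem psi_eq_of_ceq {C C' : PC} (hC : Ceq C C') : psi C = psi C' := by
  induction hC with
  | hole hp => simp only [psi, phi_eq_of_peq hp]
  | cons hp _ ih => simp only [psi, phi_eq_of_peq hp, ih]

theorem ceq_of_psi_eq (C : PC) : ∀ C' : PC, psi C = psi C' → Ceq C C' := by
  induction C with
  | hole h =>
    intro C' he
    cases C' with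
    | hole h' => exact .hole ((peq_iff_phi_eq h h').2 (congrArg Prod.snd he))
    | cons h' C' => exact absurd (congrArg Prod.fst he).symm (psi_cons_fst_ne_zero h' C')
  | cons h C ih =>
    intro C' he
    cases C' with
    | hole h' => exact absurd (congrArg Prod.fst he) (psi_cons_fst_ne_zero h C)
    | cons h' C' =>
      have h1 : PF.phi h * (2 + Polynomial.X * (psi C).1) =
          PF.phi h' * (2 + Polynomial.X * (psi C').1) := congrArg Prod.fst he
      have h2 : PF.phi h * (Polynomial.X * (psi C).2) =
          PF.phi h' * (Polynomial.X * (psi C').2) := congrArg Prod.snd he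
      have hp : PF.Peq h h' := by
        refine peq_of_phiZ_mul_eq h h' (ctxU C) (ctxU C') (eval_zero_ctxU C) (eval_zero_ctxU C')
          (map_int_rat_injective ?_)
        rw [two_add_X_mul_psi_fst, two_add_X_mul_psi_fst] at h1
        rw [Polynomial.map_mul, Polynomial.map_mul, map_phiZ, map_phiZ]
        refine mul_left_cancel₀ (two_ne_zero (α := Polynomial ℚ)) ?_
        linear_combination h1
      rw [← phi_eq_of_peq hp] at h1 h2
      refine .cons hp (ih C' (Prod.ext ?_ ?_))
      · exact mul_left_cancel₀ Polynomial.X_ne_zero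
          (add_left_cancel (mul_left_cancel₀ (phi_ne_zero h) h1))
      · exact mul_left_cancel₀ Polynomial.X_ne_zero (mul_left_cancel₀ (phi_ne_zero h) h2)

/-! ### Operations as polynomial maps -/

theorem phi_union (h h' : PF) : PF.phi (PF.union h h') = PF.phi h * PF.phi h' := by
  induction h with
  | empty => simp [PF.union, PF.phi]
  | node c r _ ih => simp only [PF.union, PF.phi, ih, mul_assoc]

theorem phi_root (h : PF) : PF.phi (PF.root h) = 2 + Polynomial.X * PF.phi h := by
  simp [PF.root, PF.phi]

theorem psi_addC (h : PF) (C : PC) :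
    psi (addC h C) = (PF.phi h * (psi C).1, PF.phi h * (psi C).2) := by
  cases C <;> simp [addC, psi, phi_union, mul_assoc]

theorem phi_plugF (C : PC) (h : PF) :
    PF.phi (plugF C h) = (psi C).1 + (psi C).2 * PF.phi h := by
  induction C with
  | hole g => simp [plugF, psi, phi_union]
  | cons g C ih =>
    simp only [plugF, psi, phi_union, phi_root, ih]
    ring

theorem psi_plugC (C C' : PC) :
    psi (plugC C C') = ((psi C).1 + (psi C).2 * (psi C').1, (psi C).2 * (psi C').2) := by
  induction C with
  | hole g => simp [plugC, psi, psi_addC]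
  | cons g C ih =>
    simp only [plugC, psi, ih, Prod.mk.injEq]
    constructor <;> ring

/-- The unordered context-and-forest algebra `UCF` is
simulated by `(ℚ[x], +, ×)`: the maps `h ↦ (φ(h), 0)` (on forests) and
`C ↦ (p_C, q_C) := ψ(C)` (on one-hole contexts) are injective up to the
identifications `Peq`, `Ceq` of raw representations (which they respect),
`q_C ≠ 0` for every context `C`, and each operation of `UCF` is implemented
by an explicit polynomial map on the pairs:
forest sum of two forests is implemented by `(p·p', 0)`, forest sum with a
context by `(p, q)·(p', 0) ↦ (p·p', q·p')`, `root` by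
`(p, q) ↦ (2 + x·p, x·q)` (on both sorts), plugging a forest into a context by
`C[∘ := h] ↦ (p_C + q_C·φ(h), 0)`, and context composition by
`C[∘ := C'] ↦ (p_C + q_C·p_{C'}, q_C·q_{C'})`. -/
theorem ucf_simulated_by_polynomials :
    -- the forest encoding is well defined and injective
    (∀ h h' : PF, PF.Peq h h' ↔ PF.phi h = PF.phi h') ∧
    -- the context encoding is well defined and injective
    (∀ C C' : PC, Ceq C C' ↔ psi C = psi C') ∧
    -- contexts have nonzero second component
    (∀ C : PC, (psi C).2 ≠ 0) ∧
    -- forest sum of forests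
    (∀ h h' : PF, PF.phi (PF.union h h') = PF.phi h * PF.phi h') ∧
    -- forest sum of a forest and a context
    (∀ (h : PF) (C : PC),
      psi (addC h C) = (PF.phi h * (psi C).1, PF.phi h * (psi C).2)) ∧
    -- root of a forest
    (∀ h : PF, PF.phi (PF.root h) = 2 + Polynomial.X * PF.phi h) ∧
    -- root of a context (the context `∅ + root(C)`)
    (∀ C : PC,
      psi (PC.cons PF.empty C) =
        (2 + Polynomial.X * (psi C).1, Polynomial.X * (psi C).2)) ∧
    -- plugging a forest into a context
    (∀ (C : PC) (h : PF),
      PF.phi (plugF C h) = (psi C).1 + (psi C).2 * PF.phi h) ∧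
    -- context composition
    (∀ C C' : PC,
      psi (plugC C C') =
        ((psi C).1 + (psi C).2 * (psi C').1, (psi C).2 * (psi C').2)) := by
  refine ⟨peq_iff_phi_eq, fun C C' => ⟨psi_eq_of_ceq, ceq_of_psi_eq C C'⟩, psi_snd_ne_zero,
    phi_union, psi_addC, phi_root, fun C => ?_, phi_plugF, psi_plugC⟩
  simp [psi, PF.phi]
end

section
/- Functionality of bottom-up register automata over the unordered context-and-forest algebra UCF is decidable, and equivalence of functional bottom-up register automata over UCF is decidable. -/
/-- Input trees over a ranked alphabet whose symbols are natural numbers. -/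
inductive RTree : Type
  | node : ℕ → List RTree → RTree

/-- A value of the two-sorted algebra `UCF`: either an unordered forest or a
one-hole context. -/
inductive UCFVal : Type
  | forest : PF → UCFVal
  | ctx : PC → UCFVal

/-- Syntactic update expressions over the two-sorted algebra `UCF`, built from
register variables, the constants `∅` (empty forest) and `∘` (the hole, i.e.
the identity context), forest sum, `root`, and plugging into the hole. -/
inductive UExpr : Type
  | var : ℕ → UExpr
  | empty : UExpr
  | hole : UExpr
  | union : UExpr → UExpr → UExpr
  | root : UExpr → UExpr
  | plug : UExpr → UExpr → UExpr

namespace UExpr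

/-- (Partial, sort-checked) evaluation of an update expression in an
environment assigning `UCF` values to register variables. -/
def eval (env : List UCFVal) : UExpr → Option UCFVal
  | .var i => env[i]?
  | .empty => some (.forest PF.empty)
  | .hole => some (.ctx (PC.hole PF.empty))
  | .union e₁ e₂ =>
      match eval env e₁, eval env e₂ with
      | some (.forest h), some (.forest g) => some (.forest (PF.union h g))
      | some (.forest h), some (.ctx C) => some (.ctx (addC h C))
      | some (.ctx C), some (.forest h) => some (.ctx (addC h C))
      | _, _ => none
  | .root e =>
      match eval env e with
      | some (.forest h) => some (.forest (PF.root h))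
      | some (.ctx C) => some (.ctx (PC.cons PF.empty C))
      | none => none
  | .plug e₁ e₂ =>
      match eval env e₁, eval env e₂ with
      | some (.ctx C), some (.forest h) => some (.forest (plugF C h))
      | some (.ctx C), some (.ctx D) => some (.ctx (plugC C D))
      | _, _ => none

/-- Sort-checking of an expression in an environment of register sorts
(`false` = forest, `true` = one-hole context). -/
def sortCheck (env : List Bool) : UExpr → Option Bool
  | .var i => env[i]?
  | .empty => some false
  | .hole => some true
  | .union e₁ e₂ =>
      match sortCheck env e₁, sortCheck env e₂ with
      | some false, some false => some false
      | some false, some true => some true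
      | some true, some false => some true
      | _, _ => none
  | .root e => sortCheck env e
  | .plug e₁ e₂ =>
      match sortCheck env e₁, sortCheck env e₂ with
      | some true, some false => some false
      | some true, some true => some true
      | _, _ => none

/-- An effective encoding of `UCF` update expressions by natural numbers. -/
def code : UExpr → ℕ
  | .var i => Nat.pair 0 i
  | .empty => Nat.pair 1 0
  | .hole => Nat.pair 2 0
  | .union e₁ e₂ => Nat.pair 3 (Nat.pair e₁.code e₂.code)
  | .root e => Nat.pair 4 e.code
  | .plug e₁ e₂ => Nat.pair 5 (Nat.pair e₁.code e₂.code)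

end UExpr

/-- A bottom-up register automaton over the two-sorted algebra `UCF`:
`arity` lists the ranks of the input symbols `0, …, arity.length - 1`;
`regs` is the number of registers; states are `0, …, states - 1`, and
`sorts` assigns to each state the sorts of its `regs` registers
(`false` = forest, `true` = one-hole context); `delta` is the finite list of
transitions `(a, [q₁, …, q_k], q, [f₁, …, f_n])` whose update expressions'
variable `i·regs + j` refers to register `j` of child `i`; `out` is the
partial output map, assigning to some states a term producing a forest. -/
structure RAU : Type where
  arity : List ℕ
  regs : ℕ
  states : ℕ
  sorts : List (List Bool)
  delta : List (ℕ × List ℕ × ℕ × List UExpr)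
  out : List (ℕ × UExpr)

namespace RAU

/-- The sorts of the environment formed by the registers of children in
states `qs`. -/
def childSorts (A : RAU) (qs : List ℕ) : List Bool :=
  (qs.map fun q => A.sorts.getD q []).flatten

/-- Well-formedness: shapes match, and all updates and outputs are
sort-correct (outputs have forest sort). -/
def WF (A : RAU) : Prop :=
  (∀ tr ∈ A.delta, tr.1 < A.arity.length ∧ tr.2.1.length = A.arity.getD tr.1 0 ∧
    (∀ q ∈ tr.2.1, q < A.states) ∧ tr.2.2.1 < A.states ∧ tr.2.2.2.length = A.regs ∧
    List.Forall₂ (fun e s => UExpr.sortCheck (A.childSorts tr.2.1) e = some s)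
      tr.2.2.2 (A.sorts.getD tr.2.2.1 [])) ∧
  (∀ p ∈ A.out, p.1 < A.states ∧
    UExpr.sortCheck (A.sorts.getD p.1 []) p.2 = some false) ∧
  (A.out.map Prod.fst).Nodup ∧
  A.sorts.length = A.states ∧ (∀ s ∈ A.sorts, s.length = A.regs)

/-- The bottom-up reachability relation of a `UCF` register automaton. -/
inductive Reaches (A : RAU) : RTree → ℕ → List UCFVal → Prop
  | step (a q : ℕ) (qs : List ℕ) (fs : List UExpr) (ts : List RTree)
      (rs : List (List UCFVal)) (newr : List UCFVal) :
      (a, qs, q, fs) ∈ A.delta →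
      qs.length = ts.length → rs.length = ts.length →
      (∀ i, i < ts.length →
        Reaches A (ts.getD i (RTree.node 0 [])) (qs.getD i 0) (rs.getD i [])) →
      List.Forall₂ (fun e v => UExpr.eval rs.flatten e = some v) fs newr →
      Reaches A (RTree.node a ts) q newr

/-- The semantics of a `UCF` register automaton: the relation between input
trees and output forests (raw representatives). -/
def Sem (A : RAU) (t : RTree) (h : PF) : Prop :=
  ∃ q r e, A.Reaches t q r ∧ (q, e) ∈ A.out ∧
    UExpr.eval r e = some (UCFVal.forest h)

/-- `A` is functional: its semantics, as a relation between input trees and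
unordered forests (i.e. forests up to `Peq`), is a partial function. -/
def Functional (A : RAU) : Prop :=
  ∀ t h h', A.Sem t h → A.Sem t h' → PF.Peq h h'

/-- Equivalence of two `UCF` register automata: their semantics coincide as
relations between input trees and unordered forests (forests up to `Peq`). -/
def Equiv (A B : RAU) : Prop :=
  ∀ t h, (∃ h', PF.Peq h h' ∧ A.Sem t h') ↔ (∃ h', PF.Peq h h' ∧ B.Sem t h')

/-- An effective encoding of `UCF` register automata by natural numbers. -/
def code (A : RAU) : ℕ :=
  Encodable.encode (A.arity, A.regs, A.states, A.sorts,
    A.delta.map (fun tr => Nat.pair tr.1 (Nat.pair (Encodable.encode tr.2.1)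
      (Nat.pair tr.2.2.1 (Encodable.encode (tr.2.2.2.map UExpr.code))))),
    A.out.map (fun p => Nat.pair p.1 p.2.code))

end RAU

/-! ### Primitive recursion -/

attribute [fun_prop] Primrec

namespace RAUCF

section PrimrecToolkit

variable {α β γ σ : Type} [Primcodable α] [Primcodable β] [Primcodable γ] [Primcodable σ]

@[fun_prop] theorem pr_id : Primrec (fun a : α => a) := Primrec.id
@[fun_prop] theorem pr_const (c : σ) : Primrec (fun _ : α => c) := Primrec.const c
@[fun_prop] theorem pr_comp {f : β → σ} {g : α → β} (hf : Primrec f) (hg : Primrec g) :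
    Primrec (fun a => f (g a)) := hf.comp hg
@[fun_prop] theorem pr_pair {f : α → β} {g : α → γ} (hf : Primrec f) (hg : Primrec g) :
    Primrec (fun a => (f a, g a)) := hf.pair hg
@[fun_prop] theorem pr_fst {f : α → β × γ} (hf : Primrec f) : Primrec (fun a => (f a).1) :=
  Primrec.fst.comp hf
@[fun_prop] theorem pr_snd {f : α → β × γ} (hf : Primrec f) : Primrec (fun a => (f a).2) :=
  Primrec.snd.comp hf
@[fun_prop] theorem pr_add {f g : α → ℕ} (hf : Primrec f) (hg : Primrec g) :
    Primrec (fun a => f a + g a) := Primrec.nat_add.comp hf hg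
@[fun_prop] theorem pr_sub {f g : α → ℕ} (hf : Primrec f) (hg : Primrec g) :
    Primrec (fun a => f a - g a) := Primrec.nat_sub.comp hf hg
@[fun_prop] theorem pr_mul {f g : α → ℕ} (hf : Primrec f) (hg : Primrec g) :
    Primrec (fun a => f a * g a) := Primrec.nat_mul.comp hf hg
@[fun_prop] theorem pr_div {f g : α → ℕ} (hf : Primrec f) (hg : Primrec g) :
    Primrec (fun a => f a / g a) := Primrec.nat_div.comp hf hg
@[fun_prop] theorem pr_mod {f g : α → ℕ} (hf : Primrec f) (hg : Primrec g) :
    Primrec (fun a => f a % g a) := Primrec.nat_mod.comp hf hg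
@[fun_prop] theorem pr_natPair {f g : α → ℕ} (hf : Primrec f) (hg : Primrec g) :
    Primrec (fun a => Nat.pair (f a) (g a)) := Primrec₂.natPair.comp hf hg
@[fun_prop] theorem pr_unpair {f : α → ℕ} (hf : Primrec f) :
    Primrec (fun a => (f a).unpair) := Primrec.unpair.comp hf
@[fun_prop] theorem pr_map {f : α → List β} {g : α → β → σ} (hf : Primrec f)
    (hg : Primrec (fun p : α × β => g p.1 p.2)) :
    Primrec (fun a => (f a).map (g a)) := Primrec.list_map hf hg
@[fun_prop] theorem pr_flatMap {f : α → List β} {g : α → β → List σ} (hf : Primrec f)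
    (hg : Primrec (fun p : α × β => g p.1 p.2)) :
    Primrec (fun a => (f a).flatMap (g a)) := Primrec.list_flatMap hf hg
@[fun_prop] theorem pr_foldr {f : α → List β} {g : α → σ} {h : α → β → σ → σ} (hf : Primrec f)
    (hg : Primrec g) (hh : Primrec (fun p : α × β × σ => h p.1 p.2.1 p.2.2)) :
    Primrec (fun a => (f a).foldr (h a) (g a)) :=
  Primrec.list_foldr (h := fun a p => h a p.1 p.2) hf hg hh
@[fun_prop] theorem pr_getD {f : α → List β} {g : α → ℕ} (d : β) (hf : Primrec f)
    (hg : Primrec g) : Primrec (fun a => (f a).getD (g a) d) :=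
  (Primrec.list_getD d).comp hf hg
@[fun_prop] theorem pr_range {f : α → ℕ} (hf : Primrec f) :
    Primrec (fun a => List.range (f a)) := Primrec.list_range.comp hf
@[fun_prop] theorem pr_length {f : α → List β} (hf : Primrec f) :
    Primrec (fun a => (f a).length) := Primrec.list_length.comp hf
@[fun_prop] theorem pr_append {f g : α → List β} (hf : Primrec f) (hg : Primrec g) :
    Primrec (fun a => f a ++ g a) := Primrec.list_append.comp hf hg
@[fun_prop] theorem pr_cons {f : α → β} {g : α → List β} (hf : Primrec f) (hg : Primrec g) :
    Primrec (fun a => f a :: g a) := Primrec.list_cons.comp hf hg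
@[fun_prop] theorem pr_drop {f : α → ℕ} {g : α → List β} (hf : Primrec f) (hg : Primrec g) :
    Primrec (fun a => (g a).drop (f a)) := Primrec.list_drop.comp hf hg
@[fun_prop] theorem pr_pow {f g : α → ℕ} (hf : Primrec f) (hg : Primrec g) :
    Primrec (fun a => f a ^ g a) := by
  have h := Primrec.nat_rec' (α := α) (β := ℕ) (f := g) (g := fun _ => 1)
    (h := fun a p => p.2 * f a) hg (Primrec.const 1) (by unfold Primrec₂; fun_prop)
  refine h.of_eq fun a => ?_
  induction g a with
  | zero => simp
  | succ n ih => simp only [ih, pow_succ]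
@[fun_prop] theorem pr_optGetD {f : α → Option β} (d : β) (hf : Primrec f) :
    Primrec (fun a => (f a).getD d) := Primrec.option_getD.comp hf (Primrec.const d)
@[fun_prop] theorem pr_decode {f : α → ℕ} (hf : Primrec f) :
    Primrec (fun a => (Encodable.decode (f a) : Option β)) := Primrec.decode.comp hf

theorem pp_eq {f g : α → β} (hf : Primrec f) (hg : Primrec g) :
    PrimrecPred (fun a => f a = g a) := by
  classical exact Primrec.eq.comp hf hg
theorem pp_lt {f g : α → ℕ} (hf : Primrec f) (hg : Primrec g) :
    PrimrecPred (fun a => f a < g a) := Primrec.nat_lt.comp hf hg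
theorem pp_all {f : α → List β} {p : α → β → Prop} (hf : Primrec f)
    (hp : PrimrecPred (fun x : α × β => p x.1 x.2)) :
    PrimrecPred (fun a => ∀ b ∈ f a, p a b) :=
  (PrimrecRel.forall_mem_list (R := fun b a => p a b)
    (hp.comp (Primrec.snd.pair Primrec.fst))).comp hf Primrec.id
theorem pp_ex {f : α → List β} {p : α → β → Prop} (hf : Primrec f)
    (hp : PrimrecPred (fun x : α × β => p x.1 x.2)) :
    PrimrecPred (fun a => ∃ b ∈ f a, p a b) :=
  (PrimrecRel.exists_mem_list (R := fun b a => p a b)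
    (hp.comp (Primrec.snd.pair Primrec.fst))).comp hf Primrec.id
theorem pp_mem {f : α → β} {g : α → List β} (hf : Primrec f) (hg : Primrec g) :
    PrimrecPred (fun a => f a ∈ g a) :=
  (pp_ex (p := fun a b => f a = b) hg (pp_eq (by fun_prop) (by fun_prop))).of_eq
    (fun a => by simp)
theorem pp_all_lt {f : α → ℕ} {p : α → ℕ → Prop} (hf : Primrec f)
    (hp : PrimrecPred (fun x : α × ℕ => p x.1 x.2)) :
    PrimrecPred (fun a => ∀ b < f a, p a b) :=
  (pp_all (f := fun a => List.range (f a)) (by fun_prop) hp).of_eq (fun a => by simp)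
theorem pp_ex_lt {f : α → ℕ} {p : α → ℕ → Prop} (hf : Primrec f)
    (hp : PrimrecPred (fun x : α × ℕ => p x.1 x.2)) :
    PrimrecPred (fun a => ∃ b < f a, p a b) :=
  (pp_ex (f := fun a => List.range (f a)) (by fun_prop) hp).of_eq (fun a => by simp)

@[fun_prop] theorem pr_ite_eq {f g : α → ℕ} {u v : α → σ} (hf : Primrec f) (hg : Primrec g)
    (hu : Primrec u) (hv : Primrec v) : Primrec (fun a => if f a = g a then u a else v a) :=
  Primrec.ite (pp_eq hf hg) hu hv
@[fun_prop] theorem pr_ite_lt {f g : α → ℕ} {u v : α → σ} (hf : Primrec f) (hg : Primrec g)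
    (hu : Primrec u) (hv : Primrec v) : Primrec (fun a => if f a < g a then u a else v a) :=
  Primrec.ite (pp_lt hf hg) hu hv

/-! ### Primitive recursiveness of integer arithmetic -/

theorem encode_int (z : ℤ) :
    Encodable.encode z = if 0 ≤ z then 2 * z.toNat else 2 * (-z - 1).toNat + 1 := by
  cases z with
  | ofNat n =>
    have : Encodable.encode (Int.ofNat n) = 2 * n := rfl
    rw [this]; simp
  | negSucc n =>
    have : Encodable.encode (Int.negSucc n) = 2 * n + 1 := rfl
    rw [this]; simp [Int.negSucc_eq]
    omega

@[fun_prop] theorem pr_toNat {f : α → ℤ} (hf : Primrec f) : Primrec (fun a => (f a).toNat) := by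
  have h : Primrec (fun z : ℤ =>
      if Encodable.encode z % 2 = 0 then Encodable.encode z / 2 else 0) := by
    have := Primrec.encode (α := ℤ)
    fun_prop
  refine (h.comp hf).of_eq fun a => ?_
  rw [encode_int]
  split_ifs <;> omega

theorem pr_negToNat {f : α → ℤ} (hf : Primrec f) : Primrec (fun a => (-(f a)).toNat) := by
  have h : Primrec (fun z : ℤ =>
      if Encodable.encode z % 2 = 0 then 0 else Encodable.encode z / 2 + 1) := by
    have := Primrec.encode (α := ℤ)
    fun_prop
  refine (h.comp hf).of_eq fun a => ?_
  rw [encode_int]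
  split_ifs <;> omega

@[fun_prop] theorem pr_intSub {f g : α → ℕ} (hf : Primrec f) (hg : Primrec g) :
    Primrec (fun a => (f a : ℤ) - (g a : ℤ)) := by
  rw [← Primrec.encode_iff]
  have h : Primrec (fun a => if f a < g a then 2 * (g a - f a - 1) + 1 else 2 * (f a - g a)) := by
    fun_prop
  refine h.of_eq fun a => ?_
  rw [encode_int]
  split_ifs <;> omega

@[fun_prop] theorem pr_natCast {f : α → ℕ} (hf : Primrec f) : Primrec (fun a => (f a : ℤ)) :=
  (pr_intSub hf (pr_const 0)).of_eq (by simp)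

@[fun_prop] theorem pr_int_add {f g : α → ℤ} (hf : Primrec f) (hg : Primrec g) :
    Primrec (fun a => f a + g a) := by
  have h1 := pr_negToNat hf
  have h2 := pr_negToNat hg
  have h : Primrec (fun a => (((f a).toNat + (g a).toNat : ℕ) : ℤ) -
    (((-(f a)).toNat + (-(g a)).toNat : ℕ) : ℤ)) := by fun_prop
  exact h.of_eq fun a => by omega

@[fun_prop] theorem pr_int_neg {f : α → ℤ} (hf : Primrec f) :
    Primrec (fun a => - f a) := by
  have h1 := pr_negToNat hf
  have h : Primrec (fun a => (((-(f a)).toNat : ℕ) : ℤ) - (((f a).toNat : ℕ) : ℤ)) := by fun_prop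
  exact h.of_eq fun a => by omega

@[fun_prop] theorem pr_int_sub {f g : α → ℤ} (hf : Primrec f) (hg : Primrec g) :
    Primrec (fun a => f a - g a) := by
  simp only [sub_eq_add_neg]; fun_prop

@[fun_prop] theorem pr_int_mul {f g : α → ℤ} (hf : Primrec f) (hg : Primrec g) :
    Primrec (fun a => f a * g a) := by
  have h1 := pr_negToNat hf
  have h2 := pr_negToNat hg
  have h : Primrec (fun a =>
    (((f a).toNat * (g a).toNat + (-(f a)).toNat * (-(g a)).toNat : ℕ) : ℤ) -
    (((f a).toNat * (-(g a)).toNat + (-(f a)).toNat * (g a).toNat : ℕ) : ℤ)) := by fun_prop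
  refine h.of_eq fun a => ?_
  have e1 : f a = ((f a).toNat : ℤ) - ((-(f a)).toNat : ℤ) := by omega
  have e2 : g a = ((g a).toNat : ℤ) - ((-(g a)).toNat : ℤ) := by omega
  conv_rhs => rw [e1, e2]
  push_cast; ring

/-! ### Semidecidable predicates -/

/-- Semidecidability, presented as the projection of a primitive recursive predicate. -/
def SE (p : α → Prop) : Prop :=
  ∃ R : α → ℕ → Prop, PrimrecPred (fun x : α × ℕ => R x.1 x.2) ∧ ∀ a, p a ↔ ∃ n, R a n

/-- The search for a witness is an unbounded minimization. -/
theorem SE.re {p : α → Prop} (h : SE p) : REPred p := by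
  classical
  obtain ⟨R, hR, hp⟩ := h
  have h1 : Partrec (fun a => Nat.rfind fun n => Part.some (decide (R a n))) :=
    Partrec.rfind (PrimrecPred.decide hR).to_comp.partrec
  refine h1.dom_re.of_eq fun a => ?_
  rw [hp]
  refine Nat.rfind_dom.trans ?_
  simp

theorem SE.of_pp {p : α → Prop} (h : PrimrecPred p) : SE p :=
  ⟨fun a _ => p a, h.comp Primrec.fst, fun a => by simp⟩

theorem SE.of_eq {p q : α → Prop} (h : SE p) (e : ∀ a, p a ↔ q a) : SE q := by
  obtain rfl : p = q := funext fun a => propext (e a)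
  exact h

theorem SE.comp {p : β → Prop} (h : SE p) {f : α → β} (hf : Primrec f) : SE (fun a => p (f a)) := by
  obtain ⟨R, hR, hp⟩ := h
  exact ⟨fun a n => R (f a) n,
    hR.comp (f := fun x : α × ℕ => (f x.1, x.2)) (by fun_prop), fun a => hp _⟩

theorem SE.and {p q : α → Prop} (h : SE p) (h' : SE q) : SE (fun a => p a ∧ q a) := by
  obtain ⟨R, hR, hp⟩ := h
  obtain ⟨R', hR', hq⟩ := h'
  refine ⟨fun a n => R a n.unpair.1 ∧ R' a n.unpair.2,
    (hR.comp (f := fun x : α × ℕ => (x.1, x.2.unpair.1)) (by fun_prop)).and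
    (hR'.comp (f := fun x : α × ℕ => (x.1, x.2.unpair.2)) (by fun_prop)), fun a => ?_⟩
  show p a ∧ q a ↔ _
  rw [hp, hq]
  constructor
  · rintro ⟨⟨n, hn⟩, ⟨m, hm⟩⟩
    exact ⟨Nat.pair n m, by simpa using ⟨hn, hm⟩⟩
  · rintro ⟨n, hn⟩
    exact ⟨⟨_, hn.1⟩, ⟨_, hn.2⟩⟩

theorem SE.ex {p : α → β → Prop} (h : SE (fun x : α × β => p x.1 x.2)) :
    SE (fun a => ∃ b, p a b) := by
  obtain ⟨R, hR, hp⟩ := h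
  refine ⟨fun a n => ∃ b ∈ (Encodable.decode (α := β) n.unpair.1).toList, R (a, b) n.unpair.2,
    pp_ex (p := fun (x : α × ℕ) b => R (x.1, b) x.2.unpair.2) ?_
      (hR.comp (f := fun x : (α × ℕ) × β => ((x.1.1, x.2), x.1.2.unpair.2)) (by fun_prop)),
      fun a => ?_⟩
  · have : Primrec (Option.toList (α := β)) := Primrec.optionToList
    fun_prop
  · constructor
    · rintro ⟨b, hb⟩
      obtain ⟨n, hn⟩ := (hp (a, b)).1 hb
      exact ⟨Nat.pair (Encodable.encode b) n, b, by simp, by simpa using hn⟩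
    · rintro ⟨n, b, -, hb⟩
      exact ⟨b, (hp (a, b)).2 ⟨_, hb⟩⟩

theorem SE.all {f : α → List β} {p : α → β → Prop} (hf : Primrec f)
    (h : SE (fun x : α × β => p x.1 x.2)) : SE (fun a => ∀ b ∈ f a, p a b) := by
  obtain ⟨R, hR, hp⟩ := h
  refine ⟨fun a n => ∀ b ∈ f a, ∃ m < n, R (a, b) m,
    pp_all (p := fun (x : α × ℕ) b => ∃ m < x.2, R (x.1, b) m) (by fun_prop)
      (pp_ex_lt (p := fun (x : (α × ℕ) × β) m => R (x.1.1, x.2) m) (by fun_prop)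
        (hR.comp (f := fun x : ((α × ℕ) × β) × ℕ => ((x.1.1.1, x.1.2), x.2)) (by fun_prop))),
      fun a => ?_⟩
  have hp' : ∀ a b, p a b ↔ ∃ n, R (a, b) n := fun a b => hp (a, b)
  simp only [hp']
  generalize f a = l
  constructor
  · intro H
    induction l with
    | nil => exact ⟨0, by simp⟩
    | cons b l ih =>
      obtain ⟨n, hn⟩ := ih fun c hc => H c (by simp [hc])
      obtain ⟨m, hm⟩ := H b (by simp)
      refine ⟨n + m + 1, fun c hc => ?_⟩
      rcases List.mem_cons.1 hc with rfl | hc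
      · exact ⟨m, by omega, hm⟩
      · obtain ⟨k, hk, hk'⟩ := hn c hc
        exact ⟨k, by omega, hk'⟩
  · rintro ⟨n, hn⟩ b hb
    obtain ⟨m, -, hm⟩ := hn b hb
    exact ⟨m, hm⟩

end PrimrecToolkit

end RAUCF

namespace RAUCF

/-! ### Terms coded by natural numbers -/

theorem unpair_snd_lt {n : ℕ} (h : n.unpair.1 ≠ 0) : n.unpair.2 < n := by
  conv_rhs => rw [← Nat.pair_unpair n]
  have := Nat.add_le_pair n.unpair.1 n.unpair.2
  omega

theorem unpair_snd_fst_lt {n : ℕ} (h : n.unpair.1 ≠ 0) : n.unpair.2.unpair.1 < n :=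
  (Nat.unpair_left_le _).trans_lt (unpair_snd_lt h)

theorem unpair_snd_snd_lt {n : ℕ} (h : n.unpair.1 ≠ 0) : n.unpair.2.unpair.2 < n :=
  (Nat.unpair_right_le _).trans_lt (unpair_snd_lt h)

/-- Structural recursion over natural numbers read as terms, every natural number being one:
`⟨0, i⟩` is the variable `i`, and `⟨t, r⟩` with `t ≠ 0` is the operation with tag `t` applied either
to the single argument `r` or to the two arguments `⟨r₁, r₂⟩ = r`. The operation receives the values
of `r`, `r₁` and `r₂`, and picks those it needs. The codes of `UExpr.code` are of this form. -/
def tfold {τ : Type} (var : ℕ → τ) (op : ℕ → τ → τ → τ → τ) (n : ℕ) : τ :=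
  if h : n.unpair.1 = 0 then var n.unpair.2
  else op n.unpair.1 (tfold var op n.unpair.2) (tfold var op n.unpair.2.unpair.1)
    (tfold var op n.unpair.2.unpair.2)
termination_by n
decreasing_by
  · exact unpair_snd_lt h
  · exact unpair_snd_fst_lt h
  · exact unpair_snd_snd_lt h

theorem tfold_var {τ : Type} (var : ℕ → τ) (op : ℕ → τ → τ → τ → τ) (i : ℕ) :
    tfold var op (Nat.pair 0 i) = var i := by
  rw [tfold]; simp

theorem tfold_op {τ : Type} (var : ℕ → τ) (op : ℕ → τ → τ → τ → τ) (t r : ℕ) (h : t ≠ 0) :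
    tfold var op (Nat.pair t r) = op t (tfold var op r) (tfold var op r.unpair.1)
      (tfold var op r.unpair.2) := by
  rw [tfold]; simp [h]

theorem code_ind {P : ℕ → Prop} (var : ∀ i, P (Nat.pair 0 i))
    (op : ∀ t r, t ≠ 0 → P r → P r.unpair.1 → P r.unpair.2 → P (Nat.pair t r)) : ∀ n, P n := by
  intro n
  induction n using Nat.strong_induction_on with
  | _ n ih =>
    by_cases h : n.unpair.1 = 0
    · have := var n.unpair.2
      rwa [← h, Nat.pair_unpair] at this
    · have := op n.unpair.1 n.unpair.2 h (ih _ (unpair_snd_lt h)) (ih _ (unpair_snd_fst_lt h))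
        (ih _ (unpair_snd_snd_lt h))
      rwa [Nat.pair_unpair] at this

theorem pr_tfold {α τ : Type} [Primcodable α] [Primcodable τ] [Inhabited τ]
    {var : α → ℕ → τ} {op : α → ℕ → τ → τ → τ → τ} {n : α → ℕ}
    (hvar : Primrec (fun p : α × ℕ => var p.1 p.2))
    (hop : Primrec (fun p : α × ℕ × τ × τ × τ => op p.1 p.2.1 p.2.2.1 p.2.2.2.1 p.2.2.2.2))
    (hn : Primrec n) : Primrec (fun a => tfold (var a) (op a) (n a)) := by
  have h : Primrec₂ (fun a n => tfold (var a) (op a) n) := by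
    refine Primrec.nat_strong_rec _ (g := fun a l => some
      (if l.length.unpair.1 = 0 then var a l.length.unpair.2 else
        op a l.length.unpair.1 (l.getD l.length.unpair.2 default)
          (l.getD l.length.unpair.2.unpair.1 default)
          (l.getD l.length.unpair.2.unpair.2 default))) ?_ ?_
    · refine Primrec.option_some.comp (pr_ite_eq (by fun_prop) (by fun_prop) ?_ ?_)
      · exact hvar.comp (g := fun (x : α × List τ) => (x.1, x.2.length.unpair.2)) (by fun_prop)
      · exact hop.comp (g := fun (x : α × List τ) => (x.1, x.2.length.unpair.1,
          x.2.getD x.2.length.unpair.2 default, x.2.getD x.2.length.unpair.2.unpair.1 default,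
          x.2.getD x.2.length.unpair.2.unpair.2 default)) (by fun_prop)
    · intro a n
      congr 1
      conv_rhs => rw [tfold]
      simp only [List.length_map, List.length_range]
      split_ifs with h
      · rfl
      · congr 1 <;>
          simp [List.getD_eq_getElem?_getD, unpair_snd_lt h, unpair_snd_fst_lt h,
            unpair_snd_snd_lt h]
  exact h.comp Primrec.id hn

section Eval

variable {R S : Type} [CommRing R] [CommRing S]

/-- The operations on pairs `(p, q)`, read as polynomials `p + y q` in a hole variable `y`:
`∅`, `∘`, forest sum, `root` and plugging for the tags `1, …, 5` of `UExpr.code`, and in addition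
subtraction of first components (tag `6`) and projection to the second component (tags from `7`).
A forest is a pair with `q = 0`, so that each operation is one formula whatever the sorts. -/
def evOp (x : R) (t : ℕ) (a b c : R × R) : R × R :=
  if t = 1 then (1, 0)
  else if t = 2 then (0, 1)
  else if t = 3 then (b.1 * c.1, b.1 * c.2 + b.2 * c.1)
  else if t = 4 then (2 + x * a.1, x * a.2)
  else if t = 5 then (b.1 + b.2 * c.1, b.2 * c.2)
  else if t = 6 then (b.1 - c.1, 0)
  else (b.2, 0)

/-- The value of a coded term at `x` in the environment `v`. -/
def ev (x : R) (v : ℕ → R × R) (n : ℕ) : R × R := tfold v (evOp x) n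

/-- The operation of `sb` at the inner nodes of a term: rebuild the node. -/
def sbOp (t a b c : ℕ) : ℕ := Nat.pair t (if t = 4 then a else Nat.pair b c)

/-- Simultaneous substitution of the terms `s i` for the variables `i` in a coded term. -/
def sb (s : ℕ → ℕ) (n : ℕ) : ℕ := tfold s sbOp n

theorem ev_var (x : R) (v : ℕ → R × R) (i : ℕ) : ev x v (Nat.pair 0 i) = v i := tfold_var _ _ _

theorem ev_op (x : R) (v : ℕ → R × R) (t r : ℕ) (h : t ≠ 0) :
    ev x v (Nat.pair t r) = evOp x t (ev x v r) (ev x v r.unpair.1) (ev x v r.unpair.2) :=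
  tfold_op _ _ _ _ h

/-- Substitution lemma: substituting terms amounts to evaluating in the substituted environment. -/
theorem ev_sb (x : R) (v : ℕ → R × R) (s : ℕ → ℕ) (n : ℕ) :
    ev x v (sb s n) = ev x (fun i => ev x v (s i)) n := by
  induction n using code_ind with
  | var i => rw [sb, tfold_var, ev_var]
  | op t r h h1 h2 h3 =>
    rw [ev_op _ _ _ _ h, ← h1, ← h2, ← h3, sb, tfold_op _ _ _ _ h, sbOp, ev_op _ _ _ _ h]
    by_cases h4 : t = 4
    · subst h4; simp [evOp, sb]
    · simp [evOp, h4, sb]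

theorem ev_map (f : R →+* S) (x : R) (v : ℕ → R × R) (n : ℕ) :
    ev (f x) (fun i => (f (v i).1, f (v i).2)) n = (f (ev x v n).1, f (ev x v n).2) := by
  induction n using code_ind with
  | var i => simp [ev_var]
  | op t r h h1 h2 h3 =>
    rw [ev_op _ _ _ _ h, ev_op _ _ _ _ h, h1, h2, h3]
    unfold evOp
    split_ifs <;> simp [map_ofNat]

theorem ev_congr (x : R) (v w : ℕ → R × R) (n : ℕ) (H : ∀ i ≤ n, v i = w i) :
    ev x v n = ev x w n := by
  induction n using code_ind with
  | var i => rw [ev_var, ev_var]; exact H _ (Nat.right_le_pair _ _)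
  | op t r h h1 h2 h3 =>
    have hr := Nat.right_le_pair t r
    rw [ev_op _ _ _ _ h, ev_op _ _ _ _ h, h1 fun i hi => H i (by omega),
      h2 fun i hi => H i ((hi.trans (Nat.unpair_left_le _)).trans hr),
      h3 fun i hi => H i ((hi.trans (Nat.unpair_right_le _)).trans hr)]

end Eval

@[fun_prop] theorem pr_sb {α : Type} [Primcodable α] {s : α → ℕ → ℕ} {n : α → ℕ}
    (hs : Primrec (fun p : α × ℕ => s p.1 p.2)) (hn : Primrec n) :
    Primrec (fun a => sb (s a) (n a)) := by
  unfold sb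
  refine pr_tfold hs ?_ hn
  unfold sbOp
  fun_prop

@[fun_prop] theorem pr_ev {α : Type} [Primcodable α] {x : α → ℤ} {v : α → ℕ → ℤ × ℤ} {n : α → ℕ}
    (hx : Primrec x) (hv : Primrec (fun p : α × ℕ => v p.1 p.2)) (hn : Primrec n) :
    Primrec (fun a => ev (x a) (v a) (n a)) := by
  unfold ev
  refine pr_tfold (op := fun a => evOp (x a)) hv ?_ hn
  unfold evOp
  fun_prop

/-! ### Polynomial identities between terms -/

/-- The code of the `i`-th variable. -/
def cVar (i : ℕ) : ℕ := Nat.pair 0 i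
/-- A term with value `1`. -/
def cOne : ℕ := Nat.pair 1 0
/-- The difference of the first components of two terms. -/
def cSub (a b : ℕ) : ℕ := Nat.pair 6 (Nat.pair a b)
/-- The second component of a term. -/
def cSnd (a : ℕ) : ℕ := Nat.pair 7 (Nat.pair a a)
/-- A term with value `0`. -/
def cZero : ℕ := cSub cOne cOne
/-- The sum of the first components of two terms. -/
def cAdd (a b : ℕ) : ℕ := cSub a (cSub cZero b)
/-- A term with the product of first components as its first component. -/
def cMul (a b : ℕ) : ℕ := Nat.pair 3 (Nat.pair a b)
/-- A term with value `x`, obtained from `root(∅)`, whose value is `2 + x`. -/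
def cX : ℕ := cSub (Nat.pair 4 cOne) (cAdd cOne cOne)

section

variable {R : Type} [CommRing R] (x : R) (v : ℕ → R × R) (a b : ℕ)

@[simp] theorem ev_cVar : ev x v (cVar a) = v a := ev_var _ _ _
@[simp] theorem ev_cOne : ev x v cOne = (1, 0) := by
  rw [cOne, ev_op _ _ _ _ (by simp)]; simp [evOp]
@[simp] theorem ev_cSub : ev x v (cSub a b) = ((ev x v a).1 - (ev x v b).1, 0) := by
  rw [cSub, ev_op _ _ _ _ (by simp)]; simp [evOp]
@[simp] theorem ev_cSnd : ev x v (cSnd a) = ((ev x v a).2, 0) := by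
  rw [cSnd, ev_op _ _ _ _ (by simp)]; simp [evOp]
@[simp] theorem ev_cZero : ev x v cZero = 0 := by simp [cZero]
@[simp] theorem ev_cAdd : ev x v (cAdd a b) = ((ev x v a).1 + (ev x v b).1, 0) := by
  simp [cAdd]
@[simp] theorem ev_cMul : (ev x v (cMul a b)).1 = (ev x v a).1 * (ev x v b).1 := by
  rw [cMul, ev_op _ _ _ _ (by simp)]; simp [evOp]
@[simp] theorem ev_cX : ev x v cX = (x, 0) := by
  rw [cX, ev_cSub, ev_op _ _ _ _ (by simp)]; simp [evOp]; ring

end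

section

variable {α : Type} [Primcodable α] {f g : α → ℕ}

@[fun_prop] theorem pr_cVar (hf : Primrec f) : Primrec (fun a => cVar (f a)) := by
  unfold cVar; fun_prop
@[fun_prop] theorem pr_cSub (hf : Primrec f) (hg : Primrec g) :
    Primrec (fun a => cSub (f a) (g a)) := by
  unfold cSub; fun_prop
@[fun_prop] theorem pr_cAdd (hf : Primrec f) (hg : Primrec g) :
    Primrec (fun a => cAdd (f a) (g a)) := by
  unfold cAdd; fun_prop
@[fun_prop] theorem pr_cMul (hf : Primrec f) (hg : Primrec g) :
    Primrec (fun a => cMul (f a) (g a)) := by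
  unfold cMul; fun_prop

end

/-- The `i`-th base-`B` digit of `e`, as an integer. -/
def dig (B e i : ℕ) : ℤ := ((e / B ^ i % B : ℕ) : ℤ)

/-- The environment read off the base-`B` digits of `e`, supported on the first `N` variables. -/
def gridEnv (B N e : ℕ) (i : ℕ) : ℤ × ℤ :=
  if i < N then (dig B e (2 * i + 1), dig B e (2 * i + 2)) else 0

/-- Agreement of the first components of the terms `a` and `b` on the grid `{0, …, a + b + 1}` in
each of the variables, where the degree in each variable is at most `a + b + 1`. -/
def PEq (a b : ℕ) : Prop :=
  ∀ e < (a + b + 2) ^ (2 * (a + b + 1) + 1),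
    (ev (dig (a + b + 2) e 0) (gridEnv (a + b + 2) (a + b + 1) e) a).1 =
    (ev (dig (a + b + 2) e 0) (gridEnv (a + b + 2) (a + b + 1) e) b).1

theorem pp_PEq {α : Type} [Primcodable α] {f g : α → ℕ} (hf : Primrec f) (hg : Primrec g) :
    PrimrecPred (fun a => PEq (f a) (g a)) := by
  unfold PEq gridEnv dig
  refine pp_all_lt (p := fun a e => _) (by fun_prop) (pp_eq ?_ ?_) <;> fun_prop

open MvPolynomial in
/-- The generic environment with `N` variables. -/
noncomputable def genEnv (N : ℕ) (i : ℕ) :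
    MvPolynomial (Fin (2 * N + 1)) ℤ × MvPolynomial (Fin (2 * N + 1)) ℤ :=
  if h : i < N then (X ⟨2 * i + 1, by omega⟩, X ⟨2 * i + 2, by omega⟩) else 0

open MvPolynomial in
/-- The value of a coded term at generic arguments has degree at most its code plus one in each
variable. -/
theorem degreeOf_ev (N n : ℕ) (j : Fin (2 * N + 1)) :
    degreeOf j (ev (X 0) (genEnv N) n).1 ≤ n + 1 ∧ degreeOf j (ev (X 0) (genEnv N) n).2 ≤ n + 1 := by
  have hX : ∀ i : Fin (2 * N + 1), degreeOf j (X i : MvPolynomial (Fin (2 * N + 1)) ℤ) ≤ 1 := by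
    intro i
    rw [degreeOf_X]; split_ifs <;> omega
  have h2 : degreeOf j (2 : MvPolynomial (Fin (2 * N + 1)) ℤ) = 0 := degreeOf_C 2 j
  induction n using code_ind with
  | var i =>
    rw [ev_var, genEnv]
    split_ifs with h
    · exact ⟨(hX _).trans (by omega), (hX _).trans (by omega)⟩
    · simp
  | op t r h h1 h2 h3 =>
    have e1 := Nat.add_le_pair t r
    have e2 := Nat.add_le_pair r.unpair.1 r.unpair.2
    rw [Nat.pair_unpair] at e2
    rw [ev_op _ _ _ _ h]
    generalize ev (X 0) (genEnv N) r = A at *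
    generalize ev (X 0) (genEnv N) r.unpair.1 = B at *
    generalize ev (X 0) (genEnv N) r.unpair.2 = C at *
    have m1 := degreeOf_mul_le j B.1 C.1
    have m2 := degreeOf_mul_le j B.1 C.2
    have m3 := degreeOf_mul_le j B.2 C.1
    have m4 := degreeOf_mul_le j B.2 C.2
    have m5 := degreeOf_mul_le j (X 0) A.1
    have m6 := degreeOf_mul_le j (X 0) A.2
    have a1 := degreeOf_add_le j (B.1 * C.2) (B.2 * C.1)
    have a2 := degreeOf_add_le j 2 (X 0 * A.1)
    have a3 := degreeOf_add_le j B.1 (B.2 * C.1)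
    have a4 := degreeOf_sub_le j B.1 C.1
    have x0 := hX 0
    unfold evOp
    split_ifs <;> simp <;> omega

/-- Agreement on the grid implies a universal identity, because a polynomial whose degree in each
variable is smaller than the number of grid points in that direction is determined on the grid. -/
theorem PEq_universal {a b : ℕ} (h : PEq a b) {R : Type} [CommRing R] (x : R) (v : ℕ → R × R) :
    (ev x v a).1 = (ev x v b).1 := by
  set N := a + b + 1 with hN
  set B := a + b + 2 with hB
  have key : (ev (MvPolynomial.X 0) (genEnv N) a).1 - (ev (MvPolynomial.X 0) (genEnv N) b).1 = 0 := by
    refine MvPolynomial.eq_zero_of_eval_zero_at_prod_finset _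
      (fun _ => (Finset.range B).map ⟨Nat.cast, Nat.cast_injective⟩) ?_ ?_
    · intro j
      have h1 := (degreeOf_ev N a j).1
      have h2 := (degreeOf_ev N b j).1
      have h3 := MvPolynomial.degreeOf_sub_le j (ev (MvPolynomial.X 0) (genEnv N) a).1
        (ev (MvPolynomial.X 0) (genEnv N) b).1
      simp only [Finset.card_map, Finset.card_range]
      omega
    · intro y hy
      simp only [Finset.mem_map, Finset.mem_range, Function.Embedding.coeFn_mk] at hy
      choose z hz hzy using hy
      set e := finFunctionFinEquiv (fun i => (⟨z i, hz i⟩ : Fin B)) with he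
      have hdig : ∀ i : Fin (2 * N + 1), dig B e i = y i := by
        intro i
        rw [dig, ← hzy]
        have := finFunctionFinEquiv_symm_apply_val e i
        rw [← this, he, Equiv.symm_apply_apply]
      have := h e e.2
      have h0 := hdig 0
      rw [Fin.val_zero] at h0
      rw [map_sub, sub_eq_zero]
      have hm := fun n => ev_map (MvPolynomial.eval y) (MvPolynomial.X 0) (genEnv N) n
      have henv : (fun i => (MvPolynomial.eval y (genEnv N i).1, MvPolynomial.eval y (genEnv N i).2))
          = gridEnv B N e := by
        funext i
        unfold genEnv gridEnv
        split_ifs with hi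
        · simp only [MvPolynomial.eval_X, ← hdig]
        · simp
      rw [henv] at hm
      have e1 := congrArg Prod.fst (hm a)
      have e2 := congrArg Prod.fst (hm b)
      simp only [MvPolynomial.eval_X, ← h0] at e1 e2
      rw [← e1, ← e2]
      exact this
  have hloc : ∀ n ≤ a + b, ev x v n = ev x (fun i => if i < N then v i else 0) n := by
    intro n hn
    refine ev_congr _ _ _ _ fun i hi => ?_
    rw [if_pos (by omega)]
  let f : MvPolynomial (Fin (2 * N + 1)) ℤ →+* R := MvPolynomial.eval₂Hom (Int.castRingHom R)
    (fun j => if j.1 = 0 then x else if j.1 % 2 = 1 then (v (j.1 / 2)).1 else (v (j.1 / 2 - 1)).2)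
  have hm := fun n => ev_map f (MvPolynomial.X 0) (genEnv N) n
  have henv : (fun i => (f (genEnv N i).1, f (genEnv N i).2)) = fun i => if i < N then v i else 0 := by
    funext i
    unfold genEnv
    split_ifs with hi
    · simp only [f, MvPolynomial.eval₂Hom_X']
      have e1 : (2 * i + 1) / 2 = i := by omega
      have e2 : (2 * i + 2) / 2 - 1 = i := by omega
      simp [e1, Nat.add_mod]
    · simp
  have hx : f (MvPolynomial.X 0) = x := by simp [f]
  rw [henv, hx] at hm
  rw [hloc a (by omega), hloc b (by omega), hm, hm]
  simp only
  rw [sub_eq_zero.1 key]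

end RAUCF

namespace RAUCF

/-! ### Polynomial tree systems -/

/-- A polynomial tree system `(n, δ, out)`: each state carries `n` registers with values in `R × R`;
a transition `(qs, q, fs)` combines values reachable in the states `qs` to a value reachable in `q`,
and an output `(q, g)` is a term to be tested for being zero at the state `q`. -/
abbrev Sys : Type := ℕ × List (List ℕ × ℕ × List ℕ) × List (ℕ × ℕ)

section

variable {R : Type} [CommRing R]

/-- The environment of a transition with `k` children and `n` registers per child: register `j` of
child `i` is the variable `i * n + j`. -/
def childEnv (n k : ℕ) (rs : ℕ → ℕ → R × R) (m : ℕ) : R × R :=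
  if m < k * n then rs (m / n) (m % n) else 0

/-- The register values after a transition with update terms `fs`. -/
def next (n : ℕ) (x : R) (k : ℕ) (rs : ℕ → ℕ → R × R) (fs : List ℕ) (j : ℕ) : R × R :=
  if j < n then ev x (childEnv n k rs) (fs.getD j 0) else 0

/-- The reachable configurations of a polynomial tree system. -/
inductive Reach (S : Sys) (x : R) : ℕ → (ℕ → R × R) → Prop
  | step (tr : List ℕ × ℕ × List ℕ) (h : tr ∈ S.2.1) (rs : ℕ → ℕ → R × R)
      (hrs : ∀ i < tr.1.length, Reach S x (tr.1.getD i 0) (rs i)) :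
      Reach S x tr.2.1 (next S.1 x tr.1.length rs tr.2.2)

theorem childEnv_congr {n k : ℕ} {rs rs' : ℕ → ℕ → R × R} (h : ∀ i < k, rs i = rs' i) :
    childEnv n k rs = childEnv n k rs' := by
  funext m
  unfold childEnv
  split_ifs with hm
  · rw [h _ (Nat.div_lt_of_lt_mul (by rwa [mul_comm] at hm))]
  · rfl

theorem next_congr {n k : ℕ} {rs rs' : ℕ → ℕ → R × R} (h : ∀ i < k, rs i = rs' i) (x : R)
    (fs : List ℕ) : next n x k rs fs = next n x k rs' fs := by
  unfold next; rw [childEnv_congr h]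

variable {R' : Type} [CommRing R']

/-- The coordinatewise action of a ring homomorphism on environments. -/
def mapEnv (f : R →+* R') (v : ℕ → R × R) (i : ℕ) : R' × R' := (f (v i).1, f (v i).2)

theorem ev_mapEnv (f : R →+* R') (x : R) (v : ℕ → R × R) (n : ℕ) :
    ev (f x) (mapEnv f v) n = (f (ev x v n).1, f (ev x v n).2) := ev_map f x v n

theorem mapEnv_childEnv (f : R →+* R') (n k : ℕ) (rs : ℕ → ℕ → R × R) :
    mapEnv f (childEnv n k rs) = childEnv n k (fun i => mapEnv f (rs i)) := by
  funext m
  unfold mapEnv childEnv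
  split_ifs <;> simp

theorem mapEnv_next (f : R →+* R') (n : ℕ) (x : R) (k : ℕ) (rs : ℕ → ℕ → R × R) (fs : List ℕ) :
    mapEnv f (next n x k rs fs) = next n (f x) k (fun i => mapEnv f (rs i)) fs := by
  funext j
  by_cases h : j < n
  · simp only [next, if_pos h, ← mapEnv_childEnv, ev_mapEnv]
    simp only [mapEnv, next, if_pos h]
  · simp [next, mapEnv, if_neg h]

theorem Reach.map (f : R →+* R') {S : Sys} {x : R} {q : ℕ} {v : ℕ → R × R} (h : Reach S x q v) :
    Reach S (f x) q (mapEnv f v) := by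
  induction h with
  | step tr h rs hrs ih =>
    rw [mapEnv_next]
    exact Reach.step tr h _ ih

/-- Runs do not test register values, so every run over `R'` at the image of `x` comes from a run
over `R` at `x`. -/
theorem Reach.lift (f : R →+* R') {S : Sys} {x : R} {q : ℕ} {w : ℕ → R' × R'}
    (h : Reach S (f x) q w) : ∃ v, Reach S x q v ∧ mapEnv f v = w := by
  induction h with
  | step tr h rs hrs ih =>
    choose! vs hv hv' using ih
    refine ⟨_, Reach.step tr h vs hv, ?_⟩
    rw [mapEnv_next]
    exact next_congr hv' _ _

end

open Polynomial in
/-- All outputs of the system vanish, in the ring `ℤ[x]`. -/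
def Zero (S : Sys) : Prop :=
  ∀ q v, Reach S (X : ℤ[X]) q v → ∀ g, (q, g) ∈ S.2.2 → (ev X v g).1 = 0

/-- A nonzero output in `ℤ[x]` has a nonzero value at some integer, since a nonzero polynomial has
finitely many roots. Runs over `ℤ` are finite objects, which makes nonzeroness semidecidable. -/
theorem not_Zero_iff (S : Sys) : ¬ Zero S ↔
    ∃ x : ℤ, ∃ q w, Reach S x q w ∧ ∃ g, (q, g) ∈ S.2.2 ∧ (ev x w g).1 ≠ 0 := by
  have hX : ∀ x : ℤ, Polynomial.evalRingHom x Polynomial.X = x := by simp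
  constructor
  · intro h
    unfold Zero at h
    push Not at h
    obtain ⟨q, v, hr, g, hg, hne⟩ := h
    obtain ⟨x, hx⟩ : ∃ x : ℤ, Polynomial.evalRingHom x (ev Polynomial.X v g).1 ≠ 0 := by
      by_contra! H
      exact hne (Polynomial.funext fun x => by simpa using H x)
    have h1 := hr.map (Polynomial.evalRingHom x)
    have h2 := ev_mapEnv (Polynomial.evalRingHom x) Polynomial.X v g
    rw [hX] at h1 h2
    exact ⟨x, q, _, h1, g, hg, by rw [h2]; exact hx⟩
  · rintro ⟨x, q, w, hr, g, hg, hne⟩ hZ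
    rw [← hX x] at hr
    obtain ⟨v, hv, rfl⟩ := hr.lift
    refine hne ?_
    have h2 := ev_mapEnv (Polynomial.evalRingHom x) Polynomial.X v g
    rw [hX] at h2
    rw [h2, hZ q v hv g hg]
    simp

/-- The environment given by a list of register values. -/
def toEnv (l : List (ℤ × ℤ)) (j : ℕ) : ℤ × ℤ := l.getD j 0

/-- The configuration `f` results from a transition applied to configurations in `L`. -/
def Rule (S : Sys) (x : ℤ) (L : List (ℕ × List (ℤ × ℤ))) (f : ℕ × List (ℤ × ℤ)) : Prop :=
  ∃ c : (List ℕ × ℕ × List ℕ) × List (List (ℤ × ℤ)), c.1 ∈ S.2.1 ∧ c.1.2.1 = f.1 ∧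
    (∀ i < c.1.1.length, (c.1.1.getD i 0, c.2.getD i []) ∈ L) ∧
    f.2 = (List.range S.1).map (next S.1 x c.1.1.length (fun i => toEnv (c.2.getD i [])) c.1.2.2)

/-- The list `L` is a derivation: each entry follows from later ones. -/
def Valid (S : Sys) (x : ℤ) (L : List (ℕ × List (ℤ × ℤ))) : Prop :=
  ∀ i ∈ List.range L.length, Rule S x (L.drop (i + 1)) (L.getD i (0, []))

theorem Valid_cons (S : Sys) (x : ℤ) (f : ℕ × List (ℤ × ℤ)) (L : List (ℕ × List (ℤ × ℤ))) :
    Valid S x (f :: L) ↔ Rule S x L f ∧ Valid S x L := by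
  unfold Valid
  simp only [List.mem_range, List.length_cons]
  constructor
  · intro h
    exact ⟨by simpa using h 0 (by omega), fun i hi => by simpa using h (i + 1) (by omega)⟩
  · rintro ⟨h1, h2⟩ i hi
    cases i with
    | zero => simpa using h1
    | succ i => simpa using h2 i (by omega)

theorem Rule.mono {S : Sys} {x : ℤ} {f : ℕ × List (ℤ × ℤ)} {L L' : List (ℕ × List (ℤ × ℤ))}
    (h : Rule S x L f) (hL : ∀ y ∈ L, y ∈ L') : Rule S x L' f := by
  obtain ⟨c, h1, h2, h3, h4⟩ := h
  exact ⟨c, h1, h2, fun i hi => hL _ (h3 i hi), h4⟩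

theorem Valid.append {S : Sys} {x : ℤ} {L L' : List (ℕ × List (ℤ × ℤ))}
    (h : Valid S x L) (h' : Valid S x L') : Valid S x (L ++ L') := by
  induction L with
  | nil => exact h'
  | cons f L ih =>
    rw [Valid_cons] at h
    rw [List.cons_append, Valid_cons]
    exact ⟨h.1.mono fun y hy => by simp [hy], ih h.2⟩

theorem toEnv_map_next (n : ℕ) (x : ℤ) (k : ℕ) (rs : ℕ → ℕ → ℤ × ℤ) (fs : List ℕ) :
    toEnv ((List.range n).map (next n x k rs fs)) = next n x k rs fs := by
  funext j
  by_cases h : j < n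
  · simp [toEnv, List.getD_eq_getElem?_getD, h]
  · simp [toEnv, List.getD_eq_getElem?_getD, h, next]

theorem Valid.reach {S : Sys} {x : ℤ} {L : List (ℕ × List (ℤ × ℤ))} (h : Valid S x L) :
    ∀ f ∈ L, Reach S x f.1 (toEnv f.2) := by
  induction L with
  | nil => simp
  | cons f L ih =>
    rw [Valid_cons] at h
    intro g hg
    rcases List.mem_cons.1 hg with rfl | hg
    · obtain ⟨c, h1, h2, h3, h4⟩ := h.1
      rw [h4, toEnv_map_next, ← h2]
      exact Reach.step c.1 h1 _ fun i hi => ih h.2 _ (h3 i hi)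
    · exact ih h.2 g hg

theorem Reach.valid {S : Sys} {x : ℤ} {q : ℕ} {w : ℕ → ℤ × ℤ} (h : Reach S x q w) :
    ∃ L l, Valid S x L ∧ (q, l) ∈ L ∧ toEnv l = w := by
  induction h with
  | step tr h rs hrs ih =>
    choose! Ls ls h1 h2 h3 using ih
    have key : ∀ k ≤ tr.1.length, ∃ L, Valid S x L ∧ ∀ i < k, ∀ y ∈ Ls i, y ∈ L := by
      intro k
      induction k with
      | zero => exact fun _ => ⟨[], by simp [Valid], by simp⟩
      | succ k ihk =>
        intro hk
        obtain ⟨L, hL, hL'⟩ := ihk (by omega)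
        refine ⟨L ++ Ls k, hL.append (h1 k (by omega)), fun i hi y hy => ?_⟩
        rcases Nat.lt_succ_iff_lt_or_eq.1 hi with hi | rfl
        · simp [hL' i hi y hy]
        · simp [hy]
    obtain ⟨L, hL, hL'⟩ := key _ le_rfl
    refine ⟨_ :: L, _, (Valid_cons _ _ _ _).2 ⟨⟨(tr, (List.range tr.1.length).map ls), h, rfl,
      ?_, rfl⟩, hL⟩, List.mem_cons_self, ?_⟩
    · intro i hi
      have : ((List.range tr.1.length).map ls).getD i [] = ls i := by
        simp [List.getD_eq_getElem?_getD, hi]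
      rw [this]
      exact hL' i hi _ (h2 i hi)
    · rw [toEnv_map_next]
      refine next_congr (fun i hi => ?_) _ _
      have : ((List.range tr.1.length).map ls).getD i [] = ls i := by
        simp [List.getD_eq_getElem?_getD, hi]
      rw [this, h3 i hi]

theorem pr_toEnv {α : Type} [Primcodable α] {l : α → List (ℤ × ℤ)} {j : α → ℕ} (hl : Primrec l)
    (hj : Primrec j) : Primrec (fun a => toEnv (l a) (j a)) := by
  unfold toEnv; fun_prop

theorem pr_next {α : Type} [Primcodable α] {n k j : α → ℕ} {x : α → ℤ} {fs : α → List ℕ}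
    {rs : α → List (List (ℤ × ℤ))} (hn : Primrec n) (hk : Primrec k) (hj : Primrec j)
    (hx : Primrec x) (hfs : Primrec fs) (hrs : Primrec rs) :
    Primrec (fun a => next (n a) (x a) (k a) (fun i => toEnv ((rs a).getD i [])) (fs a) (j a)) := by
  unfold next childEnv toEnv
  fun_prop

theorem pr_maps {α : Type} [Primcodable α] {n m k : α → ℕ} {x : α → ℤ} {fs : α → List ℕ}
    {rs : α → List (List (ℤ × ℤ))} (hm : Primrec m) (hn : Primrec n) (hk : Primrec k)
    (hx : Primrec x) (hfs : Primrec fs) (hrs : Primrec rs) :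
    Primrec (fun a => (List.range (m a)).map
      (next (n a) (x a) (k a) (fun i => toEnv ((rs a).getD i [])) (fs a))) := by
  refine pr_map (by fun_prop) ?_
  exact pr_next (hn.comp .fst) (hk.comp .fst) .snd (hx.comp .fst) (hfs.comp .fst) (hrs.comp .fst)

theorem se_Rule : SE (fun y : Sys × ℤ × List (ℕ × List (ℤ × ℤ)) × (ℕ × List (ℤ × ℤ)) =>
    Rule y.1 y.2.1 y.2.2.1 y.2.2.2) := by
  unfold Rule
  refine SE.ex (SE.of_pp ?_)
  refine PrimrecPred.and (pp_mem (by fun_prop) (by fun_prop)) (PrimrecPred.and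
    (pp_eq (by fun_prop) (by fun_prop)) (PrimrecPred.and ?_ ?_))
  · exact pp_all_lt (p := fun a i => _) (by fun_prop) (pp_mem (by fun_prop) (by fun_prop))
  · refine pp_eq (by fun_prop) (pr_maps ?_ ?_ ?_ ?_ ?_ ?_) <;> fun_prop

theorem se_not_Zero : SE (fun S : Sys => ¬ Zero S) := by
  have h : SE (fun S : Sys => ∃ c : ℤ × List (ℕ × List (ℤ × ℤ)), Valid S c.1 c.2 ∧
      ∃ f ∈ c.2, ∃ o ∈ S.2.2, o.1 = f.1 ∧ ¬ (ev c.1 (toEnv f.2) o.2).1 = 0) := by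
    refine SE.ex (SE.and ?_ (SE.of_pp ?_))
    · unfold Valid
      refine SE.all (p := fun (y : Sys × ℤ × List (ℕ × List (ℤ × ℤ))) i =>
        Rule y.1 y.2.1 (y.2.2.drop (i + 1)) (y.2.2.getD i (0, []))) (by fun_prop) ?_
      exact se_Rule.comp (f := fun (z : (Sys × ℤ × List (ℕ × List (ℤ × ℤ))) × ℕ) =>
        (z.1.1, z.1.2.1, z.1.2.2.drop (z.2 + 1), z.1.2.2.getD z.2 (0, []))) (by fun_prop)
    · unfold toEnv
      refine pp_ex (p := fun a f => _) (by fun_prop) (pp_ex (p := fun a f => _) (by fun_prop)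
        ((pp_eq (by fun_prop) (by fun_prop)).and (pp_eq (by fun_prop) (by fun_prop)).not))
  refine h.of_eq fun S => ?_
  rw [not_Zero_iff]
  constructor
  · rintro ⟨⟨x, L⟩, hL, f, hf, o, ho, e, hne⟩
    exact ⟨x, f.1, _, hL.reach f hf, o.2, by rw [← e]; exact ho, hne⟩
  · rintro ⟨x, q, w, hr, g, hg, hne⟩
    obtain ⟨L, l, hL, hl, rfl⟩ := hr.valid
    exact ⟨⟨x, L⟩, hL, _, hl, _, hg, rfl, hne⟩

end RAUCF

namespace RAUCF

/-! ### Polynomials vanishing on a product of sets -/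

section Tensor

open MvPolynomial

variable {V ι τ : Type} [CommRing V]

/-- The vanishing ideal of a set of points. -/
def Van (W : Set (τ → V)) : Ideal (MvPolynomial τ V) where
  carrier := {p | ∀ w ∈ W, eval w p = 0}
  zero_mem' := by simp
  add_mem' := fun {a b} ha hb w hw => by simp [ha w hw, hb w hw]
  smul_mem' := fun c a ha w hw => by simp [ha w hw]

theorem mem_Van {W : Set (τ → V)} {p : MvPolynomial τ V} :
    p ∈ Van W ↔ ∀ w ∈ W, eval w p = 0 := Iff.rfl

/-- Evaluation of `b` does not depend on the `i`-th block of variables. -/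
def Indep (i : ι) (b : MvPolynomial (ι × τ) V) : Prop :=
  ∀ w w' : ι × τ → V, (∀ j, j ≠ i → ∀ t, w (j, t) = w' (j, t)) → eval w b = eval w' b

/-- The polynomial `∑ a * b`, where the `a` are polynomials in the `i`-th block of variables. -/
noncomputable def tsum (i : ι) (L : List (MvPolynomial τ V × MvPolynomial (ι × τ) V)) :
    MvPolynomial (ι × τ) V :=
  (L.map fun p => rename (fun t => (i, t)) p.1 * p.2).sum

theorem exists_tsum (i : ι) (F : MvPolynomial (ι × τ) V) :
    ∃ L, F = tsum i L ∧ ∀ p ∈ L, Indep i p.2 := by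
  classical
  induction F using MvPolynomial.induction_on with
  | C a => exact ⟨[(1, C a)], by simp [tsum], by simp [Indep]⟩
  | add p q hp hq =>
    obtain ⟨L, rfl, hL⟩ := hp
    obtain ⟨L', rfl, hL'⟩ := hq
    refine ⟨L ++ L', by simp [tsum], fun p hp => ?_⟩
    rcases List.mem_append.1 hp with h | h
    exacts [hL p h, hL' p h]
  | mul_X p jt hp =>
    obtain ⟨L, rfl, hL⟩ := hp
    obtain ⟨j, t⟩ := jt
    by_cases h : j = i
    · subst h
      refine ⟨L.map fun p => (p.1 * X t, p.2), ?_, ?_⟩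
      · simp only [tsum, List.map_map, ← List.sum_map_mul_right]
        congr 2
        funext p
        simp; ring
      · intro p hp
        obtain ⟨y, hy, rfl⟩ := List.mem_map.1 hp
        exact hL y hy
    · refine ⟨L.map fun p => (p.1, p.2 * X (j, t)), ?_, ?_⟩
      · simp only [tsum, List.map_map, ← List.sum_map_mul_right]
        congr 2
        funext p
        simp; ring
      · intro p hp
        obtain ⟨y, hy, rfl⟩ := List.mem_map.1 hp
        intro w w' hw
        simp [hL y hy w w' hw, hw j h t]

theorem eval_tsum (i : ι) (L : List (MvPolynomial τ V × MvPolynomial (ι × τ) V)) (w : ι × τ → V) :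
    eval w (tsum i L) = (L.map fun p => eval (fun t => w (i, t)) p.1 * eval w p.2).sum := by
  unfold tsum
  rw [map_list_sum, List.map_map]
  congr 2
  funext p
  simp [eval_rename, Function.comp_def]

/-- A polynomial vanishing on a product of sets lies, up to a nonzero constant factor, in the ideal
generated by the vanishing ideals of the factors. -/
theorem tensor [IsDomain V] [Infinite V] (W : ι → Set (τ → V)) (s : Finset ι) :
    ∀ F : MvPolynomial (ι × τ) V,
      (∀ w : ι × τ → V, (∀ i ∈ s, (fun t => w (i, t)) ∈ W i) → eval w F = 0) →
      ∃ d : V, d ≠ 0 ∧ C d * F ∈ ⨆ i ∈ s, (Van (W i)).map (rename (R := V) fun t => (i, t)) := by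
  classical
  induction s using Finset.induction_on with
  | empty =>
    intro F hF
    have : F = 0 := MvPolynomial.funext fun w => by simpa using hF w (by simp)
    exact ⟨1, one_ne_zero, by simp [this]⟩
  | insert i s his ih =>
    set J := ⨆ j ∈ insert i s, (Van (W j)).map (rename (R := V) fun t => (j, t)) with hJ
    have hiJ : (Van (W i)).map (rename (R := V) fun t => (i, t)) ≤ J :=
      le_iSup₂_of_le i (Finset.mem_insert_self i s) le_rfl
    have hsJ : (⨆ j ∈ s, (Van (W j)).map (rename (R := V) fun t => (j, t))) ≤ J :=
      iSup₂_le fun j hj => le_iSup₂_of_le j (Finset.mem_insert_of_mem hj) le_rfl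
    have key : ∀ n, ∀ L : List (MvPolynomial τ V × MvPolynomial (ι × τ) V), L.length = n →
        (∀ p ∈ L, Indep i p.2) →
        (∀ w : ι × τ → V, (∀ j ∈ insert i s, (fun t => w (j, t)) ∈ W j) →
          eval w (tsum i L) = 0) → ∃ d : V, d ≠ 0 ∧ C d * tsum i L ∈ J := by
      intro n
      induction n with
      | zero =>
        intro L hL _ _
        rw [List.length_eq_zero_iff] at hL
        subst hL
        exact ⟨1, one_ne_zero, by simp [tsum]⟩
      | succ n ihn =>
        intro L hLn hL hF
        by_cases hall : ∀ p ∈ L, p.1 ∈ Van (W i)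
        · refine ⟨1, one_ne_zero, ?_⟩
          rw [C_1, one_mul]
          refine list_sum_mem fun y hy => ?_
          obtain ⟨p, hp, rfl⟩ := List.mem_map.1 hy
          exact J.mul_mem_right _ (hiJ (Ideal.mem_map_of_mem _ (hall p hp)))
        · push Not at hall
          obtain ⟨p, hp, hpv⟩ := hall
          rw [mem_Van] at hpv
          push Not at hpv
          obtain ⟨v, hv, hne⟩ := hpv
          obtain ⟨l₁, l₂, rfl⟩ := List.append_of_mem hp
          set G : MvPolynomial (ι × τ) V :=
            ((l₁ ++ p :: l₂).map fun y => C (eval v y.1) * y.2).sum with hG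
          have hG0 : ∀ w : ι × τ → V, (∀ j ∈ s, (fun t => w (j, t)) ∈ W j) → eval w G = 0 := by
            intro w hw
            -- replace the block `i` of `w` by `v`
            set w' : ι × τ → V := fun y => if y.1 = i then v y.2 else w y with hw'
            have h1 := hF w' (by
              intro j hj
              rcases Finset.mem_insert.1 hj with rfl | hj
              · simpa [hw'] using hv
              · have : j ≠ i := fun h => his (h ▸ hj)
                simpa [hw', this] using hw j hj)
            rw [eval_tsum] at h1
            rw [hG, map_list_sum, List.map_map, ← h1]
            congr 1
            refine List.map_congr_left fun y hy => ?_
            simp only [Function.comp_apply, map_mul, eval_C]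
            rw [hL y hy w w' fun j hj t => by simp [hw', hj]]
            simp [hw']
          obtain ⟨d', hd', hd'J⟩ := ih G hG0
          set L'' := (l₁ ++ l₂).map fun y => (C (eval v p.1) * y.1 - C (eval v y.1) * p.1, y.2)
            with hL''
          have hid : tsum i L'' = C (eval v p.1) * tsum i (l₁ ++ p :: l₂)
              - rename (fun t => (i, t)) p.1 * G := by
            have aux : ∀ l : List (MvPolynomial τ V × MvPolynomial (ι × τ) V),
                tsum i (l.map fun y => (C (eval v p.1) * y.1 - C (eval v y.1) * p.1, y.2)) =
                C (eval v p.1) * tsum i l - rename (fun t => (i, t)) p.1 *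
                  (l.map fun y => C (eval v y.1) * y.2).sum := by
              intro l
              induction l with
              | nil => simp [tsum]
              | cons y l ihl =>
                simp only [tsum, List.map_cons, List.sum_cons, map_sub, map_mul, rename_C] at ihl ⊢
                rw [ihl]; ring
            rw [hL'', aux, hG]
            simp only [tsum, List.map_append, List.sum_append, List.map_cons, List.sum_cons]
            ring
          obtain ⟨d'', hd'', hd''J⟩ := ihn L'' (by simp [hL''] at hLn ⊢; omega)
            (by
              intro y hy
              obtain ⟨z, hz, rfl⟩ := List.mem_map.1 hy
              refine hL z ?_
              simp only [List.mem_append, List.mem_cons] at hz ⊢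
              tauto)
            (by
              intro w hw
              rw [hid, map_sub, map_mul, map_mul, hF w hw,
                hG0 w fun j hj => hw j (Finset.mem_insert_of_mem hj)]
              simp)
          refine ⟨d'' * d' * eval v p.1, mul_ne_zero (mul_ne_zero hd'' hd') hne, ?_⟩
          have : C (d'' * d' * eval v p.1) * tsum i (l₁ ++ p :: l₂) =
              C d' * (C d'' * tsum i L'') +
                (C d'' * rename (fun t => (i, t)) p.1) * (C d' * G) := by
            rw [hid]; simp only [C_mul]; ring
          rw [this]
          exact J.add_mem (J.mul_mem_left _ hd''J) (J.mul_mem_left _ (hsJ hd'J))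
    intro F hF
    obtain ⟨L, rfl, hL⟩ := exists_tsum i F
    exact key _ L rfl hL hF

end Tensor

/-! ### Terms for polynomials -/

open MvPolynomial in
/-- Every polynomial over `ℤ[x]` in coordinates given by terms is itself given by a term. -/
theorem exists_code {κ : Type} (cc : κ → ℕ) (P : MvPolynomial κ (Polynomial ℤ)) :
    ∃ c : ℕ, ∀ (R : Type) [CommRing R] (x : R) (v : ℕ → R × R), (ev x v c).1 =
      eval₂ (Polynomial.eval₂RingHom (Int.castRingHom R) x) (fun i => (ev x v (cc i)).1) P := by
  induction P using MvPolynomial.induction_on with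
  | C a =>
    simp only [eval₂_C]
    induction a using Polynomial.induction_on with
    | C a =>
      simp only [Polynomial.coe_eval₂RingHom, Polynomial.eval₂_C]
      induction a using Int.induction_on with
      | zero => exact ⟨cZero, fun R _ x v => by simp⟩
      | succ i ih =>
        obtain ⟨c, hc⟩ := ih
        exact ⟨cAdd c cOne, fun R _ x v => by simp [hc]⟩
      | pred i ih =>
        obtain ⟨c, hc⟩ := ih
        exact ⟨cSub c cOne, fun R _ x v => by simp [hc]⟩
    | add p q hp hq =>
      obtain ⟨c, hc⟩ := hp
      obtain ⟨c', hc'⟩ := hq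
      exact ⟨cAdd c c', fun R _ x v => by simp [hc, hc', Polynomial.eval₂_add]⟩
    | monomial n a h =>
      obtain ⟨c, hc⟩ := h
      refine ⟨cMul c cX, fun R _ x v => ?_⟩
      rw [ev_cMul, hc, ev_cX, pow_succ, ← mul_assoc, map_mul (Polynomial.eval₂RingHom _ _) _ Polynomial.X]
      simp
  | add p q hp hq =>
    obtain ⟨c, hc⟩ := hp
    obtain ⟨c', hc'⟩ := hq
    exact ⟨cAdd c c', fun R _ x v => by simp [hc, hc', eval₂_add]⟩
  | mul_X p i hp =>
    obtain ⟨c, hc⟩ := hp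
    exact ⟨cMul c (cc i), fun R _ x v => by simp [hc, eval₂_mul]⟩

end RAUCF

namespace RAUCF

/-! ### Certificates for vanishing outputs -/

/-- The `n` registers of child `i` as terms. -/
def blockSub (n i j : ℕ) : ℕ := if j < n then cVar (i * n + j) else cZero

/-- The registers after a transition as terms in the registers of the `k` children. -/
def nextSub (n k : ℕ) (fs : List ℕ) (j : ℕ) : ℕ :=
  if j < n then sb (fun m => if m < k * n then cVar m else cZero) (fs.getD j 0) else cZero

/-- The term `∑ c * h(registers of child i)` over the triples `(c, i, h)` of the list. -/
def comb (n : ℕ) (L : List (ℕ × ℕ × ℕ)) : ℕ :=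
  L.foldr (fun t acc => cAdd (cMul t.1 (sb (blockSub n t.2.1) t.2.2)) acc) cZero

/-- A term without variables. -/
def closeTerm (d : ℕ) : ℕ := sb (fun _ => cZero) d

/-- For a transition `tr` and a term `g`: a nonzero multiple of `g` after the transition is a
combination of the terms that `E` assigns to the children. -/
def Cert1 (n : ℕ) (E : List (ℕ × ℕ)) (tr : List ℕ × ℕ × List ℕ) (g : ℕ)
    (w : ℕ × ℤ × List (ℕ × ℕ × ℕ)) : Prop :=
  ¬ (ev w.2.1 (fun _ => 0) w.1).1 = 0 ∧
  (∀ t ∈ w.2.2, t.2.1 < tr.1.length ∧ (tr.1.getD t.2.1 0, t.2.2) ∈ E) ∧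
  PEq (cMul (closeTerm w.1) (sb (nextSub n tr.1.length tr.2.2) g)) (comb n w.2.2)

/-- The list `E` of pairs (state, term) is inductive and contains the outputs of `S`. -/
def Cert (S : Sys) (E : List (ℕ × ℕ)) : Prop :=
  (∀ o ∈ S.2.2, o ∈ E) ∧
  ∀ tr ∈ S.2.1, ∀ o ∈ E, ∃ w, o.1 ≠ tr.2.1 ∨ Cert1 S.1 E tr o.2 w

section

variable {R : Type} [CommRing R]

theorem childEnv_eq {n k : ℕ} {rs rs' : ℕ → ℕ → R × R} (h : ∀ i < k, ∀ j < n, rs i j = rs' i j) :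
    childEnv n k rs = childEnv n k rs' := by
  funext m
  unfold childEnv
  split_ifs with hm
  · have hn : 0 < n := Nat.pos_of_ne_zero (by rintro rfl; simp at hm)
    exact h _ (Nat.div_lt_of_lt_mul (by rwa [mul_comm] at hm)) _ (Nat.mod_lt _ hn)
  · rfl

theorem next_eq {n k : ℕ} {rs rs' : ℕ → ℕ → R × R} (h : ∀ i < k, ∀ j < n, rs i j = rs' i j) (x : R)
    (fs : List ℕ) : next n x k rs fs = next n x k rs' fs := by
  unfold next; rw [childEnv_eq h]

theorem Reach.zero_of_ge {S : Sys} {x : R} {q : ℕ} {v : ℕ → R × R} (h : Reach S x q v) (j : ℕ)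
    (hj : S.1 ≤ j) : v j = 0 := by
  cases h
  simp [next, Nat.not_lt.2 hj]

theorem childEnv_block {n k : ℕ} (rs : ℕ → ℕ → R × R) {i j : ℕ} (hi : i < k) (hj : j < n) :
    childEnv n k rs (i * n + j) = rs i j := by
  have h1 : i * n + j < k * n := by nlinarith
  have h2 : (i * n + j) / n = i := by
    rw [mul_comm, Nat.mul_add_div (by omega), Nat.div_eq_of_lt hj, add_zero]
  have h3 : (i * n + j) % n = j := by
    rw [mul_comm, Nat.mul_add_mod, Nat.mod_eq_of_lt hj]
  simp [childEnv, h1, h2, h3]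

theorem ev_nextSub (x : R) (v : ℕ → R × R) (n k : ℕ) (fs : List ℕ) (g : ℕ) :
    ev x v (sb (nextSub n k fs) g) = ev x (next n x k (fun i j => v (i * n + j)) fs) g := by
  rw [ev_sb]
  congr 1
  funext j
  unfold nextSub next
  split_ifs
  · rw [ev_sb]
    congr 1
    funext m
    unfold childEnv
    split_ifs
    · rw [ev_cVar]
      exact congrArg v (Nat.div_add_mod' m n).symm
    · simp
  · simp

/-- The registers of child `i`, read off a flat environment. -/
def block (n : ℕ) (v : ℕ → R × R) (i j : ℕ) : R × R := if j < n then v (i * n + j) else 0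

theorem ev_blockSub (x : R) (v : ℕ → R × R) (n i : ℕ) (g : ℕ) :
    ev x v (sb (blockSub n i) g) = ev x (block n v i) g := by
  rw [ev_sb]
  congr 1
  funext j
  unfold blockSub block
  split_ifs <;> simp

theorem ev_comb (x : R) (v : ℕ → R × R) (n : ℕ) (L : List (ℕ × ℕ × ℕ)) :
    (ev x v (comb n L)).1 =
      (L.map fun t => (ev x v t.1).1 * (ev x (block n v t.2.1) t.2.2).1).sum := by
  induction L with
  | nil => simp [comb]
  | cons t L ih =>
    have : comb n (t :: L) = cAdd (cMul t.1 (sb (blockSub n t.2.1) t.2.2)) (comb n L) := rfl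
    rw [this, ev_cAdd, ih, ev_cMul, ev_blockSub]
    simp

theorem ev_closeTerm (x : R) (v : ℕ → R × R) (d : ℕ) :
    ev x v (closeTerm d) = ev x (fun _ => 0) d := by
  rw [closeTerm, ev_sb]; simp

end

open Polynomial in
/-- Terms of a certificate vanish on all reachable configurations, by induction on runs: the
constant factor in an inductive step is nonzero and `ℤ[x]` is a domain. -/
theorem Cert.sound {S : Sys} {E : List (ℕ × ℕ)} (hE : Cert S E) {q : ℕ} {v : ℕ → ℤ[X] × ℤ[X]}
    (h : Reach S X q v) : ∀ g, (q, g) ∈ E → (ev X v g).1 = 0 := by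
  induction h with
  | step tr htr rs hrs ih =>
    intro g hg
    obtain ⟨⟨d, x0, L⟩, hw⟩ := hE.2 tr htr _ hg
    obtain ⟨h1, h2, h3⟩ := hw.resolve_left (fun h => h rfl)
    dsimp only at h1 h2 h3
    have h4 := PEq_universal h3 (X : ℤ[X]) (childEnv S.1 tr.1.length rs)
    rw [ev_cMul, ev_closeTerm, ev_nextSub, ev_comb,
      next_eq (rs' := rs) (fun i hi j hj => childEnv_block rs hi hj)] at h4
    have h5 : (ev (X : ℤ[X]) (fun _ => 0) d).1 ≠ 0 := by
      intro h0
      apply h1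
      have := ev_mapEnv (Polynomial.evalRingHom x0) X (fun _ => 0) d
      rw [h0] at this
      have e : mapEnv (Polynomial.evalRingHom x0) (fun _ => 0) = fun _ => 0 := by
        funext j; simp [mapEnv]
      rw [e] at this
      simpa using congrArg Prod.fst this
    have h6 : (L.map fun t => (ev (X : ℤ[X]) (childEnv S.1 tr.1.length rs) t.1).1 *
        (ev X (block S.1 (childEnv S.1 tr.1.length rs) t.2.1) t.2.2).1).sum = 0 := by
      refine List.sum_eq_zero fun y hy => ?_
      obtain ⟨t, ht, rfl⟩ := List.mem_map.1 hy
      obtain ⟨hi, hm⟩ := h2 t ht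
      have : block S.1 (childEnv S.1 tr.1.length rs) t.2.1 = rs t.2.1 := by
        funext j
        unfold block
        split_ifs with hj
        · exact childEnv_block rs hi hj
        · exact ((hrs _ hi).zero_of_ge j (by omega)).symm
      rw [this, ih _ hi _ hm, mul_zero]
    rw [h6] at h4
    exact (mul_eq_zero.1 h4).resolve_left h5

section Complete

open MvPolynomial

/-- Coordinates of a configuration with `n` registers. -/
def toPt {V : Type} (n : ℕ) (v : ℕ → V × V) (t : Fin n × Bool) : V :=
  if t.2 then (v t.1).2 else (v t.1).1

/-- Generic register values, as the images of the variables under `f`. -/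
noncomputable def genReg {V : Type} [CommRing V] (n : ℕ) (f : Fin n × Bool → V) (j : ℕ) : V × V :=
  if h : j < n then (f (⟨j, h⟩, false), f (⟨j, h⟩, true)) else 0

theorem genReg_toPt {V : Type} [CommRing V] {n : ℕ} {v : ℕ → V × V} (hv : ∀ j, n ≤ j → v j = 0) :
    genReg n (toPt n v) = v := by
  funext j
  unfold genReg
  split_ifs with h
  · simp [toPt]
  · exact (hv j (by omega)).symm

theorem mapEnv_genReg {V V' : Type} [CommRing V] [CommRing V'] (φ : V →+* V') (n : ℕ)
    (f : Fin n × Bool → V) : mapEnv φ (genReg n f) = genReg n (fun t => φ (f t)) := by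
  funext j
  unfold mapEnv genReg
  split_ifs <;> simp

/-- The term of a coordinate of the registers of child `i`. -/
def cCoord (n i : ℕ) (t : Fin n × Bool) : ℕ :=
  if t.2 then cSnd (cVar (i * n + t.1)) else cVar (i * n + t.1)

theorem ev_cCoord {R : Type} [CommRing R] (x : R) (v : ℕ → R × R) (n i : ℕ) (t : Fin n × Bool) :
    (ev x v (cCoord n i t)).1 = toPt n (block n v i) t := by
  unfold cCoord toPt block
  split_ifs <;> simp_all

theorem genReg_block {R : Type} [CommRing R] (n i : ℕ) (v : ℕ → R × R) :
    genReg n (toPt n (block n v i)) = block n v i :=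
  genReg_toPt fun j hj => by simp [block, Nat.not_lt.2 hj]

/-- Membership in a sum of extended ideals, in terms of generators. -/
theorem exists_list_of_mem {K A B ι : Type} [CommRing K] [CommRing A] [CommRing B] [Algebra K A]
    [Algebra K B] (f : ι → A →ₐ[K] B)
    (G : ι → Set A) (s : Finset ι) (y : B)
    (hy : y ∈ ⨆ i ∈ s, (Ideal.span (G i)).map (f i)) :
    ∃ L : List (B × ι × A), (∀ t ∈ L, t.2.2 ∈ G t.2.1) ∧
      y = (L.map fun t => t.1 * f t.2.1 t.2.2).sum := by
  have h : (⨆ i ∈ s, (Ideal.span (G i)).map (f i)) ≤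
      Ideal.span {y | ∃ i, ∃ a ∈ G i, y = f i a} := by
    refine iSup₂_le fun i _ => ?_
    rw [Ideal.map_span]
    refine Ideal.span_mono ?_
    rintro _ ⟨a, ha, rfl⟩
    exact ⟨i, a, ha, rfl⟩
  replace hy := h hy
  clear h
  induction hy using Submodule.span_induction with
  | mem y hy =>
    obtain ⟨i, a, ha, rfl⟩ := hy
    exact ⟨[(1, i, a)], by simpa using ha, by simp⟩
  | zero => exact ⟨[], by simp, by simp⟩
  | add y z _ _ hy hz =>
    obtain ⟨L, hL, e⟩ := hy
    obtain ⟨L', hL', e'⟩ := hz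
    refine ⟨L ++ L', fun t ht => ?_, by simp [e, e']⟩
    rcases List.mem_append.1 ht with h | h
    exacts [hL t h, hL' t h]
  | smul c y _ hy =>
    obtain ⟨L, hL, e⟩ := hy
    refine ⟨L.map fun t => (c * t.1, t.2), fun t ht => ?_, ?_⟩
    · obtain ⟨u, hu, rfl⟩ := List.mem_map.1 ht
      exact hL u hu
    · rw [e, smul_eq_mul, ← List.sum_map_mul_left, List.map_map]
      congr 2
      funext t
      simp [mul_assoc]

theorem eval₂_id_aux (x : Polynomial ℤ) :
    (Polynomial.eval₂RingHom (Int.castRingHom (Polynomial ℤ)) Polynomial.X) x = x := by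
  have : Int.castRingHom (Polynomial ℤ) = Polynomial.C := RingHom.ext_int _ _
  rw [Polynomial.coe_eval₂RingHom, this, Polynomial.eval₂_C_X]

theorem block_block {R : Type} [CommRing R] (n i : ℕ) (v : ℕ → R × R) :
    block n (block n v i) 0 = block n v i := by
  funext j
  by_cases h : j < n <;> simp [block, h]

/-- Generators of the vanishing ideals of the sets of reachable configurations form a
certificate. -/
theorem Zero.cert {S : Sys} (hS : Zero S) : ∃ E, Cert S E := by
  classical
  set n := S.1 with hn
  let W : ℕ → Set (Fin n × Bool → Polynomial ℤ) := fun q =>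
    {w | ∃ v, Reach S Polynomial.X q v ∧ w = toPt n v}
  have hG : ∀ q, ∃ G : Finset (MvPolynomial (Fin n × Bool) (Polynomial ℤ)),
      Ideal.span (G : Set _) = Van (W q) := fun q => IsNoetherian.noetherian (Van (W q))
  choose G hG using hG
  choose cd hcd using fun P : MvPolynomial (Fin n × Bool) (Polynomial ℤ) =>
    exists_code (cCoord n 0) P
  set E : List (ℕ × ℕ) := S.2.2 ++ (S.2.1.flatMap fun tr => tr.1).flatMap fun q =>
    (G q).toList.map fun P => (q, cd P) with hE
  have hEv : ∀ q g, (q, g) ∈ E → ∀ v, Reach S Polynomial.X q v →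
      (ev (Polynomial.X : Polynomial ℤ) v g).1 = 0 := by
    intro q g hg v hv
    rcases List.mem_append.1 hg with h | h
    · exact hS q v hv g h
    · obtain ⟨q', -, h⟩ := List.mem_flatMap.1 h
      obtain ⟨P, hP, e⟩ := List.mem_map.1 h
      simp only [Prod.mk.injEq] at e
      obtain ⟨rfl, rfl⟩ := e
      have h0 : P ∈ Van (W q') := by
        rw [← hG]; exact Ideal.subset_span (by simpa using hP)
      have e1 : block n v 0 = v := by
        funext j
        unfold block
        split_ifs with hj
        · simp
        · exact (hv.zero_of_ge j (by omega)).symm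
      have e2 : Polynomial.eval₂RingHom (Int.castRingHom (Polynomial ℤ)) Polynomial.X =
          RingHom.id _ := RingHom.ext eval₂_id_aux
      rw [hcd, e2, eval₂_id]
      simp only [ev_cCoord, e1]
      exact h0 _ ⟨v, hv, rfl⟩
  refine ⟨E, fun o ho => List.mem_append_left _ ho, ?_⟩
  rintro ⟨qs, q, fs⟩ htr ⟨q', g⟩ ho
  by_cases hq : q' = q
  swap
  · exact ⟨(0, 0, []), Or.inl hq⟩
  subst hq
  set k := qs.length with hk
  let rsG : ℕ → ℕ → MvPolynomial (Fin k × Fin n × Bool) (Polynomial ℤ) ×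
      MvPolynomial (Fin k × Fin n × Bool) (Polynomial ℤ) := fun i =>
    if h : i < k then genReg n (fun t => X (⟨i, h⟩, t)) else 0
  set F : MvPolynomial (Fin k × Fin n × Bool) (Polynomial ℤ) :=
    (ev (C Polynomial.X) (next n (C Polynomial.X) k rsG fs) g).1 with hFdef
  have hF : ∀ w : Fin k × Fin n × Bool → Polynomial ℤ,
      (∀ i ∈ (Finset.univ : Finset (Fin k)), (fun t => w (i, t)) ∈ W (qs.getD i 0)) → eval w F = 0 := by
    intro w hw
    choose rs hrs e using fun i : Fin k => hw i (Finset.mem_univ i)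
    let rs' : ℕ → ℕ → Polynomial ℤ × Polynomial ℤ := fun i => if h : i < k then rs ⟨i, h⟩ else 0
    have h1 := Reach.step (qs, q', fs) htr rs' (fun i hi => by
      have : rs' i = rs ⟨i, hi⟩ := dif_pos hi
      rw [this]; exact hrs ⟨i, hi⟩)
    have h2 := hEv _ _ ho _ h1
    have h3 := ev_mapEnv (eval w) (C Polynomial.X) (next n (C Polynomial.X) k rsG fs) g
    rw [mapEnv_next, eval_C, next_congr (rs' := rs')] at h3
    · rw [hFdef, ← h2]
      exact (congrArg Prod.fst h3).symm
    · intro i hi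
      have e1 : rs' i = rs ⟨i, hi⟩ := dif_pos hi
      have e2 : rsG i = genReg n (fun t => X (⟨i, hi⟩, t)) := dif_pos hi
      rw [e1, e2, mapEnv_genReg]
      simp only [eval_X]
      rw [e, genReg_toPt]
      exact (hrs _).zero_of_ge
  obtain ⟨d, hd, hmem⟩ := tensor (fun i : Fin k => W (qs.getD i 0)) Finset.univ F hF
  simp only [← hG] at hmem
  obtain ⟨L, hL, hsum⟩ := exists_list_of_mem
    (fun i : Fin k => rename (R := Polynomial ℤ) fun t : Fin n × Bool => (i, t))
    (fun i : Fin k => (G (qs.getD i 0) : Set (MvPolynomial (Fin n × Bool) (Polynomial ℤ)))) _ _ hmem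
  choose cd2 hcd2 using fun P : MvPolynomial (Fin k × Fin n × Bool) (Polynomial ℤ) =>
    exists_code (fun it : Fin k × Fin n × Bool => cCoord n it.1 it.2) P
  obtain ⟨x0, hx0⟩ : ∃ x0 : ℤ, d.eval x0 ≠ 0 := by
    by_contra! H
    exact hd (Polynomial.funext fun x => by simpa using H x)
  refine ⟨(cd2 (C d), x0, L.map fun t => (cd2 t.1, t.2.1, cd t.2.2)), Or.inr ⟨?_, ?_, ?_⟩⟩
  · rw [hcd2, eval₂_C, Polynomial.coe_eval₂RingHom]
    have : Int.castRingHom ℤ = RingHom.id ℤ := RingHom.ext_int _ _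
    rw [this]
    exact hx0
  · intro t ht
    obtain ⟨u, hu, rfl⟩ := List.mem_map.1 ht
    refine ⟨u.2.1.2, List.mem_append_right _ (List.mem_flatMap.2 ⟨qs.getD u.2.1 0, ?_, ?_⟩)⟩
    · refine List.mem_flatMap.2 ⟨_, htr, ?_⟩
      have : (u.2.1 : ℕ) < qs.length := u.2.1.2
      simp [List.getD_eq_getElem?_getD, this]
    · exact List.mem_map.2 ⟨u.2.2, by simpa using hL u hu, rfl⟩
  · have main : ∀ (x : ℤ) (v : ℕ → ℤ × ℤ),
        (ev x v (cMul (closeTerm (cd2 (C d))) (sb (nextSub n k fs) g))).1 =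
        (ev x v (comb n (L.map fun t => (cd2 t.1, (t.2.1 : ℕ), cd t.2.2)))).1 := by
      intro x v
      set Ψ := eval₂Hom (Polynomial.eval₂RingHom (Int.castRingHom ℤ) x)
        (fun it : Fin k × Fin n × Bool => toPt n (block n v it.1) it.2) with hΨ
      have e1 : ∀ P, (ev x v (cd2 P)).1 = Ψ P := by
        intro P
        rw [hcd2]
        simp only [ev_cCoord]
        rfl
      have e2 : ∀ (i : Fin k) P, (ev x (block n v i) (cd P)).1 =
          Ψ (rename (fun t => (i, t)) P) := by
        intro i P
        rw [hcd]
        simp only [ev_cCoord, block_block]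
        rw [hΨ, eval₂Hom_rename]
        rfl
      have e3 : (ev x (next n x k (fun i j => v (i * n + j)) fs) g).1 = Ψ F := by
        have h3 := ev_mapEnv Ψ (C Polynomial.X) (next n (C Polynomial.X) k rsG fs) g
        have hX : Ψ (C Polynomial.X) = x := by simp [hΨ]
        rw [mapEnv_next, hX] at h3
        rw [hFdef, next_eq (rs' := fun i => mapEnv Ψ (rsG i))]
        · exact congrArg Prod.fst h3
        · intro i hi j hj
          have e2 : rsG i = genReg n (fun t => X (⟨i, hi⟩, t)) := dif_pos hi
          rw [e2, mapEnv_genReg]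
          simp only [hΨ, coe_eval₂Hom, eval₂_X]
          rw [genReg_block]
          simp [block, hj]
      rw [ev_cMul, ev_closeTerm, ev_nextSub, ev_comb, e3, List.map_map]
      have e4 : (ev x (fun _ => 0) (cd2 (C d))).1 = Ψ (C d) := by
        rw [hcd2, hΨ]; simp
      rw [e4, ← map_mul, hsum, map_list_sum, List.map_map]
      congr 1
      refine List.map_congr_left fun t _ => ?_
      simp only [Function.comp_apply, map_mul]
      rw [e1, e2]
    exact fun e _ => main _ _

theorem Zero_iff (S : Sys) : Zero S ↔ ∃ E, Cert S E :=
  ⟨Zero.cert, fun ⟨_, hE⟩ _ _ hv _ hg => hE.sound hv _ (hE.1 _ hg)⟩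

end Complete

theorem pr_comb {α : Type} [Primcodable α] {n : α → ℕ} {L : α → List (ℕ × ℕ × ℕ)}
    (hn : Primrec n) (hL : Primrec L) : Primrec (fun a => comb (n a) (L a)) := by
  unfold comb blockSub cZero
  fun_prop

theorem pr_nextSub {α : Type} [Primcodable α] {n k g : α → ℕ} {fs : α → List ℕ}
    (hn : Primrec n) (hk : Primrec k) (hfs : Primrec fs) (hg : Primrec g) :
    Primrec (fun a => sb (nextSub (n a) (k a) (fs a)) (g a)) := by
  unfold nextSub cZero
  fun_prop

theorem pp_Cert1 : PrimrecPred (fun y : (ℕ × List (ℕ × ℕ) × (List ℕ × ℕ × List ℕ) × ℕ) ×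
    (ℕ × ℤ × List (ℕ × ℕ × ℕ)) => Cert1 y.1.1 y.1.2.1 y.1.2.2.1 y.1.2.2.2 y.2) := by
  unfold Cert1
  refine ((pp_eq (by fun_prop) (by fun_prop)).not).and (.and ?_ ?_)
  · exact pp_all (p := fun a t => _) (by fun_prop)
      ((pp_lt (by fun_prop) (by fun_prop)).and (pp_mem (by fun_prop) (by fun_prop)))
  · unfold closeTerm
    refine pp_PEq (pr_cMul (by fun_prop) (pr_nextSub ?_ ?_ ?_ ?_)) (pr_comb ?_ ?_) <;> fun_prop

theorem se_Zero : SE Zero := by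
  have h : SE (fun S : Sys => ∃ E, Cert S E) := by
    unfold Cert
    refine SE.ex (SE.and (SE.of_pp (pp_all (p := fun a o => _) (by fun_prop)
      (pp_mem (by fun_prop) (by fun_prop)))) ?_)
    refine SE.all (p := fun (y : Sys × List (ℕ × ℕ)) (tr : List ℕ × ℕ × List ℕ) =>
      ∀ o ∈ y.2, ∃ w, o.1 ≠ tr.2.1 ∨ Cert1 y.1.1 y.2 tr o.2 w) (by fun_prop) ?_
    refine SE.all (p := fun (z : (Sys × List (ℕ × ℕ)) × (List ℕ × ℕ × List ℕ)) (o : ℕ × ℕ) =>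
      ∃ w, o.1 ≠ z.2.2.1 ∨ Cert1 z.1.1.1 z.1.2 z.2 o.2 w) (by fun_prop) ?_
    refine SE.ex (SE.of_pp (.or (.not (pp_eq (by fun_prop) (by fun_prop))) ?_))
    exact pp_Cert1.comp (f := fun (u : (((Sys × List (ℕ × ℕ)) × (List ℕ × ℕ × List ℕ)) × (ℕ × ℕ)) ×
      (ℕ × ℤ × List (ℕ × ℕ × ℕ))) =>
        ((u.1.1.1.1.1, u.1.1.1.2, u.1.1.2, u.1.2.2), u.2)) (by fun_prop)
  exact h.of_eq fun S => (Zero_iff S).symm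

theorem computable_Zero : ComputablePred Zero := by
  classical
  exact ComputablePred.computable_iff_re_compl_re'.2 ⟨se_Zero.re, se_not_Zero.re⟩

end RAUCF

namespace RAUCF

/-! ### Encoding forests and contexts by polynomials -/

section Phi

open Polynomial

/-- The encoding of forests by monic polynomials over `ℤ`. -/
noncomputable def phiZ : PF → ℤ[X]
  | .empty => 1
  | .node c r => (2 + X * phiZ c) * phiZ r

/-- The encoding of a tree with children `c`. -/
noncomputable def phiT (c : PF) : ℤ[X] := 2 + X * phiZ c

theorem phiZ_node (c r : PF) : phiZ (.node c r) = phiT c * phiZ r := rfl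

theorem phiZ_monic (h : PF) : (phiZ h).Monic := by
  induction h with
  | empty => exact monic_one
  | node c r ihc ihr =>
    refine Monic.mul ?_ ihr
    rw [add_comm]
    refine (monic_X.mul ihc).add_of_left ?_
    have h2 : (2 : ℤ[X]) = C 2 := rfl
    rw [h2, degree_mul, degree_X, degree_eq_natDegree ihc.ne_zero]
    refine degree_C_le.trans_lt ?_
    exact_mod_cast Nat.lt_one_add_iff.2 (Nat.zero_le _)

theorem phiT_natDegree (c : PF) : (phiT c).natDegree = (phiZ c).natDegree + 1 := by
  have h2 : (2 : ℤ[X]) = C 2 := rfl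
  rw [phiT, h2, natDegree_C_add, natDegree_X_mul (phiZ_monic c).ne_zero]

theorem phiT_monic (c : PF) : (phiT c).Monic := by
  have := phiZ_monic (.node c .empty)
  rwa [phiZ_node, phiZ, mul_one] at this

/-- Modulo `2`, every encoding is a power of the variable. -/
theorem phiZ_map (h : PF) :
    (phiZ h).map (Int.castRingHom (ZMod 2)) = X ^ (phiZ h).natDegree := by
  induction h with
  | empty => simp [phiZ]
  | node c r ihc ihr =>
    rw [phiZ_node, (phiT_monic c).natDegree_mul (phiZ_monic r), phiT_natDegree, Polynomial.map_mul,
      ihr, phiT, Polynomial.map_add, Polynomial.map_mul, ihc, map_X]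
    have h2 : (2 : ℤ[X]).map (Int.castRingHom (ZMod 2)) = 0 := by
      have h2 : (2 : ℤ[X]) = C 2 := rfl
      rw [h2, map_C]
      simp
      rfl
    rw [h2]
    ring

theorem phiT_map (c : PF) :
    (phiT c).map (Int.castRingHom (ZMod 2)) = X ^ (phiT c).natDegree := by
  have := phiZ_map (.node c .empty)
  rwa [phiZ_node, phiZ, mul_one] at this

/-- Eisenstein's criterion at `2`. -/
theorem phiT_irreducible (c : PF) : Irreducible (phiT c) := by
  have hP : (Ideal.span {(2 : ℤ)}).IsPrime :=
    (Ideal.span_singleton_prime (by norm_num)).2 Int.prime_two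
  refine irreducible_of_eisenstein_criterion hP ?_ ?_ ?_ ?_ (phiT_monic c).isPrimitive
  · rw [(phiT_monic c).leadingCoeff, Ideal.mem_span_singleton]
    norm_num
  · intro n hn
    have h1 := congrArg (fun p => p.coeff n) (phiT_map c)
    have h2 : n ≠ (phiT c).natDegree := by
      rw [degree_eq_natDegree (phiT_monic c).ne_zero] at hn
      exact (by exact_mod_cast hn : n < _).ne
    simp only [coeff_map, coeff_X_pow, if_neg h2] at h1
    rw [Ideal.mem_span_singleton]
    exact (ZMod.intCast_zmod_eq_zero_iff_dvd _ 2).1 h1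
  · rw [degree_eq_natDegree (phiT_monic c).ne_zero, phiT_natDegree]
    exact_mod_cast Nat.succ_pos _
  · rw [Ideal.span_singleton_pow, Ideal.mem_span_singleton]
    have : (phiT c).coeff 0 = 2 := by
      have h2 : (2 : ℤ[X]) = C 2 := rfl
      rw [phiT, h2]; simp
    rw [this]
    norm_num

theorem phiZ_of_Peq {h h' : PF} (H : PF.Peq h h') : phiZ h = phiZ h' := by
  induction H with
  | refl => rfl
  | symm _ ih => exact ih.symm
  | trans _ _ ih ih' => exact ih.trans ih'
  | congr _ _ ih ih' => simp [phiZ, ih, ih']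
  | swap => simp only [phiZ]; ring

/-- If a tree polynomial divides the polynomial of a forest, the forest contains a tree with this
polynomial. -/
theorem exists_tree (c h : PF) (hd : phiT c ∣ phiZ h) :
    ∃ c' r', PF.Peq h (.node c' r') ∧ phiT c = phiT c' := by
  induction h with
  | empty => exact absurd (isUnit_of_dvd_one hd) (phiT_irreducible c).not_isUnit
  | node c₁ r _ ih =>
    rcases (phiT_irreducible c).prime.dvd_or_dvd hd with h | h
    · refine ⟨c₁, r, .refl _, eq_of_monic_of_associated (phiT_monic _) (phiT_monic _) ?_⟩
      exact (phiT_irreducible c).associated_of_dvd (phiT_irreducible c₁) h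
    · obtain ⟨c', r', h1, h2⟩ := ih h
      exact ⟨c', .node c₁ r', ((PF.Peq.refl c₁).congr h1).trans (.swap _ _ _), h2⟩

theorem Peq_of_phiZ (h : PF) : ∀ h', phiZ h = phiZ h' → PF.Peq h h' := by
  induction h with
  | empty =>
    intro h' e
    cases h' with
    | empty => exact .refl _
    | node c r =>
      exact absurd (isUnit_of_dvd_one ⟨phiZ r, e⟩) (phiT_irreducible c).not_isUnit
  | node c r ihc ihr =>
    intro h' e
    obtain ⟨c', r', h1, h2⟩ := exists_tree c h' (e ▸ ⟨phiZ r, rfl⟩)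
    rw [phiZ_of_Peq h1, phiZ_node, phiZ_node, ← h2] at e
    have hr := mul_left_cancel₀ (phiT_monic c).ne_zero e
    have hc : phiZ c = phiZ c' := by
      have := add_left_cancel h2
      exact mul_left_cancel₀ X_ne_zero this
    exact ((ihc _ hc).congr (ihr _ hr)).trans h1.symm

theorem phiZ_eq_iff (h h' : PF) : phiZ h = phiZ h' ↔ PF.Peq h h' :=
  ⟨Peq_of_phiZ h h', phiZ_of_Peq⟩

/-- The encoding of contexts: `(p, q)` stands for `p + y * q`, with `y` the hole. -/
noncomputable def psiZ : PC → ℤ[X] × ℤ[X]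
  | .hole h => (0, phiZ h)
  | .cons h C => (phiZ h * (2 + X * (psiZ C).1), phiZ h * (X * (psiZ C).2))

/-- The encoding of values of both sorts. -/
noncomputable def enc : UCFVal → ℤ[X] × ℤ[X]
  | .forest h => (phiZ h, 0)
  | .ctx C => psiZ C

theorem phiZ_union (h g : PF) : phiZ (PF.union h g) = phiZ h * phiZ g := by
  induction h with
  | empty => simp [PF.union, phiZ]
  | node c r _ ih => simp only [PF.union, phiZ, ih]; ring

theorem phiZ_root (h : PF) : phiZ (PF.root h) = 2 + X * phiZ h := by simp [PF.root, phiZ]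

theorem psiZ_addC (h : PF) (C : PC) :
    psiZ (addC h C) = (phiZ h * (psiZ C).1, phiZ h * (psiZ C).2) := by
  cases C <;> simp [addC, psiZ, phiZ_union, mul_assoc]

/-- Plugging a forest into a context is evaluation of the affine map. -/
theorem phiZ_plugF (C : PC) (g : PF) :
    phiZ (plugF C g) = (psiZ C).1 + (psiZ C).2 * phiZ g := by
  induction C with
  | hole h => simp [plugF, psiZ, phiZ_union]
  | cons h C ih => simp only [plugF, psiZ, phiZ_union, phiZ_root, ih]; ring

/-- Plugging contexts is composition of affine maps. -/
theorem psiZ_plugC (C D : PC) :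
    psiZ (plugC C D) = ((psiZ C).1 + (psiZ C).2 * (psiZ D).1, (psiZ C).2 * (psiZ D).2) := by
  induction C with
  | hole h => simp [plugC, psiZ, psiZ_addC]
  | cons h C ih =>
    simp only [plugC, psiZ, ih, Prod.mk.injEq]
    constructor <;> ring

theorem ev_eval (env : List UCFVal) (v : ℕ → ℤ[X] × ℤ[X])
    (hv : ∀ i u, env[i]? = some u → v i = enc u) (e : UExpr) :
    ∀ u, UExpr.eval env e = some u → ev X v e.code = enc u := by
  induction e with
  | var i => exact fun u hu => by rw [UExpr.code, ev_var]; exact hv i u hu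
  | empty =>
    rintro u ⟨⟩
    rw [UExpr.code, ev_op _ _ _ _ (by norm_num)]
    simp [evOp, enc, phiZ]
  | hole =>
    rintro u ⟨⟩
    rw [UExpr.code, ev_op _ _ _ _ (by norm_num)]
    simp [evOp, enc, psiZ, phiZ]
  | union e₁ e₂ ih₁ ih₂ =>
    intro u hu
    rw [UExpr.code, ev_op _ _ _ _ (by norm_num)]
    simp only [UExpr.eval] at hu
    split at hu <;> simp only [Option.some.injEq, reduceCtorEq] at hu <;> rename_i h1 h2 <;>
      subst hu <;> simp [evOp, ih₁ _ h1, ih₂ _ h2, enc, phiZ_union, psiZ_addC, mul_comm]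
  | root e ih =>
    intro u hu
    rw [UExpr.code, ev_op _ _ _ _ (by norm_num)]
    simp only [UExpr.eval] at hu
    split at hu <;> simp only [Option.some.injEq, reduceCtorEq] at hu <;> rename_i h1 <;>
      subst hu <;> simp [evOp, ih _ h1, enc, phiZ_root, psiZ, phiZ]
  | plug e₁ e₂ ih₁ ih₂ =>
    intro u hu
    rw [UExpr.code, ev_op _ _ _ _ (by norm_num)]
    simp only [UExpr.eval] at hu
    split at hu <;> simp only [Option.some.injEq, reduceCtorEq] at hu <;> rename_i h1 h2 <;>
      subst hu <;> simp [evOp, ih₁ _ h1, ih₂ _ h2, enc, phiZ_plugF, psiZ_plugC]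

end Phi

end RAUCF

namespace RAUCF

/-! ### Raw automata and their runs -/

/-- The data of an automaton with coded update terms: the number of registers, the transitions
`(a, qs, q, fs)`, and the outputs `(q, e)`. -/
abbrev Raw : Type := ℕ × List (ℕ × List ℕ × ℕ × List ℕ) × List (ℕ × ℕ)

section Runs

open Polynomial

/-- The `i`-th tree of a list. -/
def sub (ts : List RTree) (i : ℕ) : RTree := ts.getD i (RTree.node 0 [])

/-- The runs of a raw automaton, with register values encoded by polynomials. -/
inductive RR (M : Raw) : RTree → ℕ → (ℕ → ℤ[X] × ℤ[X]) → Prop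
  | step (a : ℕ) (qs : List ℕ) (q : ℕ) (fs : List ℕ) (ts : List RTree)
      (rs : ℕ → ℕ → ℤ[X] × ℤ[X]) (h : (a, qs, q, fs) ∈ M.2.1) (hl : qs.length = ts.length)
      (hrs : ∀ i < ts.length, RR M (sub ts i) (qs.getD i 0) (rs i)) :
      RR M (RTree.node a ts) q (next M.1 X qs.length rs fs)

theorem RR.zero_of_ge {M : Raw} {t : RTree} {q : ℕ} {v : ℕ → ℤ[X] × ℤ[X]} (h : RR M t q v) (j : ℕ)
    (hj : M.1 ≤ j) : v j = 0 := by
  cases h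
  simp [next, Nat.not_lt.2 hj]

/-- The input-output relation of a raw automaton. -/
def RSem (M : Raw) (t : RTree) (p : ℤ[X]) : Prop :=
  ∃ q v g, RR M t q v ∧ (q, g) ∈ M.2.2 ∧ p = (ev X v g).1

/-- Outputs of the two automata on a common input agree. -/
def Agree (M M' : Raw) : Prop := ∀ t p p', RSem M t p → RSem M' t p' → p = p'

/-- The two automata have outputs on the same inputs. -/
def SameDom (M M' : Raw) : Prop := ∀ t, (∃ p, RSem M t p) ↔ ∃ p, RSem M' t p

/-! ### The product system -/

/-- Side-by-side registers. -/
def combine {R : Type} (n : ℕ) (v v' : ℕ → R) (j : ℕ) : R := if j < n then v j else v' (j - n)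

/-- Update terms of the left factor in the product. -/
def leftTerm (n N k : ℕ) (f : ℕ) : ℕ :=
  sb (fun m => if m < k * n then cVar (m / n * N + m % n) else cZero) f

/-- Update terms of the right factor in the product. -/
def rightTerm (n n' N k : ℕ) (f : ℕ) : ℕ :=
  sb (fun m => if m < k * n' then cVar (m / n' * N + (n + m % n')) else cZero) f

/-- The product of two transitions with the same letter. -/
def prodTr (n n' : ℕ) (tr tr' : ℕ × List ℕ × ℕ × List ℕ) : List ℕ × ℕ × List ℕ :=
  ((List.range tr.2.1.length).map (fun i => Nat.pair (tr.2.1.getD i 0) (tr'.2.1.getD i 0)),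
    Nat.pair tr.2.2.1 tr'.2.2.1,
    (List.range n).map (fun j => leftTerm n (n + n') tr.2.1.length (tr.2.2.2.getD j 0)) ++
    (List.range n').map (fun j => rightTerm n n' (n + n') tr.2.1.length (tr'.2.2.2.getD j 0)))

/-- The difference of two outputs. -/
def prodOut (n : ℕ) (o o' : ℕ × ℕ) : ℕ × ℕ :=
  (Nat.pair o.1 o'.1, cSub (sb (fun m => if m < n then cVar m else cZero) o.2)
    (sb (fun m => cVar (n + m)) o'.2))

/-- The product system: it runs both automata on the same tree and outputs the difference of the
two outputs. -/
def prodSys (M M' : Raw) : Sys :=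
  (M.1 + M'.1,
    M.2.1.flatMap fun tr => M'.2.1.flatMap fun tr' =>
      if tr.1 = tr'.1 then
        if tr.2.1.length = tr'.2.1.length then [prodTr M.1 M'.1 tr tr'] else []
      else [],
    M.2.2.flatMap fun o => M'.2.2.map fun o' => prodOut M.1 o o')

/-- The product transition acts on side-by-side registers as the two transitions do separately. -/
theorem next_prod (n n' k : ℕ) (rs rs' : ℕ → ℕ → ℤ[X] × ℤ[X]) (fs fs' : List ℕ) :
    next (n + n') X k (fun i => combine n (rs i) (rs' i))
      ((List.range n).map (fun j => leftTerm n (n + n') k (fs.getD j 0)) ++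
        (List.range n').map (fun j => rightTerm n n' (n + n') k (fs'.getD j 0))) =
    combine n (next n X k rs fs) (next n' X k rs' fs') := by
  have hL : ∀ f, ev X (childEnv (n + n') k (fun i => combine n (rs i) (rs' i)))
      (leftTerm n (n + n') k f) = ev X (childEnv n k rs) f := by
    intro f
    rw [leftTerm, ev_sb]
    congr 1
    funext m
    by_cases h : m < k * n
    · have hn : 0 < n := Nat.pos_of_ne_zero (by rintro rfl; simp at h)
      have h1 : m % n < n := Nat.mod_lt _ hn
      rw [if_pos h, ev_cVar, childEnv_block _ (Nat.div_lt_of_lt_mul (by rwa [mul_comm] at h))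
        (by omega)]
      simp [combine, childEnv, h, h1]
    · simp [h, childEnv]
  have hR : ∀ f, ev X (childEnv (n + n') k (fun i => combine n (rs i) (rs' i)))
      (rightTerm n n' (n + n') k f) = ev X (childEnv n' k rs') f := by
    intro f
    rw [rightTerm, ev_sb]
    congr 1
    funext m
    by_cases h : m < k * n'
    · have hn : 0 < n' := Nat.pos_of_ne_zero (by rintro rfl; simp at h)
      have h1 : m % n' < n' := Nat.mod_lt _ hn
      rw [if_pos h, ev_cVar, childEnv_block _ (Nat.div_lt_of_lt_mul (by rwa [mul_comm] at h))
        (by omega)]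
      simp [combine, childEnv, h]
    · simp [h, childEnv]
  funext j
  by_cases hj : j < n
  · have : j < n + n' := by omega
    simp only [next, combine, if_pos hj, if_pos this]
    rw [List.getD_append _ _ _ _ (by simpa using hj), ← hL]
    congr 1
    simp [List.getD_eq_getElem?_getD, hj]
  · by_cases hj' : j < n + n'
    · have h2 : j - n < n' := by omega
      simp only [next, combine, if_neg hj, if_pos hj', if_pos h2]
      rw [List.getD_append_right _ _ _ _ (by simpa using hj), ← hR]
      congr 1
      simp [List.getD_eq_getElem?_getD, h2]
    · have h2 : ¬ j - n < n' := by omega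
      simp [next, combine, hj, hj', h2]

theorem mem_prodSys {M M' : Raw} {tr : List ℕ × ℕ × List ℕ} : tr ∈ (prodSys M M').2.1 ↔
    ∃ a qs q fs qs' q' fs', (a, qs, q, fs) ∈ M.2.1 ∧ (a, qs', q', fs') ∈ M'.2.1 ∧
      qs.length = qs'.length ∧ tr = prodTr M.1 M'.1 (a, qs, q, fs) (a, qs', q', fs') := by
  unfold prodSys
  simp only [List.mem_flatMap]
  constructor
  · rintro ⟨⟨a, qs, q, fs⟩, h, ⟨a', qs', q', fs'⟩, h', hm⟩
    split_ifs at hm with h1 h2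
    · dsimp only at h1 h2
      subst h1
      exact ⟨a, qs, q, fs, qs', q', fs', h, h', h2, by simpa using hm⟩
    · simp at hm
    · simp at hm
  · rintro ⟨a, qs, q, fs, qs', q', fs', h, h', h2, rfl⟩
    exact ⟨_, h, _, h', by simp [h2]⟩

theorem getD_range_map {β : Type} (f : ℕ → β) (d : β) {i k : ℕ} (h : i < k) :
    ((List.range k).map f).getD i d = f i := by
  simp [List.getD_eq_getElem?_getD, h]

/-- A configuration of the product comes from two runs on a common input tree. -/
theorem reach_prodSys {M M' : Raw} {q : ℕ} {w : ℕ → ℤ[X] × ℤ[X]}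
    (h : Reach (prodSys M M') X q w) : ∃ t v v', RR M t q.unpair.1 v ∧ RR M' t q.unpair.2 v' ∧
      w = combine M.1 v v' := by
  induction h with
  | step tr htr rs hrs ih =>
    obtain ⟨a, qs, q, fs, qs', q', fs', h, h', hl, rfl⟩ := mem_prodSys.1 htr
    have hlen : (prodTr M.1 M'.1 (a, qs, q, fs) (a, qs', q', fs')).1.length = qs.length := by
      simp [prodTr]
    have : Inhabited RTree := ⟨RTree.node 0 []⟩
    choose! ts vs vs' h1 h2 h3 using ih
    rw [hlen] at h1 h2 h3 ⊢
    have hq : ∀ i < qs.length, (prodTr M.1 M'.1 (a, qs, q, fs) (a, qs', q', fs')).1.getD i 0 =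
        Nat.pair (qs.getD i 0) (qs'.getD i 0) := fun i hi => getD_range_map _ _ hi
    refine ⟨RTree.node a ((List.range qs.length).map ts), _, _,
      ?_, ?_, (next_congr h3 _ _).trans (next_prod _ _ _ vs vs' fs fs')⟩
    · simp only [prodTr, Nat.unpair_pair]
      refine RR.step a qs q fs _ vs h (by simp) fun i hi => ?_
      have hi : i < qs.length := by simpa using hi
      have := h1 i hi
      rw [hq i hi, Nat.unpair_pair] at this
      rwa [sub, getD_range_map _ _ hi]
    · simp only [prodTr, Nat.unpair_pair]
      rw [hl]
      refine RR.step a qs' q' fs' _ vs' h' (by simp) fun i hi => ?_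
      have hi : i < qs.length := by simpa [hl] using hi
      have := h2 i hi
      rw [hq i hi, Nat.unpair_pair] at this
      rwa [sub, ← hl, getD_range_map _ _ hi]

/-- Two runs on a common input tree give a run of the product. -/
theorem RR.prod {M M' : Raw} {t : RTree} {q : ℕ} {v : ℕ → ℤ[X] × ℤ[X]} (h : RR M t q v) :
    ∀ q' v', RR M' t q' v' → Reach (prodSys M M') X (Nat.pair q q') (combine M.1 v v') := by
  induction h with
  | step a qs q fs ts rs h hl hrs ih =>
    intro q' v' h'
    cases h' with
    | step _ qs' _ fs' _ rs' h' hl' hrs' =>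
      have hlen : (prodTr M.1 M'.1 (a, qs, q, fs) (a, qs', q', fs')).1.length = qs.length := by
        simp [prodTr]
      have := Reach.step (S := prodSys M M') (x := X) _
        (mem_prodSys.2 ⟨a, qs, q, fs, qs', q', fs', h, h', hl.trans hl'.symm, rfl⟩)
        (fun i => combine M.1 (rs i) (rs' i)) (fun i hi => by
          rw [hlen] at hi
          rw [show (prodTr M.1 M'.1 (a, qs, q, fs) (a, qs', q', fs')).1.getD i 0 =
            Nat.pair (qs.getD i 0) (qs'.getD i 0) from getD_range_map _ _ hi]
          exact ih i (by omega) _ _ (hrs' i (by omega)))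
      rw [hlen] at this
      rw [hl', ← hl, ← next_prod]
      exact this

theorem ev_prodOut (n : ℕ) (v v' : ℕ → ℤ[X] × ℤ[X]) (hv : ∀ j, n ≤ j → v j = 0) (o o' : ℕ × ℕ) :
    (ev X (combine n v v') (prodOut n o o').2).1 = (ev X v o.2).1 - (ev X v' o'.2).1 := by
  rw [prodOut, ev_cSub, ev_sb, ev_sb]
  have h1 : (fun i => ev X (combine n v v') (if i < n then cVar i else cZero)) = v := by
    funext i
    by_cases h : i < n
    · simp [h, combine]
    · simp [h, hv i (by omega)]
  have h2 : (fun i => ev X (combine n v v') (cVar (n + i))) = v' := by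
    funext i
    simp [combine]
  rw [h1, h2]

theorem Zero_prodSys (M M' : Raw) : Zero (prodSys M M') ↔ Agree M M' := by
  have hout : ∀ q g, (q, g) ∈ (prodSys M M').2.2 ↔ ∃ o ∈ M.2.2, ∃ o' ∈ M'.2.2,
      prodOut M.1 o o' = (q, g) := by
    intro q g
    simp [prodSys, List.mem_flatMap]
  constructor
  · rintro hZ t _ _ ⟨q, v, g, hr, hg, rfl⟩ ⟨q', v', g', hr', hg', rfl⟩
    have := hZ _ _ (hr.prod q' v' hr') (prodOut M.1 (q, g) (q', g')).2
      ((hout _ _).2 ⟨_, hg, _, hg', rfl⟩)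
    rw [ev_prodOut _ _ _ hr.zero_of_ge] at this
    exact sub_eq_zero.1 this
  · intro hA q w hw g hg
    obtain ⟨⟨p, g₁⟩, ho, ⟨p', g₂⟩, ho', e⟩ := (hout _ _).1 hg
    obtain ⟨t, v, v', hv, hv', rfl⟩ := reach_prodSys hw
    simp only [prodOut, Prod.mk.injEq] at e
    obtain ⟨rfl, rfl⟩ := e
    rw [Nat.unpair_pair] at hv hv'
    have := ev_prodOut M.1 v v' hv.zero_of_ge (p, g₁) (p', g₂)
    dsimp only [prodOut] at this
    rw [this]
    exact sub_eq_zero.2 (hA t _ _ ⟨_, _, _, hv, ho, rfl⟩ ⟨_, _, _, hv', ho', rfl⟩)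

end Runs

theorem pr_leftTerm {α : Type} [Primcodable α] {n N k f : α → ℕ}
    (hn : Primrec n) (hN : Primrec N) (hk : Primrec k) (hf : Primrec f) :
    Primrec (fun a => leftTerm (n a) (N a) (k a) (f a)) := by
  unfold leftTerm cZero
  fun_prop

theorem pr_rightTerm {α : Type} [Primcodable α] {n n' N k f : α → ℕ} (hn : Primrec n)
    (hn' : Primrec n') (hN : Primrec N) (hk : Primrec k) (hf : Primrec f) :
    Primrec (fun a => rightTerm (n a) (n' a) (N a) (k a) (f a)) := by
  unfold rightTerm cZero
  fun_prop

theorem pr_prodOut {α : Type} [Primcodable α] {n : α → ℕ} {o o' : α → ℕ × ℕ}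
    (hn : Primrec n) (ho : Primrec o) (ho' : Primrec o') :
    Primrec (fun a => prodOut (n a) (o a) (o' a)) := by
  unfold prodOut cZero
  fun_prop

theorem pr_leftList {α : Type} [Primcodable α] {n N k : α → ℕ} {fs : α → List ℕ}
    (hn : Primrec n) (hN : Primrec N) (hk : Primrec k) (hf : Primrec fs) :
    Primrec (fun a => (List.range (n a)).map fun j => leftTerm (n a) (N a) (k a) ((fs a).getD j 0)) :=
  Primrec.list_map (by fun_prop)
    (pr_leftTerm (by fun_prop) (by fun_prop) (by fun_prop) (by fun_prop))

theorem pr_rightList {α : Type} [Primcodable α] {n n' N k : α → ℕ} {fs : α → List ℕ}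
    (hn : Primrec n) (hn' : Primrec n') (hN : Primrec N) (hk : Primrec k) (hf : Primrec fs) :
    Primrec (fun a => (List.range (n' a)).map fun j =>
      rightTerm (n a) (n' a) (N a) (k a) ((fs a).getD j 0)) :=
  Primrec.list_map (by fun_prop)
    (pr_rightTerm (by fun_prop) (by fun_prop) (by fun_prop) (by fun_prop) (by fun_prop))

theorem pr_prodTr {α : Type} [Primcodable α] {n n' : α → ℕ} {tr tr' : α → ℕ × List ℕ × ℕ × List ℕ}
    (hn : Primrec n) (hn' : Primrec n') (h : Primrec tr) (h' : Primrec tr') :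
    Primrec (fun a => prodTr (n a) (n' a) (tr a) (tr' a)) := by
  unfold prodTr
  refine .pair (by fun_prop) (.pair (by fun_prop) ?_)
  exact Primrec.list_append.comp
    (pr_leftList (by fun_prop) (by fun_prop) (by fun_prop) (by fun_prop))
    (pr_rightList (by fun_prop) (by fun_prop) (by fun_prop) (by fun_prop) (by fun_prop))

theorem pr_prodSys : Primrec (fun y : Raw × Raw => prodSys y.1 y.2) := by
  unfold prodSys
  refine .pair (by fun_prop) (.pair ?_ ?_)
  · refine Primrec.list_flatMap (by fun_prop) (Primrec.list_flatMap (by fun_prop) ?_)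
    refine pr_ite_eq (by fun_prop) (by fun_prop) (pr_ite_eq (by fun_prop) (by fun_prop) ?_ ?_) ?_
    · exact Primrec.list_cons.comp
        (pr_prodTr (by fun_prop) (by fun_prop) (by fun_prop) (by fun_prop)) (.const [])
    · fun_prop
    · fun_prop
  · exact Primrec.list_flatMap (by fun_prop) (Primrec.list_map (by fun_prop)
      (pr_prodOut (by fun_prop) (by fun_prop) (by fun_prop)))

end RAUCF

namespace RAUCF

/-! ### Comparing the domains -/

/-- The runs of the underlying tree automaton with transitions `(a, qs, q)`. -/
inductive Run (T : List (ℕ × List ℕ × ℕ)) : RTree → ℕ → Prop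
  | step (a : ℕ) (qs : List ℕ) (q : ℕ) (ts : List RTree) (h : (a, qs, q) ∈ T)
      (hl : qs.length = ts.length) (hrs : ∀ i < ts.length, Run T (sub ts i) (qs.getD i 0)) :
      Run T (RTree.node a ts) q

/-- A bound for the states of a tree automaton. -/
def bound (T : List (ℕ × List ℕ × ℕ)) : ℕ := T.foldr (fun tr acc => tr.2.2 + 1 + acc) 0

theorem lt_bound {T : List (ℕ × List ℕ × ℕ)} {tr : ℕ × List ℕ × ℕ} (h : tr ∈ T) :
    tr.2.2 < bound T := by
  induction T with
  | nil => simp at h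
  | cons x T ih =>
    have e : bound (x :: T) = x.2.2 + 1 + bound T := rfl
    rcases List.mem_cons.1 h with rfl | h
    · omega
    · have := ih h
      omega

theorem Run.lt_bound {T : List (ℕ × List ℕ × ℕ)} {t : RTree} {q : ℕ} (h : Run T t q) :
    q < bound T := by
  cases h with
  | step a qs q ts h hl hrs => exact RAUCF.lt_bound h

/-- The conjunction of a list of terms with values in `{0, 1}`. -/
def andT (L : List ℕ) : ℕ := L.foldr cMul cOne

/-- The disjunction of a list of terms with values in `{0, 1}`. -/
def orT (L : List ℕ) : ℕ := cSub cOne (andT (L.map (cSub cOne)))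

/-- The term telling, from the states that the `k` children can reach, whether a node with letter
`a` can reach the state `q`. -/
def runTerm (T : List (ℕ × List ℕ × ℕ)) (a k q : ℕ) : ℕ :=
  orT (T.flatMap fun tr =>
    if tr.1 = a then
      if tr.2.1.length = k then
        if tr.2.2 = q then
          [andT ((List.range k).map fun i => blockSub (bound T) i (tr.2.1.getD i 0))]
        else []
      else []
    else [])

/-- The system with a single state that performs the subset construction for `T`: register `q`
has the value `1` if `q` can be reached, and `0` otherwise. The output compares the reachability of
the sets of states `P` and `N`. -/
def domSys (T : List (ℕ × List ℕ × ℕ)) (P N : List ℕ) : Sys :=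
  (bound T,
    T.map fun tr => (tr.2.1.map fun _ => 0, 0,
      (List.range (bound T)).map fun q => runTerm T tr.1 tr.2.1.length q),
    [(0, cSub (orT (P.map cVar)) (orT (N.map cVar)))])

section

open Polynomial

open scoped Classical in
theorem ev_andT {x : ℤ[X]} {v : ℕ → ℤ[X] × ℤ[X]} (L : List ℕ)
    (h : ∀ e ∈ L, (ev x v e).1 = 0 ∨ (ev x v e).1 = 1) :
    (ev x v (andT L)).1 = if ∀ e ∈ L, (ev x v e).1 = 1 then 1 else 0 := by
  induction L with
  | nil => simp [andT]
  | cons e L ih =>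
    have e1 : andT (e :: L) = cMul e (andT L) := rfl
    rw [e1, ev_cMul, ih fun e he => h e (by simp [he])]
    rcases h e (by simp) with h | h <;> simp [h]

open scoped Classical in
theorem ev_orT {x : ℤ[X]} {v : ℕ → ℤ[X] × ℤ[X]} (L : List ℕ)
    (h : ∀ e ∈ L, (ev x v e).1 = 0 ∨ (ev x v e).1 = 1) :
    ev x v (orT L) = (if ∃ e ∈ L, (ev x v e).1 = 1 then 1 else 0, 0) := by
  rw [orT, ev_cSub, ev_andT]
  · by_cases hL : ∃ e ∈ L, (ev x v e).1 = 1
    · rw [if_pos hL, if_neg]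
      · simp
      · obtain ⟨e, he, h1⟩ := hL
        intro H
        simpa [h1] using H _ (List.mem_map_of_mem he)
    · rw [if_neg hL, if_pos]
      · simp
      · push Not at hL
        intro e he
        obtain ⟨e', he', rfl⟩ := List.mem_map.1 he
        simp [(h e' he').resolve_right (hL e' he')]
  · intro e he
    obtain ⟨e', he', rfl⟩ := List.mem_map.1 he
    rcases h e' he' with h | h <;> simp [h]

open scoped Classical in
/-- The characteristic function of the set of states reached at `t`. -/
noncomputable def ind (T : List (ℕ × List ℕ × ℕ)) (t : RTree) (q : ℕ) : ℤ[X] × ℤ[X] :=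
  (if Run T t q then 1 else 0, 0)

theorem ind_fst_eq_one {T : List (ℕ × List ℕ × ℕ)} {t : RTree} {q : ℕ} :
    (ind T t q).1 = 1 ↔ Run T t q := by
  unfold ind
  split_ifs with h <;> simp [h]

theorem ind_fst {T : List (ℕ × List ℕ × ℕ)} (t : RTree) (q : ℕ) :
    (ind T t q).1 = 0 ∨ (ind T t q).1 = 1 := by
  unfold ind
  split_ifs with h <;> simp

/-- The transition of the subset construction sends the indicator vectors of the children to the
indicator vector of the states reachable at the root. -/
theorem next_dom (T : List (ℕ × List ℕ × ℕ)) (a : ℕ) (ts : List RTree) :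
    next (bound T) X ts.length (fun i => ind T (sub ts i))
      ((List.range (bound T)).map fun q => runTerm T a ts.length q) =
    ind T (RTree.node a ts) := by
  classical
  funext q
  by_cases hq : q < bound T
  swap
  · have : ¬ Run T (RTree.node a ts) q := fun h => hq h.lt_bound
    simp only [next, ind, if_neg hq, if_neg this]
    rfl
  have e1 : ∀ i < ts.length, ∀ s, ev X (childEnv (bound T) ts.length fun i => ind T (sub ts i))
      (blockSub (bound T) i s) = ind T (sub ts i) s := by
    intro i hi s
    unfold blockSub
    split_ifs with h
    · rw [ev_cVar, childEnv_block _ hi h]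
    · have : ¬ Run T (sub ts i) s := fun hr => h hr.lt_bound
      simp only [ev_cZero, ind, if_neg this]
      rfl
  have e2 : ∀ s : ℕ → ℕ, (ev X (childEnv (bound T) ts.length fun i => ind T (sub ts i))
      (andT ((List.range ts.length).map fun i => blockSub (bound T) i (s i)))).1 =
      if ∀ i < ts.length, Run T (sub ts i) (s i) then 1 else 0 := by
    intro s
    rw [ev_andT]
    · congr 1
      simp only [List.mem_map, List.mem_range, forall_exists_index, and_imp,
        forall_apply_eq_imp_iff₂, eq_iff_iff]
      refine forall₂_congr fun i hi => ?_
      rw [e1 i hi, ind_fst_eq_one]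
    · intro e he
      obtain ⟨i, hi, rfl⟩ := List.mem_map.1 he
      rw [e1 i (List.mem_range.1 hi)]
      exact ind_fst _ _
  have hm : ∀ e, e ∈ (T.flatMap fun tr =>
      if tr.1 = a then
        if tr.2.1.length = ts.length then
          if tr.2.2 = q then
            [andT ((List.range ts.length).map fun i => blockSub (bound T) i (tr.2.1.getD i 0))]
          else []
        else []
      else []) ↔ ∃ qs : List ℕ, (a, qs, q) ∈ T ∧ qs.length = ts.length ∧
        e = andT ((List.range ts.length).map fun i => blockSub (bound T) i (qs.getD i 0)) := by
    intro e
    rw [List.mem_flatMap]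
    constructor
    · rintro ⟨⟨a', qs, q'⟩, h, he⟩
      split_ifs at he with h1 h2 h3
      · dsimp only at h1 h2 h3
        subst h1 h3
        exact ⟨qs, h, h2, by simpa using he⟩
      all_goals simp at he
    · rintro ⟨qs, h, h2, rfl⟩
      exact ⟨_, h, by simp [h2]⟩
  simp only [next, if_pos hq]
  rw [getD_range_map _ _ hq, runTerm, ev_orT]
  · rw [show ind T (RTree.node a ts) q =
      (if Run T (RTree.node a ts) q then (1 : ℤ[X]) else 0, (0 : ℤ[X])) from rfl]
    congr 2
    rw [eq_iff_iff]
    constructor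
    · rintro ⟨e, he, h1⟩
      obtain ⟨qs, h, h2, rfl⟩ := (hm e).1 he
      rw [e2] at h1
      refine Run.step a qs q ts h h2 ?_
      by_contra H
      rw [if_neg H] at h1
      exact zero_ne_one h1
    · intro h
      cases h with
      | step _ qs _ _ h hl hrs =>
        refine ⟨_, (hm _).2 ⟨qs, h, hl, rfl⟩, ?_⟩
        rw [e2, if_pos hrs]
  · intro e he
    obtain ⟨qs, h, h2, rfl⟩ := (hm e).1 he
    rw [e2]
    split_ifs <;> simp

theorem Run.reach {T : List (ℕ × List ℕ × ℕ)} (P N : List ℕ) {t : RTree} {q : ℕ}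
    (h : Run T t q) : Reach (domSys T P N) X 0 (ind T t) := by
  induction h with
  | step a qs q ts h hl hrs ih =>
    have := Reach.step (S := domSys T P N) (x := (X : ℤ[X])) _
      (List.mem_map_of_mem h) (fun i => ind T (sub ts i)) (by
        intro i hi
        have hi : i < qs.length := by simpa using hi
        have := ih i (by omega)
        rw [List.getD_eq_getElem?_getD]
        simpa [hi] using this)
    rw [← next_dom]
    simpa [hl, domSys] using this

/-- Each configuration of the subset construction is the indicator vector of the states reachable on some
tree. -/
theorem reach_dom {T : List (ℕ × List ℕ × ℕ)} {P N : List ℕ} {q : ℕ} {w : ℕ → ℤ[X] × ℤ[X]}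
    (h : Reach (domSys T P N) X q w) : ∃ t, w = ind T t := by
  induction h with
  | step tr htr rs hrs ih =>
    obtain ⟨⟨a, qs, q⟩, h, rfl⟩ := List.mem_map.1 htr
    have : Inhabited RTree := ⟨RTree.node 0 []⟩
    choose! ts hts using ih
    simp only [List.length_map] at hts
    refine ⟨RTree.node a ((List.range qs.length).map ts), ?_⟩
    rw [← next_dom]
    simp only [List.length_map, List.length_range]
    refine next_congr (fun i hi => ?_) _ _
    rw [hts i hi, sub, getD_range_map _ _ hi]

theorem Zero_domSys (T : List (ℕ × List ℕ × ℕ)) (P N : List ℕ) :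
    Zero (domSys T P N) ↔ ∀ t, (∃ q ∈ P, Run T t q) ↔ ∃ q ∈ N, Run T t q := by
  classical
  have e1 : ∀ (L : List ℕ) t, ev X (ind T t) (orT (L.map cVar)) =
      (if ∃ q ∈ L, Run T t q then 1 else 0, 0) := by
    intro L t
    rw [ev_orT]
    · congr 2
      simp [ind_fst_eq_one]
    · intro e he
      obtain ⟨q, -, rfl⟩ := List.mem_map.1 he
      rw [ev_cVar]
      exact ind_fst _ _
  have e2 : ∀ t, (ev X (ind T t) (cSub (orT (P.map cVar)) (orT (N.map cVar)))).1 = 0 ↔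
      ((∃ q ∈ P, Run T t q) ↔ ∃ q ∈ N, Run T t q) := by
    intro t
    rw [ev_cSub, e1, e1]
    by_cases h1 : ∃ q ∈ P, Run T t q <;> by_cases h2 : ∃ q ∈ N, Run T t q <;> simp [h1, h2]
  constructor
  · intro hZ t
    by_cases h : ∃ q, Run T t q
    · obtain ⟨q, h⟩ := h
      exact (e2 t).1 (hZ _ _ (h.reach P N) _ (by simp [domSys]))
    · push Not at h
      simp [h]
  · intro H q w hw g hg
    obtain ⟨t, rfl⟩ := reach_dom hw
    have : g = cSub (orT (P.map cVar)) (orT (N.map cVar)) := by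
      simp only [domSys, List.mem_singleton, Prod.mk.injEq] at hg
      exact hg.2
    rw [this, e2]
    exact H t

/-- The disjoint union of the underlying tree automata. -/
def unionT (M M' : Raw) : List (ℕ × List ℕ × ℕ) :=
  (M.2.1.map fun tr => (tr.1, tr.2.1.map (fun s => 2 * s), 2 * tr.2.2.1)) ++
  (M'.2.1.map fun tr => (tr.1, tr.2.1.map (fun s => 2 * s + 1), 2 * tr.2.2.1 + 1))

theorem mem_unionT_even {M M' : Raw} {a q : ℕ} {ps : List ℕ} :
    (a, ps, 2 * q) ∈ unionT M M' ↔
      ∃ qs fs, (a, qs, q, fs) ∈ M.2.1 ∧ ps = qs.map (fun s => 2 * s) := by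
  unfold unionT
  simp only [List.mem_append, List.mem_map, Prod.mk.injEq]
  constructor
  · rintro (⟨⟨a, qs, q', fs⟩, h, rfl, rfl, h3⟩ | ⟨⟨a, qs, q', fs⟩, h, rfl, rfl, h3⟩)
    · dsimp only at h3
      obtain rfl : q' = q := by omega
      exact ⟨qs, fs, h, rfl⟩
    · dsimp only at h3
      omega
  · rintro ⟨qs, fs, h, rfl⟩
    exact Or.inl ⟨_, h, rfl, rfl, rfl⟩

theorem mem_unionT_odd {M M' : Raw} {a q : ℕ} {ps : List ℕ} :
    (a, ps, 2 * q + 1) ∈ unionT M M' ↔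
      ∃ qs fs, (a, qs, q, fs) ∈ M'.2.1 ∧ ps = qs.map (fun s => 2 * s + 1) := by
  unfold unionT
  simp only [List.mem_append, List.mem_map, Prod.mk.injEq]
  constructor
  · rintro (⟨⟨a, qs, q', fs⟩, h, rfl, rfl, h3⟩ | ⟨⟨a, qs, q', fs⟩, h, rfl, rfl, h3⟩)
    · dsimp only at h3
      omega
    · dsimp only at h3
      obtain rfl : q' = q := by omega
      exact ⟨qs, fs, h, rfl⟩
  · rintro ⟨qs, fs, h, rfl⟩
    exact Or.inr ⟨_, h, rfl, rfl, rfl⟩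

/-- An embedding of the states of `M` into those of `T` compatible with the transitions identifies
the runs. -/
theorem run_iff {M : Raw} {T : List (ℕ × List ℕ × ℕ)} (σ : ℕ → ℕ)
    (hT : ∀ a ps q, (a, ps, σ q) ∈ T ↔ ∃ qs fs, (a, qs, q, fs) ∈ M.2.1 ∧ ps = qs.map σ)
    (t : RTree) (q : ℕ) : Run T t (σ q) ↔ ∃ v, RR M t q v := by
  constructor
  · intro h
    generalize e : σ q = s at h
    induction h generalizing q with
    | step a ps s ts h hl hrs ih =>
      subst e
      obtain ⟨qs, fs, hM, rfl⟩ := (hT _ _ _).1 h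
      have hl : qs.length = ts.length := by simpa using hl
      have : ∀ i < ts.length, ∃ v, RR M (sub ts i) (qs.getD i 0) v := by
        intro i hi
        refine ih i hi _ ?_
        have : i < qs.length := by omega
        simp [List.getD_eq_getElem?_getD, this]
      choose! rs hrs using this
      exact ⟨_, RR.step a qs q fs ts rs hM hl hrs⟩
  · rintro ⟨v, h⟩
    induction h with
    | step a qs q fs ts rs h hl hrs ih =>
      refine Run.step a (qs.map σ) _ ts ((hT _ _ _).2 ⟨qs, fs, h, rfl⟩) (by simpa using hl) ?_
      intro i hi
      have h1 : i < qs.length := by omega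
      have := ih i hi
      simp only [List.getD_eq_getElem?_getD] at this ⊢
      simpa [h1] using this

/-- The system deciding equality of domains. -/
def eqDomSys (M M' : Raw) : Sys :=
  domSys (unionT M M') (M.2.2.map fun o => 2 * o.1) (M'.2.2.map fun o => 2 * o.1 + 1)

/-- States of the first automaton are numbered by even and those of the second by odd numbers. -/
theorem Zero_eqDomSys (M M' : Raw) : Zero (eqDomSys M M') ↔ SameDom M M' := by
  have h1 := run_iff (M := M) (T := unionT M M') (fun s => 2 * s) fun a ps q => mem_unionT_even
  have h2 := run_iff (M := M') (T := unionT M M') (fun s => 2 * s + 1)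
    fun a ps q => mem_unionT_odd
  rw [eqDomSys, Zero_domSys]
  refine forall_congr' fun t => ?_
  refine iff_congr ?_ ?_
  · constructor
    · rintro ⟨_, hq, hr⟩
      obtain ⟨⟨q, g⟩, ho, rfl⟩ := List.mem_map.1 hq
      obtain ⟨v, hv⟩ := (h1 t q).1 hr
      exact ⟨_, q, v, g, hv, ho, rfl⟩
    · rintro ⟨_, q, v, g, hv, ho, rfl⟩
      exact ⟨_, List.mem_map_of_mem ho, (h1 t q).2 ⟨v, hv⟩⟩
  · constructor
    · rintro ⟨_, hq, hr⟩
      obtain ⟨⟨q, g⟩, ho, rfl⟩ := List.mem_map.1 hq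
      obtain ⟨v, hv⟩ := (h2 t q).1 hr
      exact ⟨_, q, v, g, hv, ho, rfl⟩
    · rintro ⟨_, q, v, g, hv, ho, rfl⟩
      exact ⟨_, List.mem_map_of_mem ho, (h2 t q).2 ⟨v, hv⟩⟩

end

theorem pr_andT {α : Type} [Primcodable α] {L : α → List ℕ} (hL : Primrec L) :
    Primrec (fun a => andT (L a)) := by
  unfold andT cOne
  fun_prop

theorem pr_orT {α : Type} [Primcodable α] {L : α → List ℕ} (hL : Primrec L) :
    Primrec (fun a => orT (L a)) := by
  unfold orT cOne
  exact pr_cSub (by fun_prop) (pr_andT (by fun_prop))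

theorem pr_bound {α : Type} [Primcodable α] {T : α → List (ℕ × List ℕ × ℕ)} (hT : Primrec T) :
    Primrec (fun a => bound (T a)) := by
  unfold bound
  fun_prop

theorem pr_childTerms {α : Type} [Primcodable α] {n k : α → ℕ} {qs : α → List ℕ}
    (hn : Primrec n) (hk : Primrec k) (hq : Primrec qs) : Primrec (fun a =>
      (List.range (k a)).map fun i => blockSub (n a) i ((qs a).getD i 0)) := by
  unfold blockSub cZero
  fun_prop

theorem pr_runTerm {α : Type} [Primcodable α] {T : α → List (ℕ × List ℕ × ℕ)} {a k q : α → ℕ}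
    (hT : Primrec T) (ha : Primrec a) (hk : Primrec k) (hq : Primrec q) :
    Primrec (fun x => runTerm (T x) (a x) (k x) (q x)) := by
  unfold runTerm
  refine pr_orT (Primrec.list_flatMap hT ?_)
  refine pr_ite_eq (by fun_prop) (by fun_prop) (pr_ite_eq (by fun_prop) (by fun_prop)
    (pr_ite_eq (by fun_prop) (by fun_prop) ?_ ?_) ?_) ?_
  · exact Primrec.list_cons.comp (pr_andT (pr_childTerms (pr_bound (by fun_prop)) (by fun_prop)
      (by fun_prop))) (.const [])
  all_goals fun_prop

theorem pr_domSys {α : Type} [Primcodable α] {T : α → List (ℕ × List ℕ × ℕ)} {P N : α → List ℕ}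
    (hT : Primrec T) (hP : Primrec P) (hN : Primrec N) :
    Primrec (fun x => domSys (T x) (P x) (N x)) := by
  unfold domSys
  have h1 : Primrec (fun y : α × (ℕ × List ℕ × ℕ) => (List.range (bound (T y.1))).map fun q =>
      runTerm (T y.1) y.2.1 y.2.2.1.length q) :=
    Primrec.list_map (Primrec.list_range.comp (pr_bound (by fun_prop)))
      (pr_runTerm (by fun_prop) (by fun_prop) (by fun_prop) (by fun_prop))
  have h2 : Primrec (fun y : α × (ℕ × List ℕ × ℕ) => y.2.2.1.map fun _ => 0) := by fun_prop
  refine Primrec.pair (pr_bound hT) (Primrec.pair (Primrec.list_map hT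
    (Primrec.pair h2 (Primrec.pair (Primrec.const 0) h1))) ?_)
  refine Primrec.list_cons.comp (Primrec.pair (Primrec.const 0) (pr_cSub ?_ ?_)) (.const [])
  · exact pr_orT (by fun_prop)
  · exact pr_orT (by fun_prop)

theorem pr_mapStates {α : Type} [Primcodable α] {L : α → List (ℕ × List ℕ × ℕ × List ℕ)}
    (hL : Primrec L) {σ : ℕ → ℕ} (hσ : Primrec σ) :
    Primrec (fun a => (L a).map fun tr => (tr.1, tr.2.1.map σ, σ tr.2.2.1)) := by
  have h1 : Primrec (fun y : α × (ℕ × List ℕ × ℕ × List ℕ) => y.2.2.1.map σ) :=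
    Primrec.list_map (by fun_prop) (hσ.comp Primrec.snd)
  have h2 : Primrec (fun y : α × (ℕ × List ℕ × ℕ × List ℕ) => σ y.2.2.2.1) :=
    hσ.comp (by fun_prop)
  exact Primrec.list_map hL (Primrec.pair (by fun_prop) (Primrec.pair h1 h2))

theorem pr_mapOut {α : Type} [Primcodable α] {L : α → List (ℕ × ℕ)}
    (hL : Primrec L) {σ : ℕ → ℕ} (hσ : Primrec σ) :
    Primrec (fun a => (L a).map fun o => σ o.1) :=
  Primrec.list_map hL (hσ.comp (Primrec.fst.comp Primrec.snd))

theorem pr_eqDomSys : Primrec (fun y : Raw × Raw => eqDomSys y.1 y.2) := by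
  have h1 : Primrec (fun s : ℕ => 2 * s) := by fun_prop
  have h2 : Primrec (fun s : ℕ => 2 * s + 1) := by fun_prop
  have hd : Primrec (fun y : Raw × Raw => y.1.2.1) :=
    Primrec.fst.comp (Primrec.snd.comp Primrec.fst)
  have hd' : Primrec (fun y : Raw × Raw => y.2.2.1) :=
    Primrec.fst.comp (Primrec.snd.comp Primrec.snd)
  have ho : Primrec (fun y : Raw × Raw => y.1.2.2) :=
    Primrec.snd.comp (Primrec.snd.comp Primrec.fst)
  have ho' : Primrec (fun y : Raw × Raw => y.2.2.2) :=
    Primrec.snd.comp (Primrec.snd.comp Primrec.snd)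
  exact pr_domSys (Primrec.list_append.comp (pr_mapStates hd h1) (pr_mapStates hd' h2))
    (pr_mapOut ho h1) (pr_mapOut ho' h2)

end RAUCF

namespace RAUCF

/-! ### From register automata to polynomial systems -/

section

open Polynomial

/-- The sort of a value, `true` for contexts. -/
def sortOf : UCFVal → Bool
  | .forest _ => false
  | .ctx _ => true

/-- A well-sorted term has a value of the expected sort. -/
theorem eval_of_sortCheck (env : List UCFVal) (e : UExpr) : ∀ s,
    UExpr.sortCheck (env.map sortOf) e = some s → ∃ u, UExpr.eval env e = some u ∧ sortOf u = s := by
  induction e with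
  | var i =>
    intro s h
    simpa [UExpr.sortCheck, UExpr.eval] using h
  | empty => rintro s ⟨⟩; exact ⟨_, rfl, rfl⟩
  | hole => rintro s ⟨⟩; exact ⟨_, rfl, rfl⟩
  | union e₁ e₂ ih₁ ih₂ =>
    intro s h
    simp only [UExpr.sortCheck] at h
    split at h <;> simp only [Option.some.injEq, reduceCtorEq] at h <;> rename_i h1 h2 <;>
      subst h <;> obtain ⟨u, hu, hs⟩ := ih₁ _ h1 <;> obtain ⟨u', hu', hs'⟩ := ih₂ _ h2 <;>
      cases u <;> cases u' <;> simp_all [UExpr.eval, sortOf]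
  | root e ih =>
    intro s h
    obtain ⟨u, hu, hs⟩ := ih s h
    cases u <;> simp_all [UExpr.eval, sortOf]
  | plug e₁ e₂ ih₁ ih₂ =>
    intro s h
    simp only [UExpr.sortCheck] at h
    split at h <;> simp only [Option.some.injEq, reduceCtorEq] at h <;> rename_i h1 h2 <;>
      subst h <;> obtain ⟨u, hu, hs⟩ := ih₁ _ h1 <;> obtain ⟨u', hu', hs'⟩ := ih₂ _ h2 <;>
      cases u <;> cases u' <;> simp_all [UExpr.eval, sortOf]

/-- The polynomial encoding of a list of register values. -/
noncomputable def encEnv (r : List UCFVal) (i : ℕ) : ℤ[X] × ℤ[X] := (r[i]?.map enc).getD 0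

theorem flatten_getElem? {β : Type} {n : ℕ} (rs : List (List β)) (h : ∀ r ∈ rs, r.length = n)
    (m : ℕ) : rs.flatten[m]? =
      if m < rs.length * n then (rs.getD (m / n) [])[m % n]? else none := by
  induction rs generalizing m with
  | nil => simp
  | cons r rs ih =>
    have hr : r.length = n := h r (by simp)
    rw [List.flatten_cons, List.length_cons, Nat.succ_mul]
    by_cases hm : m < n
    · rw [List.getElem?_append_left (by omega), if_pos (by omega), Nat.div_eq_of_lt hm,
        Nat.mod_eq_of_lt hm]
      rfl
    · rw [List.getElem?_append_right (by omega), ih (fun r' h' => h r' (by simp [h'])), hr]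
      obtain ⟨d, rfl⟩ : ∃ d, m = d + n := ⟨m - n, by omega⟩
      rw [Nat.add_sub_cancel]
      by_cases hd : d < rs.length * n
      · have hn : 0 < n := Nat.pos_of_ne_zero (by rintro rfl; simp at hd)
        rw [if_pos hd, if_pos (by omega), Nat.add_div_right _ hn, Nat.add_mod_right]
        rfl
      · rw [if_neg hd, if_neg (by omega)]

theorem encEnv_flatten {n : ℕ} (rs : List (List UCFVal)) (h : ∀ r ∈ rs, r.length = n) :
    encEnv rs.flatten = childEnv n rs.length (fun i => encEnv (rs.getD i [])) := by
  funext m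
  unfold encEnv childEnv
  rw [flatten_getElem? rs h]
  split_ifs <;> rfl

theorem next_encEnv {n : ℕ} {rs : List (List UCFVal)} {fs : List UExpr} {newr : List UCFVal}
    (h : ∀ r ∈ rs, r.length = n) (hfs : fs.length = n)
    (hF : List.Forall₂ (fun e v => UExpr.eval rs.flatten e = some v) fs newr) :
    next n X rs.length (fun i => encEnv (rs.getD i [])) (fs.map UExpr.code) = encEnv newr := by
  have hl := hF.length_eq
  funext j
  unfold next
  rw [← encEnv_flatten rs h]
  by_cases hj : j < n
  · have h1 : j < fs.length := by omega
    have h2 : j < newr.length := by omega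
    have h3 : UExpr.eval rs.flatten fs[j] = some newr[j] := (List.forall₂_iff_get.1 hF).2 j h1 h2
    have h4 := ev_eval rs.flatten (encEnv rs.flatten)
      (fun i u hu => by simp [encEnv, hu]) _ _ h3
    rw [if_pos hj]
    simp only [encEnv, List.getD_eq_getElem?_getD, List.getElem?_map, h1, h2,
      List.getElem?_eq_getElem, Option.map_some, Option.getD_some]
    exact h4
  · have h2 : newr.length ≤ j := by omega
    simp [hj, encEnv, h2]

theorem map_eq_of_forall₂ {α β γ : Type} {P : α → γ → Prop} {Q : α → β → Prop} {g : β → γ}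
    (H : ∀ a b c, P a c → Q a b → g b = c) {as : List α} {cs : List γ} {bs : List β}
    (h : List.Forall₂ P as cs) (h' : List.Forall₂ Q as bs) : bs.map g = cs := by
  induction h generalizing bs with
  | nil => cases h'; rfl
  | cons hp _ ih =>
    cases h' with
    | cons hq h' => rw [List.map_cons, H _ _ _ hp hq, ih h']

theorem exists_forall₂ {α β γ : Type} {P : α → γ → Prop} {Q : α → β → Prop}
    (H : ∀ a c, P a c → ∃ b, Q a b) {as : List α} {cs : List γ}
    (h : List.Forall₂ P as cs) : ∃ bs, List.Forall₂ Q as bs := by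
  induction h with
  | nil => exact ⟨[], .nil⟩
  | cons hp _ ih =>
    obtain ⟨bs, hbs⟩ := ih
    obtain ⟨b, hb⟩ := H _ _ hp
    exact ⟨b :: bs, .cons hb hbs⟩

/-- The raw automaton of a register automaton. -/
def toRaw (A : RAU) : Raw :=
  (A.regs, A.delta.map (fun tr => (tr.1, tr.2.1, tr.2.2.1, tr.2.2.2.map UExpr.code)),
    A.out.map (fun p => (p.1, p.2.code)))

variable {A B : RAU}

theorem sorts_length (hA : A.WF) {q : ℕ} (hq : q < A.states) :
    (A.sorts.getD q []).length = A.regs := by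
  obtain ⟨-, -, -, h1, h2⟩ := hA
  have hq : q < A.sorts.length := by omega
  rw [List.getD_eq_getElem _ _ hq]
  exact h2 _ (List.getElem_mem hq)

theorem childSorts_eq {qs : List ℕ} {rs : List (List UCFVal)} (hl : qs.length = rs.length)
    (h : ∀ i < rs.length, (rs.getD i []).map sortOf = A.sorts.getD (qs.getD i 0) []) :
    A.childSorts qs = rs.flatten.map sortOf := by
  rw [List.map_flatten, RAU.childSorts]
  congr 1
  refine List.ext_getElem (by simpa using hl) fun i h1 h2 => ?_
  have h1 : i < qs.length := by simpa using h1
  have h2 : i < rs.length := by omega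
  have := h i h2
  rw [List.getD_eq_getElem _ _ h2, List.getD_eq_getElem _ _ h1] at this
  rw [List.getElem_map, List.getElem_map, this]

theorem reg_lengths (hA : A.WF) {qs : List ℕ} {rs : List (List UCFVal)}
    (hl : qs.length = rs.length) (hq : ∀ q ∈ qs, q < A.states)
    (h : ∀ i < rs.length, (rs.getD i []).map sortOf = A.sorts.getD (qs.getD i 0) []) :
    ∀ r ∈ rs, r.length = A.regs := by
  intro r hr
  obtain ⟨i, hi, rfl⟩ := List.mem_iff_getElem.1 hr
  have h1 : i < qs.length := by omega
  have := h i hi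
  rw [List.getD_eq_getElem _ _ hi, List.getD_eq_getElem _ _ h1] at this
  rw [← List.length_map (f := sortOf), this, sorts_length hA (hq _ (List.getElem_mem h1))]

/-- Runs of a register automaton are encoded by runs of its raw automaton. -/
theorem reaches_RR (hA : A.WF) {t : RTree} {q : ℕ} {r : List UCFVal} (h : A.Reaches t q r) :
    RR (toRaw A) t q (encEnv r) ∧ r.map sortOf = A.sorts.getD q [] := by
  induction h with
  | step a q qs fs ts rs newr hm hl hl' hrs hF ih =>
    obtain ⟨-, -, hqs, -, hfs, hS⟩ := hA.1 _ hm
    dsimp only at hqs hfs hS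
    have hs : ∀ i < rs.length, (rs.getD i []).map sortOf = A.sorts.getD (qs.getD i 0) [] :=
      fun i hi => (ih i (by omega)).2
    have hreg := reg_lengths hA (hl.trans hl'.symm) hqs hs
    rw [childSorts_eq (hl.trans hl'.symm) hs] at hS
    constructor
    · rw [← next_encEnv hreg hfs hF, hl', ← hl]
      exact RR.step a qs q _ ts _ (List.mem_map_of_mem hm) hl fun i hi => (ih i hi).1
    · refine map_eq_of_forall₂ (fun e v s h1 h2 => ?_) hS hF
      obtain ⟨u, hu, e⟩ := eval_of_sortCheck _ _ _ h1
      rw [h2] at hu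
      cases hu
      exact e

/-- Every run of the raw automaton encodes a run of the well-formed automaton: well-sortedness
guarantees that no update is undefined, so that the sort-blind polynomial semantics is faithful. -/
theorem RR_reaches (hA : A.WF) {t : RTree} {q : ℕ} {v : ℕ → ℤ[X] × ℤ[X]}
    (h : RR (toRaw A) t q v) : ∃ r, A.Reaches t q r ∧ v = encEnv r := by
  induction h with
  | step a qs q fs ts vs h hl hrs ih =>
    obtain ⟨⟨a', qs', q', fs'⟩, hm, e⟩ := List.mem_map.1 h
    simp only [Prod.mk.injEq] at e
    obtain ⟨rfl, rfl, rfl, rfl⟩ := e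
    obtain ⟨-, -, hqs, -, hfs, hS⟩ := hA.1 _ hm
    dsimp only at hqs hfs hS
    choose! r hr hv using ih
    set rs := (List.range ts.length).map r with hrsdef
    have hlen : rs.length = ts.length := by simp [rs]
    have hget : ∀ i < ts.length, rs.getD i [] = r i := fun i hi => getD_range_map _ _ hi
    have hs : ∀ i < rs.length, (rs.getD i []).map sortOf = A.sorts.getD (qs'.getD i 0) [] := by
      intro i hi
      rw [hget i (by omega)]
      exact (reaches_RR hA (hr i (by omega))).2
    have hreg := reg_lengths hA (hl.trans hlen.symm) hqs hs
    rw [childSorts_eq (hl.trans hlen.symm) hs] at hS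
    obtain ⟨newr, hF⟩ := exists_forall₂ (Q := fun e v => UExpr.eval rs.flatten e = some v)
      (fun e s h1 => by
        obtain ⟨u, hu, -⟩ := eval_of_sortCheck _ _ _ h1
        exact ⟨u, hu⟩) hS
    refine ⟨newr, RAU.Reaches.step a' q' qs' fs' ts rs newr hm hl hlen (fun i hi => ?_) hF, ?_⟩
    · rw [hget i hi]
      exact hr i hi
    · rw [← next_encEnv hreg hfs hF, hlen, ← hl]
      refine next_congr (fun i hi => ?_) _ _
      rw [hget i (by omega), hv i (by omega)]

theorem RSem_toRaw (hA : A.WF) (t : RTree) (p : ℤ[X]) :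
    RSem (toRaw A) t p ↔ ∃ h, A.Sem t h ∧ phiZ h = p := by
  constructor
  · rintro ⟨q, v, g, hr, hg, rfl⟩
    obtain ⟨⟨q', e⟩, ho, hge⟩ := List.mem_map.1 hg
    simp only [Prod.mk.injEq] at hge
    obtain ⟨rfl, rfl⟩ := hge
    obtain ⟨r, hr', rfl⟩ := RR_reaches hA hr
    have hs := (hA.2.1 _ ho).2
    dsimp only at hs
    rw [← (reaches_RR hA hr').2] at hs
    obtain ⟨u, hu, hsu⟩ := eval_of_sortCheck _ _ _ hs
    cases u with
    | ctx C => cases hsu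
    | forest h =>
      refine ⟨h, ⟨q', r, e, hr', ho, hu⟩, ?_⟩
      rw [ev_eval r (encEnv r) (fun i u hu => by simp [encEnv, hu]) _ _ hu]
      rfl
  · rintro ⟨h, ⟨q, r, e, hr, ho, hu⟩, rfl⟩
    refine ⟨q, encEnv r, e.code, (reaches_RR hA hr).1, List.mem_map_of_mem ho, ?_⟩
    rw [ev_eval r (encEnv r) (fun i u hu => by simp [encEnv, hu]) _ _ hu]
    rfl

theorem functional_iff (hA : A.WF) : Agree (toRaw A) (toRaw A) ↔ A.Functional := by
  unfold Agree RAU.Functional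
  simp only [RSem_toRaw hA]
  constructor
  · exact fun H t h h' hs hs' => (phiZ_eq_iff _ _).1 (H t _ _ ⟨h, hs, rfl⟩ ⟨h', hs', rfl⟩)
  · rintro H t _ _ ⟨h, hs, rfl⟩ ⟨h', hs', rfl⟩
    exact (phiZ_eq_iff _ _).2 (H t h h' hs hs')

theorem equiv_iff (hA : A.WF) (hB : B.WF) (fB : B.Functional) :
    (Agree (toRaw A) (toRaw B) ∧ SameDom (toRaw A) (toRaw B)) ↔ A.Equiv B := by
  unfold Agree SameDom
  simp only [RSem_toRaw hA, RSem_toRaw hB]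
  constructor
  · rintro ⟨H, D⟩ t h
    constructor
    · rintro ⟨h', e, hs⟩
      obtain ⟨_, h₂, hs₂, rfl⟩ := (D t).1 ⟨_, h', hs, rfl⟩
      exact ⟨h₂, e.trans ((phiZ_eq_iff _ _).1 (H t _ _ ⟨_, hs, rfl⟩ ⟨_, hs₂, rfl⟩)), hs₂⟩
    · rintro ⟨h', e, hs⟩
      obtain ⟨_, h₂, hs₂, rfl⟩ := (D t).2 ⟨_, h', hs, rfl⟩
      exact ⟨h₂, e.trans ((phiZ_eq_iff _ _).1 (H t _ _ ⟨_, hs₂, rfl⟩ ⟨_, hs, rfl⟩)).symm, hs₂⟩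
  · intro E
    refine ⟨?_, fun t => ⟨?_, ?_⟩⟩
    · rintro t _ _ ⟨h, hs, rfl⟩ ⟨h', hs', rfl⟩
      obtain ⟨h₂, e, hs₂⟩ := (E t h).1 ⟨h, .refl h, hs⟩
      exact (phiZ_eq_iff _ _).2 (e.trans (fB t _ _ hs₂ hs'))
    · rintro ⟨_, h, hs, rfl⟩
      obtain ⟨h₂, -, hs₂⟩ := (E t h).1 ⟨h, .refl h, hs⟩
      exact ⟨_, h₂, hs₂, rfl⟩
    · rintro ⟨_, h, hs, rfl⟩
      obtain ⟨h₂, -, hs₂⟩ := (E t h).2 ⟨h, .refl h, hs⟩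
      exact ⟨_, h₂, hs₂, rfl⟩

end

/-- Decoding of a list of numbers. -/
def decL (m : ℕ) : List ℕ := (Encodable.decode (α := List ℕ) m).getD []

/-- The transitions of a code. -/
def rawTr (c : ℕ) : ℕ × List ℕ × ℕ × List ℕ :=
  (c.unpair.1, decL c.unpair.2.unpair.1, c.unpair.2.unpair.2.unpair.1,
    decL c.unpair.2.unpair.2.unpair.2)

/-- The components of the code of an automaton. -/
def rawData (m : ℕ) : List ℕ × ℕ × ℕ × List (List Bool) × List ℕ × List ℕ :=
  (Encodable.decode (α := List ℕ × ℕ × ℕ × List (List Bool) × List ℕ × List ℕ) m).getD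
    ([], 0, 0, [], [], [])

/-- The raw automaton with a given code. -/
def raw (m : ℕ) : Raw :=
  ((rawData m).2.1, (rawData m).2.2.2.2.1.map rawTr, (rawData m).2.2.2.2.2.map Nat.unpair)

theorem raw_code (A : RAU) : raw A.code = toRaw A := by
  simp [raw, rawData, RAU.code, toRaw, rawTr, decL, Function.comp_def]

theorem pr_decL : Primrec decL := by
  unfold decL
  exact Primrec.option_getD.comp Primrec.decode (.const [])

theorem pr_rawTr : Primrec rawTr := by
  have h := pr_decL
  have h2 : Primrec (fun c : ℕ => decL c.unpair.2.unpair.1) := pr_decL.comp (by fun_prop)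
  have h4 : Primrec (fun c : ℕ => decL c.unpair.2.unpair.2.unpair.2) := pr_decL.comp (by fun_prop)
  unfold rawTr
  exact Primrec.pair (by fun_prop) (Primrec.pair h2 (Primrec.pair (by fun_prop) h4))

theorem pr_raw : Primrec raw := by
  have h : Primrec rawData := Primrec.option_getD.comp Primrec.decode (.const _)
  have h1 : Primrec (fun m => (rawData m).2.2.2.2) :=
    Primrec.snd.comp (Primrec.snd.comp (Primrec.snd.comp (Primrec.snd.comp h)))
  exact Primrec.pair (Primrec.fst.comp (Primrec.snd.comp h)) (Primrec.pair
    (Primrec.list_map (Primrec.fst.comp h1) (pr_rawTr.comp Primrec.snd))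
    (Primrec.list_map (Primrec.snd.comp h1) (Primrec.unpair.comp Primrec.snd)))

theorem decidable_Agree : ComputablePred (fun y : Raw × Raw => Agree y.1 y.2) := by
  obtain ⟨f, hf, e⟩ := ComputablePred.computable_iff.1 computable_Zero
  exact ComputablePred.computable_iff.2 ⟨_, hf.comp pr_prodSys.to_comp, funext fun y =>
    propext ((Zero_prodSys y.1 y.2).symm.trans (iff_of_eq (congrFun e _)))⟩

theorem decidable_SameDom : ComputablePred (fun y : Raw × Raw => SameDom y.1 y.2) := by
  obtain ⟨f, hf, e⟩ := ComputablePred.computable_iff.1 computable_Zero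
  exact ComputablePred.computable_iff.2 ⟨_, hf.comp pr_eqDomSys.to_comp, funext fun y =>
    propext ((Zero_eqDomSys y.1 y.2).symm.trans (iff_of_eq (congrFun e _)))⟩

end RAUCF

/-- Functionality of bottom-up register automata over the
unordered context-and-forest algebra `UCF` is decidable, and equivalence of
functional bottom-up register automata over `UCF` is decidable. -/
theorem functionality_and_equivalence_decidable_for_RA_UCF :
    (∃ F : ℕ → Bool, Computable F ∧
      ∀ A : RAU, A.WF → (F A.code = true ↔ A.Functional)) ∧
    (∃ G : ℕ → Bool, Computable G ∧
      ∀ A B : RAU, A.WF → B.WF → A.Functional → B.Functional →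
        (G (Nat.pair A.code B.code) = true ↔ A.Equiv B)) := by
  open RAUCF in
  obtain ⟨f, hf, ef⟩ := ComputablePred.computable_iff.1 decidable_Agree
  obtain ⟨g, hg, eg⟩ := ComputablePred.computable_iff.1 decidable_SameDom
  have ef' : ∀ M M' : Raw, f (M, M') = true ↔ Agree M M' := fun M M' =>
    (iff_of_eq (congrFun ef (M, M'))).symm
  have eg' : ∀ M M' : Raw, g (M, M') = true ↔ SameDom M M' := fun M M' =>
    (iff_of_eq (congrFun eg (M, M'))).symm
  have h1 : Primrec (fun n : ℕ => (raw n, raw n)) := Primrec.pair pr_raw pr_raw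
  have h2 : Primrec (fun n : ℕ => (raw n.unpair.1, raw n.unpair.2)) :=
    Primrec.pair (pr_raw.comp (Primrec.fst.comp Primrec.unpair))
      (pr_raw.comp (Primrec.snd.comp Primrec.unpair))
  refine ⟨⟨fun n => f (raw n, raw n), hf.comp h1.to_comp, fun A hA => ?_⟩,
    ⟨fun n => f (raw n.unpair.1, raw n.unpair.2) && g (raw n.unpair.1, raw n.unpair.2),
      Primrec.and.to_comp.comp (hf.comp h2.to_comp) (hg.comp h2.to_comp),
      fun A B hA hB _ fB => ?_⟩⟩
  · dsimp only
    rw [raw_code, ef', functional_iff hA]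
  · dsimp only
    rw [Bool.and_eq_true, Nat.unpair_pair, raw_code, raw_code, ef', eg', equiv_iff hA hB fB]
end
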